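/- The law of τ under P, restricted to (0,T), has a density f_τ with respect to Lebesgue measure that is continuous on (0,T) and satisfies f_τ(t) = −½ σ(t,g(t))² · lim_{y↑g(t)} ∂_y q(0,x₀;t,y) for every t ∈ (0,T). -/

import Mathlib

/-!
The proof avoids parabolic PDE theory. In the coordinates `Z = X - g` the boundary is `0`, and `Z`
is a diffusion with bounded drift `B` and squared diffusion coefficient `A s z = σ(s, z + g s)²`,
bounded above and below and Hölder continuous at `z = 0`. Optional stopping and spatial cutoffs turn
the martingale problem into Dynkin's formula up to `t ∧ τ` for test functions that are bounded
together with their derivatives (`exists_killedDiffusion`); nothing else about `X` is used.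

*Decay at the boundary* (`mass_bound`). Dynkin's formula is applied to the dipole kernel
`-z exp(-z² / 2W²) / W³`, which solves the backward heat equation with the coefficient frozen at
`(t, 0)`. Its pole is shifted a distance `2r` beyond the boundary, so that it is positive on the
killed process and of order `r⁻²` within distance `r` of the boundary, while its value at the start
stays bounded. The error terms are integrals of the killed mass near the boundary at earlier times;
a bound `mass ≤ N r ^ (2 - α/2)` makes them integrable and returns a bound `mass ≤ K (1 + N) r²`.
For small `r` this is a contraction in `N`, so `P(t < τ, |Z t| ≲ r) ≤ C r²` uniformly in `t`.

*The density at the boundary* (`KilledDensity.slope`). The killed density is differentiable up to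
the boundary, so the quadratic bound forces it to vanish there with slope the limit `ℓ t` of its
derivative. Hence functionals `r⁻² E[k(Z t / r); t < τ]` with Gaussian-type `k` converge to a
multiple of `ℓ t`. The density is given only through Bochner integrals, which are `0` for
non-integrable functions, so its integrability has to be deduced from `P(t < τ) > 0`
(`survival_pos`).

*The law of `τ`* (`real_le_eq_integral`). In Dynkin's formula for `exp(-z² / 2r²)` with `r → 0`, the
left side tends to `P(τ ≤ t)`, the drift term is `O(r)`, and the diffusion term tends to
`∫ s in 0..t, -½ A(s, 0) ℓ(s)`, boundedly.

*Continuity* (`continuousOn_slope`). Up to a constant, `ℓ t` is the limit of the dipole kernel of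
variance `ε` integrated against the killed process. The frozen-coefficient Dynkin formula on
`[t - δ, t]`, together with the quadratic bound, shows that this convergence is uniform in `t`,
locally in `(0, T)`, and the approximants are continuous.
-/

open MeasureTheory Set Filter Topology

noncomputable section

variable {Ω : Type*}

/-- Partial derivative in the time variable. -/
def pderivT (f : ℝ → ℝ → ℝ) (s x : ℝ) : ℝ := deriv (fun s' => f s' x) s

/-- Partial derivative in the space variable. -/
def pderivX (f : ℝ → ℝ → ℝ) (s x : ℝ) : ℝ := deriv (f s) x

/-- Second partial derivative in the space variable. -/
def pderivXX (f : ℝ → ℝ → ℝ) (s x : ℝ) : ℝ := deriv (deriv (f s)) x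

/-- The differential operator `L` associated with drift `μ` and diffusion `σ`:
`(Lf)(s,x) = ∂ₛf + μ ∂ₓf + ½σ² ∂ₓₓf`. -/
def genOp (μ σ : ℝ → ℝ → ℝ) (f : ℝ → ℝ → ℝ) (s x : ℝ) : ℝ :=
  pderivT f s x + μ s x * pderivX f s x + (1 / 2) * (σ s x) ^ 2 * pderivXX f s x

/-- `f` belongs to `C^{1,2}(U)`: the derivatives `∂ₛf`, `∂ₓf`, `∂ₓₓf` exist and are
continuous on `U`. -/
def C12On (f : ℝ → ℝ → ℝ) (U : Set (ℝ × ℝ)) : Prop :=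
  (∀ p ∈ U, DifferentiableAt ℝ (fun s => f s p.2) p.1) ∧
  (∀ p ∈ U, DifferentiableAt ℝ (f p.1) p.2) ∧
  (∀ p ∈ U, DifferentiableAt ℝ (deriv (f p.1)) p.2) ∧
  ContinuousOn (fun p : ℝ × ℝ => pderivT f p.1 p.2) U ∧
  ContinuousOn (fun p : ℝ × ℝ => pderivX f p.1 p.2) U ∧
  ContinuousOn (fun p : ℝ × ℝ => pderivXX f p.1 p.2) U

/-- Condition (C1): continuity, positivity of `σ`, linear-growth-type bounds and local
Lipschitz continuity. -/
def CondC1 (T : ℝ) (μ σ : ℝ → ℝ → ℝ) : Prop :=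
  ContinuousOn (fun p : ℝ × ℝ => μ p.1 p.2) (Icc 0 T ×ˢ (univ : Set ℝ)) ∧
  ContinuousOn (fun p : ℝ × ℝ => σ p.1 p.2) (Icc 0 T ×ˢ (univ : Set ℝ)) ∧
  (∀ t ∈ Icc (0:ℝ) T, ∀ x : ℝ, 0 < σ t x) ∧
  (∃ K : ℝ, ∀ t ∈ Icc (0:ℝ) T, ∀ x : ℝ,
    x * μ t x ≤ K * (1 + x ^ 2) ∧ (σ t x) ^ 2 ≤ K * (1 + x ^ 2)) ∧
  (∀ a : ℝ, 0 < a → ∃ Ka : ℝ, ∀ t ∈ Icc (0:ℝ) T, ∀ x ∈ Ioo (-a) a, ∀ y ∈ Ioo (-a) a,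
    |μ t x - μ t y| + |(σ t x) ^ 2 - (σ t y) ^ 2| ≤ Ka * |x - y|)

/-- Condition (C2): uniform ellipticity. -/
def CondC2 (T : ℝ) (σ : ℝ → ℝ → ℝ) : Prop :=
  ∃ σ₀ : ℝ, 0 < σ₀ ∧ ∀ t ∈ Icc (0:ℝ) T, ∀ x : ℝ, σ₀ ≤ σ t x

/-- Hölder continuity on `[0,T] × ℝ` with exponent `α` in space and `α/2` in time. -/
def HolderTX (T α : ℝ) (φ : ℝ → ℝ → ℝ) : Prop :=
  ∃ C : ℝ, ∀ t ∈ Icc (0:ℝ) T, ∀ t' ∈ Icc (0:ℝ) T, ∀ x x' : ℝ,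
    |φ t x - φ t' x'| ≤ C * (|x - x'| ^ α + |t - t'| ^ (α / 2))

/-- Condition (C3): boundedness of the coefficients and Hölder continuity of
`μ, ∂ₓμ, σ, ∂ₜσ, ∂ₓσ, ∂ₓ∂ₜσ, ∂ₓₓσ` with exponent `α` in `x` and `α/2` in `t`. -/
def CondC3 (T α : ℝ) (μ σ : ℝ → ℝ → ℝ) : Prop :=
  (∃ M : ℝ, ∀ t ∈ Icc (0:ℝ) T, ∀ x : ℝ, |μ t x| ≤ M ∧ |σ t x| ≤ M) ∧
  (∀ t ∈ Icc (0:ℝ) T, ∀ x : ℝ,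
    DifferentiableAt ℝ (μ t) x ∧ DifferentiableAt ℝ (σ t) x ∧
    DifferentiableAt ℝ (fun s => σ s x) t ∧ DifferentiableAt ℝ (deriv (σ t)) x ∧
    DifferentiableAt ℝ (fun y => pderivT σ t y) x) ∧
  HolderTX T α μ ∧ HolderTX T α (fun t x => pderivX μ t x) ∧ HolderTX T α σ ∧
  HolderTX T α (fun t x => pderivT σ t x) ∧ HolderTX T α (fun t x => pderivX σ t x) ∧
  HolderTX T α (fun t x => pderivX (fun s y => pderivT σ s y) t x) ∧
  HolderTX T α (fun t x => pderivXX σ t x)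

/-- `M` is a martingale with respect to `(F, P)` over the time set `I`. -/
def MartingaleOn [m : MeasurableSpace Ω] (P : Measure Ω) (F : Filtration ℝ m)
    (M : ℝ → Ω → ℝ) (I : Set ℝ) : Prop :=
  (∀ u ∈ I, StronglyMeasurable[F u] (M u) ∧ Integrable (M u) P) ∧
  ∀ u₁ ∈ I, ∀ u₂ ∈ I, u₁ ≤ u₂ → P[M u₂|F u₁] =ᵐ[P] M u₁

/-- `X` solves the martingale problem for the generator associated with `μ` and `σ`:
for every compactly supported `f ∈ C^{1,2}`, the process
`u ↦ f(u, X^{s,x}_u) − ∫_s^u (Lf)(r, X^{s,x}_r) dr` is a martingale on `[s,T]`. -/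
def SolvesMP [m : MeasurableSpace Ω] (T : ℝ) (μ σ : ℝ → ℝ → ℝ) (P : Measure Ω)
    (F : Filtration ℝ m) (X : ℝ → ℝ → ℝ → Ω → ℝ) : Prop :=
  ∀ s ∈ Icc (0:ℝ) T, ∀ x : ℝ, ∀ f : ℝ → ℝ → ℝ,
    C12On f univ → HasCompactSupport (fun p : ℝ × ℝ => f p.1 p.2) →
    MartingaleOn P F
      (fun u ω => f u (X s x u ω) - ∫ r in s..u, genOp μ σ f r (X s x r ω)) (Icc s T)

/-- The first hitting time `τ^{s,x}` of the boundary `g`, capped at `T`. -/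
def tauF (T : ℝ) (g : ℝ → ℝ) (X : ℝ → ℝ → ℝ → Ω → ℝ) (s x : ℝ) (ω : Ω) : ℝ :=
  sInf ({t | t ∈ Icc s T ∧ g t ≤ X s x t ω} ∪ {T})

/-- The boundary non-crossing probability `v(s,x)`. -/
def vF [MeasurableSpace Ω] (T : ℝ) (g : ℝ → ℝ) (P : Measure Ω)
    (X : ℝ → ℝ → ℝ → Ω → ℝ) (s x : ℝ) : ℝ :=
  (P {ω | ∀ u ∈ Ico s T, X s x u ω < g u}).toReal

/-- The domain `D_t = {(s,x) : 0 < s < t, x < g(s)}`. -/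
def DTset (t : ℝ) (g : ℝ → ℝ) : Set (ℝ × ℝ) := {p | 0 < p.1 ∧ p.1 < t ∧ p.2 < g p.1}

/-- The boundary non-crossing probability functional `F(b)`. -/
def FncF [MeasurableSpace Ω] (T x₀ : ℝ) (P : Measure Ω) (X : ℝ → ℝ → ℝ → Ω → ℝ)
    (b : ℝ → ℝ) : ℝ :=
  (P {ω | ∀ t ∈ Icc (0:ℝ) T, X 0 x₀ t ω < b t}).toReal

/-- `h` lies in the Cameron–Martin space `H`, with a.e. derivative `ℓ ∈ L²([0,T])`. -/
def InCM (T : ℝ) (h ℓ : ℝ → ℝ) : Prop :=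
  Measurable ℓ ∧ IntegrableOn (fun s => ℓ s ^ 2) (Icc 0 T) volume ∧
  ∀ t ∈ Icc (0:ℝ) T, h t = ∫ s in (0:ℝ)..t, ℓ s

/-- Membership in the Cameron–Martin space `H`. -/
def InH (T : ℝ) (h : ℝ → ℝ) : Prop := ∃ ℓ : ℝ → ℝ, InCM T h ℓ

/-- The function `ψ(t) = −E[∂ₓv(t, X_t) 1_{τ > t}]`. -/
def psiF [MeasurableSpace Ω] (T x₀ : ℝ) (g : ℝ → ℝ) (P : Measure Ω)
    (X : ℝ → ℝ → ℝ → Ω → ℝ) (t : ℝ) : ℝ :=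
  -∫ ω, (if t < tauF T g X 0 x₀ ω then pderivX (vF T g P X) t (X 0 x₀ t ω) else 0) ∂P

/-- `N_t = 𝔥(t∧τ, X_{t∧τ})/𝔥(0,x₀)` where `𝔥 = −∂ₓv`. -/
def NtF [MeasurableSpace Ω] (T x₀ : ℝ) (g : ℝ → ℝ) (P : Measure Ω)
    (X : ℝ → ℝ → ℝ → Ω → ℝ) (t : ℝ) (ω : Ω) : ℝ :=
  -pderivX (vF T g P X) (min t (tauF T g X 0 x₀ ω)) (X 0 x₀ (min t (tauF T g X 0 x₀ ω)) ω) /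
    -pderivX (vF T g P X) 0 x₀

/-! ### Optional stopping -/

/-- Optional stopping for bounded martingales with continuous paths. The stopping time is
discretised from above along the partition `k t / n` of `[0,t]`; on the partition the stopped
increment telescopes into increments over events known at the left endpoint. -/
lemma optional_stop [m : MeasurableSpace Ω] {P : Measure Ω} [IsProbabilityMeasure P]
    {F : Filtration ℝ m} {T : ℝ} {M : ℝ → Ω → ℝ}
    (hM : MartingaleOn P F M (Icc 0 T))
    (hcont : ∀ ω, ContinuousOn (fun u => M u ω) (Icc 0 T))
    {C : ℝ} (hbd : ∀ u ∈ Icc (0:ℝ) T, ∀ ω, |M u ω| ≤ C)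
    {τ : Ω → ℝ} (hτ : ∀ s ∈ Ico (0:ℝ) T, MeasurableSet[F s] {ω | s < τ ω})
    (hτ0 : ∀ ω, 0 ≤ τ ω) {t : ℝ} (ht0 : 0 ≤ t) (htT : t ≤ T) :
    ∫ ω, M (min t (τ ω)) ω ∂P = ∫ ω, M 0 ω ∂P := by
  rcases ht0.eq_or_lt with rfl | ht
  · simp [hτ0]
  have h0 : (0:ℝ) ∈ Icc 0 T := ⟨le_rfl, ht0.trans htT⟩
  -- the number of partition points `k t / n`, `k < n`, lying strictly before `τ`
  let K : ℕ → Ω → ℕ := fun n ω => min n ⌈τ ω / t * n⌉₊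
  have hmem : ∀ n k : ℕ, 0 < n → k ≤ n → (k * t / n : ℝ) ∈ Icc 0 T := by
    intro n k hn hk
    have hn' : (0:ℝ) < n := by exact_mod_cast hn
    have hk' : (k:ℝ) ≤ n := by exact_mod_cast hk
    refine ⟨by positivity, le_trans ?_ htT⟩
    rw [div_le_iff₀ hn']
    nlinarith
  have hlt : ∀ n k : ℕ, 0 < n → k < n → ∀ ω, (k < K n ω ↔ (k * t / n : ℝ) < τ ω) := by
    intro n k hn hk ω
    have hn' : (0:ℝ) < n := by exact_mod_cast hn
    simp only [K, lt_min_iff, hk, true_and, Nat.lt_ceil]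
    rw [div_lt_iff₀ hn', div_mul_eq_mul_div, lt_div_iff₀ ht]
  have hKn : ∀ n ω, K n ω ≤ n := fun n ω => min_le_left _ _
  have htel : ∀ n : ℕ, 0 < n → ∀ ω, M (K n ω * t / n) ω - M 0 ω =
      ∑ k ∈ Finset.range n, {ω | (k * t / n : ℝ) < τ ω}.indicator
        (fun ω => M ((k + 1 : ℕ) * t / n) ω - M (k * t / n) ω) ω := by
    intro n hn ω
    have h1 : M (K n ω * t / n) ω - M 0 ω =
        ∑ k ∈ Finset.range (K n ω), (M ((k + 1 : ℕ) * t / n) ω - M (k * t / n) ω) := by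
      rw [Finset.sum_range_sub (fun k : ℕ => M (k * t / n) ω)]
      simp
    rw [h1]
    have h2 : Finset.range (K n ω) = (Finset.range n).filter (fun k => k < K n ω) := by
      ext k
      have := hKn n ω
      simp only [Finset.mem_range, Finset.mem_filter]
      omega
    rw [h2, Finset.sum_filter]
    refine Finset.sum_congr rfl fun k hk => ?_
    simp only [indicator_apply, mem_ofPred_eq, hlt n k hn (Finset.mem_range.1 hk) ω]
  have hexp : ∀ n : ℕ, 0 < n → ∫ ω, (M (K n ω * t / n) ω - M 0 ω) ∂P = 0 := by
    intro n hn
    have hn' : (0:ℝ) < n := by exact_mod_cast hn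
    simp_rw [htel n hn]
    have hms : ∀ k < n, MeasurableSet[F (k * t / n)] {ω | (k * t / n : ℝ) < τ ω} := by
      intro k hk
      apply hτ
      refine ⟨(hmem n k hn hk.le).1, lt_of_lt_of_le ?_ htT⟩
      have hk' : (k:ℝ) < n := by exact_mod_cast hk
      rw [div_lt_iff₀ hn']
      nlinarith
    rw [integral_finsetSum]
    · refine Finset.sum_eq_zero fun k hk => ?_
      have hk := Finset.mem_range.1 hk
      have hs := hms k hk
      have hi1 := hM.1 _ (hmem n (k+1) hn hk)
      have hi0 := hM.1 _ (hmem n k hn hk.le)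
      rw [integral_indicator (F.le _ _ hs), integral_sub hi1.2.integrableOn hi0.2.integrableOn,
        sub_eq_zero]
      have hle : (k * t / n : ℝ) ≤ (k + 1 : ℕ) * t / n := by
        push_cast
        gcongr
        linarith
      have := hM.2 _ (hmem n k hn hk.le) _ (hmem n (k+1) hn hk) hle
      rw [← setIntegral_condExp (F.le _) hi1.2 hs]
      exact setIntegral_congr_ae (F.le _ _ hs) (this.mono fun ω h _ => h)
    · intro k hk
      have hk := Finset.mem_range.1 hk
      exact ((hM.1 _ (hmem n (k+1) hn hk)).2.sub (hM.1 _ (hmem n k hn hk.le)).2).indicator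
        (F.le _ _ (hms k hk))
  have hmeasD : ∀ n : ℕ, 0 < n → AEStronglyMeasurable (fun ω => M (K n ω * t / n) ω - M 0 ω) P := by
    intro n hn
    have hn' : (0:ℝ) < n := by exact_mod_cast hn
    have : (fun ω => M (K n ω * t / n) ω - M 0 ω) = fun ω => ∑ k ∈ Finset.range n,
        {ω | (k * t / n : ℝ) < τ ω}.indicator
        (fun ω => M ((k + 1 : ℕ) * t / n) ω - M (k * t / n) ω) ω := by
      ext ω; exact htel n hn ω
    rw [this]
    refine Finset.aestronglyMeasurable_fun_sum _ fun k hk => ?_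
    have hk := Finset.mem_range.1 hk
    refine AEStronglyMeasurable.indicator ?_ (F.le (k * t / n) _ (hτ _ ?_))
    · exact ((hM.1 _ (hmem n (k+1) hn hk)).2.sub (hM.1 _ (hmem n k hn hk.le)).2).1
    · refine ⟨(hmem n k hn hk.le).1, lt_of_lt_of_le ?_ htT⟩
      have hk' : (k:ℝ) < n := by exact_mod_cast hk
      rw [div_lt_iff₀ hn']
      nlinarith
  have hlim : ∀ ω, Tendsto (fun n : ℕ => M (K (n+1) ω * t / (n+1 : ℕ)) ω - M 0 ω) atTop
      (𝓝 (M (min t (τ ω)) ω - M 0 ω)) := by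
    intro ω
    refine Tendsto.sub_const ?_ _
    have hmin : min t (τ ω) ∈ Icc (0:ℝ) T := ⟨le_min ht0 (hτ0 ω), (min_le_left _ _).trans htT⟩
    have hw := (hcont ω) _ hmin
    refine hw.tendsto.comp (tendsto_nhdsWithin_iff.2 ⟨?_, ?_⟩)
    · rw [tendsto_iff_dist_tendsto_zero]
      have hz : Tendsto (fun n : ℕ => t * (1 / ((n:ℝ) + 1))) atTop (𝓝 (t * 0)) :=
        tendsto_one_div_add_atTop_nhds_zero_nat.const_mul t
      rw [mul_zero] at hz
      refine squeeze_zero (fun _ => dist_nonneg) (fun n => ?_) hz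
      have hn' : (0:ℝ) < n + 1 := by positivity
      rw [Real.dist_eq, mul_one_div, abs_le]
      have hx : 0 ≤ τ ω / t * ((n + 1 : ℕ) : ℝ) := by have := hτ0 ω; positivity
      have hc1 := Nat.le_ceil (τ ω / t * ((n + 1 : ℕ) : ℝ))
      have hc2 := Nat.ceil_lt_add_one hx
      have e : (K (n+1) ω : ℝ) = min ((n:ℝ) + 1) (⌈τ ω / t * ((n + 1 : ℕ) : ℝ)⌉₊ : ℝ) := by
        simp [K]
      have e2 : τ ω / t * ((n + 1 : ℕ) : ℝ) * t / (n + 1) = τ ω := by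
        push_cast; field_simp
      have a1 : τ ω ≤ (⌈τ ω / t * ((n + 1 : ℕ) : ℝ)⌉₊ : ℝ) * t / (n + 1) := by
        rw [← e2]; gcongr; rw [e2]; exact hc1
      have a2 : (⌈τ ω / t * ((n + 1 : ℕ) : ℝ)⌉₊ : ℝ) * t / (n + 1) ≤ τ ω + t / (n + 1) := by
        calc _ ≤ (τ ω / t * ((n + 1 : ℕ) : ℝ) + 1) * t / (n + 1) := by gcongr
          _ = τ ω / t * ((n + 1 : ℕ) : ℝ) * t / (n + 1) + t / (n + 1) := by ring
          _ = _ := by rw [e2]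
      have e3 : (K (n+1) ω : ℝ) * t / ((n + 1 : ℕ) : ℝ) =
          min t ((⌈τ ω / t * ((n + 1 : ℕ) : ℝ)⌉₊ : ℝ) * t / (n + 1)) := by
        rw [e, min_mul_of_nonneg _ _ ht0]
        push_cast
        rw [← min_div_div_right hn'.le]
        congr 1
        field_simp
      rw [e3]
      have htn : 0 ≤ t / ((n:ℝ) + 1) := by positivity
      generalize (⌈τ ω / t * ((n + 1 : ℕ) : ℝ)⌉₊ : ℝ) * t / (n + 1) = w at a1 a2
      have b1 := min_le_min_left t a1
      constructor
      · linarith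
      · rcases min_cases t w with h | h <;> rcases min_cases t (τ ω) with h' | h' <;> linarith
    · exact Eventually.of_forall fun n => hmem (n+1) _ n.succ_pos (hKn _ _)
  have hfin := tendsto_integral_of_dominated_convergence (μ := P) (fun _ => C + C)
    (F := fun (n : ℕ) ω => M (K (n+1) ω * t / (n+1 : ℕ)) ω - M 0 ω)
    (f := fun ω => M (min t (τ ω)) ω - M 0 ω)
    (fun n => hmeasD _ n.succ_pos) (integrable_const _)
    (fun n => Eventually.of_forall fun ω => by
      rw [Real.norm_eq_abs]
      exact (abs_sub _ _).trans (add_le_add (hbd _ (hmem (n+1) _ n.succ_pos (hKn _ _)) ω)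
        (hbd _ h0 ω)))
    (Eventually.of_forall hlim)
  simp_rw [fun n : ℕ => hexp (n+1) n.succ_pos] at hfin
  have hz := tendsto_nhds_unique hfin tendsto_const_nhds
  have hsm : AEStronglyMeasurable (fun ω => M (min t (τ ω)) ω - M 0 ω) P :=
    aestronglyMeasurable_of_tendsto_ae atTop (fun n => hmeasD _ (Nat.succ_pos n))
      (Eventually.of_forall hlim)
  have hinteg : Integrable (fun ω => M (min t (τ ω)) ω - M 0 ω) P :=
    Integrable.of_bound hsm (C + C) (Eventually.of_forall fun ω => by
      rw [Real.norm_eq_abs]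
      exact (abs_sub _ _).trans (add_le_add
        (hbd _ ⟨le_min ht0 (hτ0 ω), (min_le_left _ _).trans htT⟩ ω) (hbd _ h0 ω)))
  have h0i := (hM.1 0 h0).2
  calc ∫ ω, M (min t (τ ω)) ω ∂P = ∫ ω, ((M (min t (τ ω)) ω - M 0 ω) + M 0 ω) ∂P := by simp
    _ = _ := by rw [integral_add hinteg h0i, hz, zero_add]

/-! ### Dynkin's formula for bounded test functions -/

/-- `F` is a `C^{1,2}` function of (time, space) on the whole plane, with `Fs`, `Fz`, `Fzz` its time
derivative and its first two space derivatives. -/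
structure TestFn (F Fs Fz Fzz : ℝ → ℝ → ℝ) : Prop where
  cF : Continuous (fun p : ℝ × ℝ => F p.1 p.2)
  cFs : Continuous (fun p : ℝ × ℝ => Fs p.1 p.2)
  cFz : Continuous (fun p : ℝ × ℝ => Fz p.1 p.2)
  cFzz : Continuous (fun p : ℝ × ℝ => Fzz p.1 p.2)
  ds : ∀ s z, HasDerivAt (fun s => F s z) (Fs s z) s
  dz : ∀ s z, HasDerivAt (F s) (Fz s z) z
  dzz : ∀ s z, HasDerivAt (Fz s) (Fzz s z) z

namespace TestFn

lemma derivX {F Fs Fz Fzz : ℝ → ℝ → ℝ} (h : TestFn F Fs Fz Fzz) (s : ℝ) : deriv (F s) = Fz s := by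
  ext z; exact (h.dz s z).deriv

lemma c12 {F Fs Fz Fzz : ℝ → ℝ → ℝ} (h : TestFn F Fs Fz Fzz) : C12On F univ := by
  refine ⟨fun p _ => (h.ds _ _).differentiableAt, fun p _ => (h.dz _ _).differentiableAt,
    fun p _ => ?_, ?_, ?_, ?_⟩
  · rw [h.derivX]; exact (h.dzz _ _).differentiableAt
  · simp only [pderivT, (h.ds _ _).deriv]; exact h.cFs.continuousOn
  · simp only [pderivX, (h.dz _ _).deriv]; exact h.cFz.continuousOn
  · simp only [pderivXX, h.derivX, (h.dzz _ _).deriv]; exact h.cFzz.continuousOn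

lemma genOp_eq {F Fs Fz Fzz : ℝ → ℝ → ℝ} (h : TestFn F Fs Fz Fzz) (μ σ : ℝ → ℝ → ℝ) (s x : ℝ) :
    genOp μ σ F s x = Fs s x + μ s x * Fz s x + (1 / 2) * (σ s x) ^ 2 * Fzz s x := by
  simp only [genOp, pderivT, pderivX, pderivXX, h.derivX, (h.ds _ _).deriv, (h.dzz _ _).deriv]

/-- Multiplication of a test function by a cutoff `r(s) c(x)` of product form. -/
lemma mul_cutoff {F Fs Fz Fzz : ℝ → ℝ → ℝ} (h : TestFn F Fs Fz Fzz) {r r1 c c1 c2 : ℝ → ℝ}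
    (hr : ∀ s, HasDerivAt r (r1 s) s) (hr1 : Continuous r1)
    (hc : ∀ s, HasDerivAt c (c1 s) s) (hc1 : ∀ s, HasDerivAt c1 (c2 s) s) (hc2 : Continuous c2) :
    TestFn (fun s x => r s * (c x * F s x))
      (fun s x => r1 s * (c x * F s x) + r s * (c x * Fs s x))
      (fun s x => r s * (c1 x * F s x + c x * Fz s x))
      (fun s x => r s * (c2 x * F s x + 2 * c1 x * Fz s x + c x * Fzz s x)) := by
  have kr : Continuous r := continuous_iff_continuousAt.2 fun s => (hr s).continuousAt
  have kc : Continuous c := continuous_iff_continuousAt.2 fun s => (hc s).continuousAt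
  have kc1 : Continuous c1 := continuous_iff_continuousAt.2 fun s => (hc1 s).continuousAt
  have := h.cF
  have := h.cFs
  have := h.cFz
  have := h.cFzz
  refine ⟨by fun_prop, by fun_prop, by fun_prop, by fun_prop, fun s z => ?_, fun s z => ?_,
    fun s z => ?_⟩
  · exact (hr s).mul ((h.ds s z).const_mul (c z))
  · exact ((hc z).mul (h.dz s z)).const_mul (r s)
  · have := (((hc1 z).mul (h.dz s z)).add ((hc z).mul (h.dzz s z))).const_mul (r s)
    exact this.congr_deriv (by ring)

end TestFn

/-- A smooth cutoff on the line with bounded derivatives. -/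
lemma exists_cutoff : ∃ (c c1 c2 : ℝ → ℝ) (D : ℝ), (∀ x, HasDerivAt c (c1 x) x) ∧
    (∀ x, HasDerivAt c1 (c2 x) x) ∧ Continuous c2 ∧ (∀ x, |x| < 1 → c x = 1 ∧ c1 x = 0 ∧ c2 x = 0) ∧
    (∀ x, 2 ≤ |x| → c x = 0) ∧ (∀ x, |c x| ≤ D ∧ |c1 x| ≤ D ∧ |c2 x| ≤ D) := by
  let b : ContDiffBump (0:ℝ) := ⟨1, 2, one_pos, by norm_num⟩
  have hb : ContDiff ℝ 2 b := b.contDiff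
  have hb' : ContDiff ℝ 1 (deriv b) := by
    have : ContDiff ℝ (1+1) b := by simpa [one_add_one_eq_two] using hb
    exact (contDiff_succ_iff_deriv.1 this).2.2
  have hb'' : Continuous (deriv (deriv b)) := hb'.continuous_deriv le_rfl
  have hs : HasCompactSupport b := b.hasCompactSupport
  obtain ⟨D0, hD0⟩ := hs.exists_bound_of_continuous hb.continuous
  obtain ⟨D1, hD1⟩ := hs.deriv.exists_bound_of_continuous hb'.continuous
  obtain ⟨D2, hD2⟩ := hs.deriv.deriv.exists_bound_of_continuous hb''
  have hone : ∀ x : ℝ, |x| < 1 → ∀ᶠ y in 𝓝 x, b y = 1 := by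
    intro x hx
    have : ∀ᶠ y in 𝓝 x, |y| < 1 := (continuous_abs.tendsto x).eventually_lt_const hx
    filter_upwards [this] with y hy
    apply b.one_of_mem_closedBall
    simpa using hy.le
  have hone1 : ∀ x : ℝ, |x| < 1 → deriv b x = 0 := by
    intro x hx
    rw [(EventuallyEq.deriv_eq (f := fun _ => (1:ℝ)) (hone x hx))]
    simp
  refine ⟨b, deriv b, deriv (deriv b), max D0 (max D1 D2),
    fun x => (hb.differentiable (by norm_num) x).hasDerivAt,
    fun x => (hb'.differentiable (by norm_num) x).hasDerivAt, hb'',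
    fun x hx => ⟨(hone x hx).self_of_nhds, hone1 x hx, ?_⟩, fun x hx => ?_, fun x => ⟨?_, ?_, ?_⟩⟩
  · have : ∀ᶠ y in 𝓝 x, deriv b y = 0 := by
      have : ∀ᶠ y in 𝓝 x, |y| < 1 := (continuous_abs.tendsto x).eventually_lt_const hx
      filter_upwards [this] with y hy using hone1 y hy
    rw [(EventuallyEq.deriv_eq (f := fun _ => (0:ℝ)) this)]
    simp
  · exact b.zero_of_le_dist (by simpa using hx)
  · exact (hD0 x).trans (le_max_left _ _)
  · exact (hD1 x).trans ((le_max_left _ _).trans (le_max_right _ _))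
  · exact (hD2 x).trans ((le_max_right _ _).trans (le_max_right _ _))

lemma measurable_before [m : MeasurableSpace Ω] {U : ℝ → Ω → ℝ}
    (hUj : Measurable (fun p : ℝ × Ω => U p.1 p.2)) {τ : Ω → ℝ} (hτm : Measurable τ)
    {k : ℝ → ℝ → ℝ} (hk : Measurable (fun p : ℝ × ℝ => k p.1 p.2)) :
    Measurable (fun p : ℝ × Ω => (Iio (τ p.2)).indicator (fun s => k s (U s p.2)) p.1) := by
  have : (fun p : ℝ × Ω => (Iio (τ p.2)).indicator (fun s => k s (U s p.2)) p.1) =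
      fun p => if p.1 < τ p.2 then k p.1 (U p.1 p.2) else 0 := by
    ext p; simp [indicator_apply]
  rw [this]
  refine Measurable.ite (measurableSet_lt measurable_fst (hτm.comp measurable_snd)) ?_
    measurable_const
  exact hk.comp (measurable_fst.prodMk hUj)

lemma measurable_integral_before [m : MeasurableSpace Ω] {U : ℝ → Ω → ℝ}
    (hUj : Measurable (fun p : ℝ × Ω => U p.1 p.2)) {τ : Ω → ℝ} (hτm : Measurable τ)
    {k : ℝ → ℝ → ℝ} (hk : Measurable (fun p : ℝ × ℝ => k p.1 p.2)) {t : ℝ} (ht : 0 ≤ t) :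
    Measurable (fun ω => ∫ s in (0:ℝ)..t, (Iio (τ ω)).indicator (fun s => k s (U s ω)) s) := by
  simp_rw [intervalIntegral.integral_of_le ht]
  exact ((measurable_before hUj hτm hk).stronglyMeasurable.integral_prod_left').measurable

/-- Dynkin's formula at `t ∧ τ` for test functions that are bounded together with their
derivatives; obtained from compactly supported ones by spatial cutoffs. -/
lemma dynkin_bounded [m : MeasurableSpace Ω] {P : Measure Ω} [IsProbabilityMeasure P]
    {F : Filtration ℝ m} {T x₀ : ℝ} {μ σ : ℝ → ℝ → ℝ} {U : ℝ → Ω → ℝ}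
    (hμ : Continuous (fun p : ℝ × ℝ => μ p.1 p.2)) (hσ : Continuous (fun p : ℝ × ℝ => σ p.1 p.2))
    {Mb : ℝ} (hMb : ∀ s ∈ Icc (0:ℝ) T, ∀ x, |μ s x| ≤ Mb ∧ |σ s x| ≤ Mb)
    (hUm : ∀ s, Measurable (U s)) (hUc : ∀ ω, Continuous (fun s => U s ω))
    (hU0 : ∀ ω, U 0 ω = x₀)
    (hmp : ∀ f : ℝ → ℝ → ℝ, C12On f univ → HasCompactSupport (fun p : ℝ × ℝ => f p.1 p.2) →
      MartingaleOn P F (fun u ω => f u (U u ω) - ∫ r in (0:ℝ)..u, genOp μ σ f r (U r ω)) (Icc 0 T))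
    {τ : Ω → ℝ} (hτ : ∀ s ∈ Ico (0:ℝ) T, MeasurableSet[F s] {ω | s < τ ω}) (hτm : Measurable τ)
    (hτ0 : ∀ ω, 0 ≤ τ ω)
    {f fs fx fxx : ℝ → ℝ → ℝ} (hf : TestFn f fs fx fxx) {C : ℝ}
    (hC : ∀ s ∈ Icc (0:ℝ) T, ∀ x, |f s x| ≤ C ∧ |fs s x| ≤ C ∧ |fx s x| ≤ C ∧ |fxx s x| ≤ C)
    {t : ℝ} (ht0 : 0 ≤ t) (htT : t ≤ T) :
    ∫ ω, f (min t (τ ω)) (U (min t (τ ω)) ω) ∂P = f 0 x₀ + ∫ ω, (∫ s in (0:ℝ)..t,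
      (Iio (τ ω)).indicator (fun s => fs s (U s ω) + μ s (U s ω) * fx s (U s ω) +
        (1 / 2) * (σ s (U s ω)) ^ 2 * fxx s (U s ω)) s) ∂P := by
  have hT0 : 0 ≤ T := ht0.trans htT
  have h0 : (0:ℝ) ∈ Icc 0 T := ⟨le_rfl, hT0⟩
  have hC0 : 0 ≤ C := (abs_nonneg _).trans (hC 0 h0 0).1
  have hMb0 : 0 ≤ Mb := (abs_nonneg _).trans (hMb 0 h0 0).1
  obtain ⟨c, c1, c2, D, hc, hc1, hc2, hc_one, hc_zero, hcD⟩ := exists_cutoff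
  have hD0 : 0 ≤ D := (abs_nonneg _).trans (hcD 0).1
  have hUj : Measurable (fun p : ℝ × Ω => U p.1 p.2) :=
    measurable_uncurry_of_continuous_of_measurable (u := fun (s : ℝ) ω => U s ω)
      (fun ω => hUc ω) hUm
  have hmin : ∀ ω, min t (τ ω) ∈ Icc 0 T := fun ω => ⟨le_min ht0 (hτ0 ω), (min_le_left _ _).trans htT⟩
  -- spatial cutoff at scale `n + 1`
  let R : ℕ → ℝ := fun n => n + 1
  have hR1 : ∀ n, 1 ≤ R n := fun n => by simp [R]
  let r : ℝ → ℝ := fun s => c (s / (T + 1))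
  let r1 : ℝ → ℝ := fun s => c1 (s / (T + 1)) * (1 / (T + 1))
  have hr : ∀ s, HasDerivAt r (r1 s) s := fun s => by
    exact (hc (s / (T + 1))).comp s ((hasDerivAt_id s).div_const (T + 1))
  have kc1 : Continuous c1 := continuous_iff_continuousAt.2 fun s => (hc1 s).continuousAt
  have hr1 : Continuous r1 := by fun_prop
  have hrT : ∀ s ∈ Icc (0:ℝ) T, r s = 1 ∧ r1 s = 0 := by
    intro s hs
    have : |s / (T + 1)| < 1 := by
      rw [abs_div, abs_of_nonneg hs.1, abs_of_pos (by linarith), div_lt_one (by linarith)]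
      linarith [hs.2]
    obtain ⟨a, b, -⟩ := hc_one _ this
    exact ⟨a, by simp [r1, b]⟩
  have hd : ∀ n x, HasDerivAt (fun x => c (x / R n)) (c1 (x / R n) * (1 / R n)) x := fun n x =>
    (hc (x / R n)).comp x ((hasDerivAt_id x).div_const (R n))
  have hd1 : ∀ n x, HasDerivAt (fun x => c1 (x / R n) * (1 / R n))
      (c2 (x / R n) * (1 / R n) * (1 / R n)) x := fun n x =>
    ((hc1 (x / R n)).comp x ((hasDerivAt_id x).div_const (R n))).mul_const _
  have htest := fun n => hf.mul_cutoff hr hr1 (hd n) (hd1 n) (by fun_prop)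
  set fn : ℕ → ℝ → ℝ → ℝ := fun n s x => r s * (c (x / R n) * f s x) with hfn
  have hsupp : ∀ n, HasCompactSupport (fun p : ℝ × ℝ => fn n p.1 p.2) := by
    intro n
    refine HasCompactSupport.intro (K := Icc (-(2 * (T + 1))) (2 * (T + 1)) ×ˢ
      Icc (-(2 * R n)) (2 * R n)) (isCompact_Icc.prod isCompact_Icc) fun p hp => ?_
    simp only [mem_prod, mem_Icc, not_and_or, ← abs_le] at hp
    have hRp : 0 < R n := lt_of_lt_of_le one_pos (hR1 n)
    rcases hp with hp | hp
    · have : r p.1 = 0 := by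
        apply hc_zero
        rw [abs_div, abs_of_pos (by linarith : 0 < T + 1), le_div_iff₀ (by linarith)]
        exact (not_le.1 hp).le
      simp [hfn, this]
    · have : c (p.2 / R n) = 0 := by
        apply hc_zero
        rw [abs_div, abs_of_pos hRp, le_div_iff₀ hRp]
        exact (not_le.1 hp).le
      simp [hfn, this]
  let g : ℕ → ℝ → ℝ → ℝ := fun n s x => genOp μ σ (fn n) s x
  have hg : ∀ n, ∀ s ∈ Icc (0:ℝ) T, ∀ x, g n s x = c (x / R n) * fs s x +
      μ s x * (c1 (x / R n) * (1 / R n) * f s x + c (x / R n) * fx s x) +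
      (1 / 2) * (σ s x) ^ 2 * (c2 (x / R n) * (1 / R n) * (1 / R n) * f s x +
        2 * (c1 (x / R n) * (1 / R n)) * fx s x + c (x / R n) * fxx s x) := by
    intro n s hs x
    simp only [g]
    rw [(htest n).genOp_eq, (hrT s hs).1, (hrT s hs).2]
    ring
  have hgc : ∀ n, Continuous (fun p : ℝ × ℝ => g n p.1 p.2) := by
    intro n
    have e : (fun p : ℝ × ℝ => g n p.1 p.2) = fun p => _ := funext fun p =>
      (htest n).genOp_eq μ σ p.1 p.2
    rw [e]
    have := (htest n).cFs
    have := (htest n).cFz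
    have := (htest n).cFzz
    fun_prop
  let B : ℝ := D * C + Mb * (D * C + D * C) + (1 / 2) * Mb ^ 2 * (D * C + 2 * D * C + D * C)
  have hB0 : 0 ≤ B := by positivity
  have hgB : ∀ n, ∀ s ∈ Icc (0:ℝ) T, ∀ x, |g n s x| ≤ B := by
    intro n s hs x
    rw [hg n s hs x]
    obtain ⟨q0, q1, q2, q3⟩ := hC s hs x
    obtain ⟨p0, p1, p2⟩ := hcD (x / R n)
    obtain ⟨m1, m2⟩ := hMb s hs x
    have hi : |1 / R n| ≤ 1 := by
      rw [abs_of_nonneg (by have := hR1 n; positivity), div_le_one (lt_of_lt_of_le one_pos (hR1 n))]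
      exact hR1 n
    have p1' : |c1 (x / R n) * (1 / R n)| ≤ D := by
      rw [abs_mul]; calc _ ≤ D * 1 := by gcongr
        _ = D := mul_one D
    have p2' : |c2 (x / R n) * (1 / R n) * (1 / R n)| ≤ D := by
      rw [abs_mul, abs_mul]; calc _ ≤ D * 1 * 1 := by gcongr
        _ = D := by ring
    refine (abs_add_le _ _).trans (add_le_add ((abs_add_le _ _).trans (add_le_add ?_ ?_)) ?_)
    · rw [abs_mul]; gcongr
    · rw [abs_mul]; gcongr
      refine (abs_add_le _ _).trans ?_
      rw [abs_mul, abs_mul (c _)]; gcongr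
    · rw [abs_mul, abs_mul, abs_pow, abs_of_pos (by norm_num : (0:ℝ) < 1 / 2)]; gcongr
      refine (abs_add_le _ _).trans (add_le_add ((abs_add_le _ _).trans (add_le_add ?_ ?_)) ?_)
      · rw [abs_mul]; gcongr
      · rw [abs_mul, abs_mul, abs_two]; gcongr
      · rw [abs_mul]; gcongr
  have hfB : ∀ n, ∀ s ∈ Icc (0:ℝ) T, ∀ x, |fn n s x| ≤ D * C := by
    intro n s hs x
    simp only [hfn, (hrT s hs).1, one_mul, abs_mul]
    have := (hcD (x / R n)).1
    have := (hC s hs x).1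
    gcongr
  have hgi : ∀ n ω a b, IntervalIntegrable (fun s => g n s (U s ω)) volume a b := by
    intro n ω a b
    refine Continuous.intervalIntegrable ?_ _ _
    exact (hgc n).comp (continuous_id.prodMk (hUc ω))
  have hgind : ∀ n ω, ∫ s in (0:ℝ)..(min t (τ ω)), g n s (U s ω) =
      ∫ s in (0:ℝ)..t, (Iio (τ ω)).indicator (fun s => g n s (U s ω)) s := by
    intro n ω
    rw [intervalIntegral.integral_of_le (hmin ω).1, intervalIntegral.integral_of_le ht0,
      setIntegral_indicator measurableSet_Iio]
    refine setIntegral_congr_set ?_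
    have : Ioo 0 (min t (τ ω)) ⊆ Ioc 0 t ∩ Iio (τ ω) := fun s hs =>
      ⟨⟨hs.1, (hs.2.trans_le (min_le_left _ _)).le⟩, hs.2.trans_le (min_le_right _ _)⟩
    refine Ioo_ae_eq_Ioc.symm.trans ?_
    refine (HasSubset.Subset.eventuallyLE this).antisymm ?_
    refine EventuallyLE.trans (HasSubset.Subset.eventuallyLE ?_) Ioo_ae_eq_Ioc.symm.le
    exact fun s hs => ⟨hs.1.1, le_min hs.1.2 (le_of_lt hs.2)⟩
  have hkey : ∀ n, ∫ ω, fn n (min t (τ ω)) (U (min t (τ ω)) ω) ∂P = fn n 0 x₀ +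
      ∫ ω, (∫ s in (0:ℝ)..t, (Iio (τ ω)).indicator (fun s => g n s (U s ω)) s) ∂P := by
    intro n
    have hM := hmp (fn n) (htest n).c12 (hsupp n)
    have hcontM : ∀ ω, ContinuousOn (fun u => fn n u (U u ω) -
        ∫ r in (0:ℝ)..u, genOp μ σ (fn n) r (U r ω)) (Icc 0 T) := by
      intro ω
      refine Continuous.continuousOn ?_
      refine ((htest n).cF.comp (continuous_id.prodMk (hUc ω))).sub ?_
      exact intervalIntegral.continuous_primitive (fun a b => hgi n ω a b) 0
    have hbdM : ∀ u ∈ Icc (0:ℝ) T, ∀ ω, |fn n u (U u ω) -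
        ∫ r in (0:ℝ)..u, genOp μ σ (fn n) r (U r ω)| ≤ D * C + B * T := by
      intro u hu ω
      refine (abs_sub _ _).trans (add_le_add (hfB n u hu _) ?_)
      have : ∀ s ∈ uIoc 0 u, ‖genOp μ σ (fn n) s (U s ω)‖ ≤ B := by
        intro s hs
        rw [uIoc_of_le hu.1] at hs
        exact hgB n s ⟨hs.1.le, hs.2.trans hu.2⟩ _
      have := intervalIntegral.norm_integral_le_of_norm_le_const this
      rw [Real.norm_eq_abs, sub_zero, abs_of_nonneg hu.1] at this
      exact this.trans (by have := hu.2; gcongr)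
    have hos := optional_stop hM hcontM hbdM hτ hτ0 ht0 htT
    simp only [intervalIntegral.integral_same, sub_zero, hU0] at hos
    rw [integral_const, probReal_univ, one_smul] at hos
    have e : ∀ ω, ∫ s in (0:ℝ)..(min t (τ ω)), genOp μ σ (fn n) s (U s ω) =
      ∫ s in (0:ℝ)..t, (Iio (τ ω)).indicator (fun s => g n s (U s ω)) s := fun ω => hgind n ω
    simp only [e] at hos
    rw [integral_sub] at hos
    · linarith
    · refine Integrable.of_bound (C := D * C) (Measurable.aestronglyMeasurable ?_)
        (Eventually.of_forall fun ω => hfB n _ (hmin ω) _)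
      have h1 : Measurable (fun ω => (min t (τ ω), U (min t (τ ω)) ω)) :=
        (measurable_const.min hτm).prodMk (hUj.comp ((measurable_const.min hτm).prodMk measurable_id))
      exact (htest n).cF.measurable.comp h1
    · refine Integrable.of_bound (C := B * t) (measurable_integral_before hUj hτm
        (hgc n).measurable ht0).aestronglyMeasurable (Eventually.of_forall fun ω => ?_)
      have := intervalIntegral.norm_integral_le_of_norm_le_const (a := 0) (b := t) (C := B)
        (f := (Iio (τ ω)).indicator (fun s => g n s (U s ω))) fun s hs => by
          rw [uIoc_of_le ht0] at hs
          exact (norm_indicator_le_norm_self _ _).trans (hgB n s ⟨hs.1.le, hs.2.trans htT⟩ _)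
      rwa [sub_zero, abs_of_nonneg ht0] at this
  -- for fixed `x` the cutoff is inactive near `x` once `n` is large
  have hact : ∀ x, ∀ᶠ n in atTop, c (x / R n) = 1 ∧ c1 (x / R n) = 0 ∧ c2 (x / R n) = 0 := by
    intro x
    obtain ⟨N, hN⟩ := exists_nat_gt |x|
    filter_upwards [eventually_ge_atTop N] with n hn
    apply hc_one
    have hRp : 0 < R n := lt_of_lt_of_le one_pos (hR1 n)
    rw [abs_div, abs_of_pos hRp, div_lt_one hRp]
    have : (N:ℝ) ≤ n := by exact_mod_cast hn
    simp only [R]; linarith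
  have hflim : ∀ s ∈ Icc (0:ℝ) T, ∀ x, Tendsto (fun n => fn n s x) atTop (𝓝 (f s x)) := by
    intro s hs x
    refine tendsto_const_nhds.congr' ?_
    filter_upwards [hact x] with n hn
    simp [hfn, (hrT s hs).1, hn.1]
  have hglim : ∀ s ∈ Icc (0:ℝ) T, ∀ x, Tendsto (fun n => g n s x) atTop
      (𝓝 (fs s x + μ s x * fx s x + (1 / 2) * (σ s x) ^ 2 * fxx s x)) := by
    intro s hs x
    refine tendsto_const_nhds.congr' ?_
    filter_upwards [hact x] with n hn
    rw [hg n s hs x, hn.1, hn.2.1, hn.2.2]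
    ring
  have hL : Tendsto (fun n => ∫ ω, fn n (min t (τ ω)) (U (min t (τ ω)) ω) ∂P) atTop
      (𝓝 (∫ ω, f (min t (τ ω)) (U (min t (τ ω)) ω) ∂P)) := by
    refine tendsto_integral_of_dominated_convergence (fun _ => D * C) (fun n => ?_)
      (integrable_const _) (fun n => Eventually.of_forall fun ω => hfB n _ (hmin ω) _)
      (Eventually.of_forall fun ω => hflim _ (hmin ω) _)
    have h1 : Measurable (fun ω => (min t (τ ω), U (min t (τ ω)) ω)) :=
      (measurable_const.min hτm).prodMk (hUj.comp ((measurable_const.min hτm).prodMk measurable_id))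
    exact ((htest n).cF.measurable.comp h1).aestronglyMeasurable
  have hbi : ∀ n ω, ∀ s ∈ uIoc 0 t, ‖(Iio (τ ω)).indicator (fun s => g n s (U s ω)) s‖ ≤ B := by
    intro n ω s hs
    rw [uIoc_of_le ht0] at hs
    exact (norm_indicator_le_norm_self _ _).trans (hgB n s ⟨hs.1.le, hs.2.trans htT⟩ _)
  have hRl : Tendsto (fun n => fn n 0 x₀ +
      ∫ ω, (∫ s in (0:ℝ)..t, (Iio (τ ω)).indicator (fun s => g n s (U s ω)) s) ∂P) atTop
      (𝓝 (f 0 x₀ + ∫ ω, (∫ s in (0:ℝ)..t,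
      (Iio (τ ω)).indicator (fun s => fs s (U s ω) + μ s (U s ω) * fx s (U s ω) +
        (1 / 2) * (σ s (U s ω)) ^ 2 * fxx s (U s ω)) s) ∂P)) := by
    refine (hflim 0 h0 x₀).add ?_
    refine tendsto_integral_of_dominated_convergence (fun _ => B * t) (fun n => ?_)
      (integrable_const _) (fun n => Eventually.of_forall fun ω => ?_)
      (Eventually.of_forall fun ω => ?_)
    · exact (measurable_integral_before hUj hτm (hgc n).measurable ht0).aestronglyMeasurable
    · have := intervalIntegral.norm_integral_le_of_norm_le_const (hbi n ω)
      rwa [sub_zero, abs_of_nonneg ht0] at this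
    · refine intervalIntegral.tendsto_integral_filter_of_dominated_convergence (fun _ => B)
        (Eventually.of_forall fun n => ?_) (Eventually.of_forall fun n =>
          Eventually.of_forall fun s hs => hbi n ω s hs) intervalIntegrable_const
        (Eventually.of_forall fun s hs => ?_)
      · exact (((measurable_before hUj hτm (hgc n).measurable).comp
          (measurable_id.prodMk measurable_const :
            Measurable fun s : ℝ => (s, ω)))).aestronglyMeasurable
      · rw [uIoc_of_le ht0] at hs
        by_cases h : s ∈ Iio (τ ω)
        · simp only [indicator_of_mem h]
          exact hglim s ⟨hs.1.le, hs.2.trans htT⟩ _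
        · simp only [indicator_of_notMem h]
          exact tendsto_const_nhds
  simp_rw [hkey] at hL
  exact tendsto_nhds_unique hL hRl

/-! ### The diffusion in coordinates moving with the boundary -/

/-- What the argument uses about the process `Z = X - g`, stopped at the first time `τ ≤ T` it
reaches `0`: its drift `B` is bounded by `M`, its squared diffusion coefficient `A` takes values in
`[a0, a1]` and is Hölder continuous at the boundary `z = 0`, and Dynkin's formula (`dyn`) holds for
bounded test functions. -/
structure KilledDiffusion [MeasurableSpace Ω] (P : Measure Ω) (T α z0 M a0 a1 CA : ℝ)
    (A B : ℝ → ℝ → ℝ) (Z : ℝ → Ω → ℝ) (τ : Ω → ℝ) : Prop where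
  hT : 0 < T
  α0 : 0 < α
  α1 : α < 1
  z0neg : z0 < 0
  a0pos : 0 < a0
  cA : Continuous (fun p : ℝ × ℝ => A p.1 p.2)
  cB : Continuous (fun p : ℝ × ℝ => B p.1 p.2)
  bB : ∀ s ∈ Icc (0:ℝ) T, ∀ z, |B s z| ≤ M
  lA : ∀ s ∈ Icc (0:ℝ) T, ∀ z, a0 ≤ A s z
  uA : ∀ s ∈ Icc (0:ℝ) T, ∀ z, A s z ≤ a1
  hA : ∀ s ∈ Icc (0:ℝ) T, ∀ t ∈ Icc (0:ℝ) T, ∀ z,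
    |A s z - A t 0| ≤ CA * (|z| ^ α + |t - s| ^ (α / 2))
  CA0 : 0 ≤ CA
  Zm : ∀ s, Measurable (Z s)
  Zc : ∀ ω, Continuous (fun s => Z s ω)
  Z0 : ∀ ω, Z 0 ω = z0
  τm : Measurable τ
  τpos : ∀ ω, 0 < τ ω
  τle : ∀ ω, τ ω ≤ T
  neg : ∀ ω s, 0 ≤ s → s < τ ω → Z s ω < 0
  zero : ∀ ω, τ ω < T → Z (τ ω) ω = 0
  dyn : ∀ F Fs Fz Fzz : ℝ → ℝ → ℝ, TestFn F Fs Fz Fzz → ∀ C : ℝ,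
    (∀ s ∈ Icc (0:ℝ) T, ∀ z, |F s z| ≤ C ∧ |Fs s z| ≤ C ∧ |Fz s z| ≤ C ∧ |Fzz s z| ≤ C) →
    ∀ t ∈ Icc (0:ℝ) T, ∫ ω, F (min t (τ ω)) (Z (min t (τ ω)) ω) ∂P = F 0 z0 +
      ∫ s in (0:ℝ)..t, ∫ ω in {ω | s < τ ω},
        (Fs s (Z s ω) + B s (Z s ω) * Fz s (Z s ω) + (1 / 2) * A s (Z s ω) * Fzz s (Z s ω)) ∂P

/-- The nearest point of `[0, T]`. -/
def clamp (T s : ℝ) : ℝ := max 0 (min s T)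

lemma continuous_clamp (T : ℝ) : Continuous (clamp T) := by unfold clamp; fun_prop

lemma clamp_mem {T : ℝ} (hT : 0 ≤ T) (s : ℝ) : clamp T s ∈ Icc 0 T :=
  ⟨le_max_left _ _, max_le hT (min_le_right _ _)⟩

lemma clamp_of_mem {T s : ℝ} (hs : s ∈ Icc 0 T) : clamp T s = s := by
  simp [clamp, hs.1, hs.2]

/-- A `C¹` extension of the boundary from `[0, T]` to the line. -/
lemma exists_extension {T : ℝ} (hT : 0 < T) {g : ℝ → ℝ} (hg : ContDiffOn ℝ 2 g (Icc 0 T)) :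
    ∃ G G1 : ℝ → ℝ, ∃ N : ℝ, (∀ s, HasDerivAt G (G1 s) s) ∧ Continuous G1 ∧ (∀ s, |G1 s| ≤ N) ∧
      ∀ s ∈ Icc 0 T, G s = g s := by
  have hu : UniqueDiffOn ℝ (Icc 0 T) := uniqueDiffOn_Icc hT
  have hcd : ContinuousOn (derivWithin g (Icc 0 T)) (Icc 0 T) :=
    hg.continuousOn_derivWithin hu (by norm_num)
  let G1 : ℝ → ℝ := fun s => derivWithin g (Icc 0 T) (clamp T s)
  have hG1 : Continuous G1 := hcd.comp_continuous (continuous_clamp T) (clamp_mem hT.le)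
  obtain ⟨N, hN⟩ := isCompact_Icc.exists_bound_of_continuousOn hcd
  refine ⟨fun s => g 0 + ∫ r in (0:ℝ)..s, G1 r, G1, N, fun s => ?_, hG1,
    fun s => hN _ (clamp_mem hT.le s), fun s hs => ?_⟩
  · exact (hG1.integral_hasStrictDerivAt 0 s).hasDerivAt.const_add _
  · have h1 : ∫ r in (0:ℝ)..s, G1 r = g s - g 0 := by
      apply intervalIntegral.integral_eq_sub_of_hasDerivAt_of_le hs.1
      · exact hg.continuousOn.mono (Icc_subset_Icc_right hs.2)
      · intro r hr
        have hr' : r ∈ Icc 0 T := ⟨hr.1.le, hr.2.le.trans hs.2⟩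
        have := (hg.differentiableOn (by norm_num) r hr').hasDerivWithinAt
        simp only [G1, clamp_of_mem hr']
        exact this.hasDerivAt (Icc_mem_nhds hr.1 (hr.2.trans_le hs.2))
      · exact hG1.intervalIntegrable _ _
    simp only [h1]; ring

section hitting

variable {T x₀ : ℝ} {g : ℝ → ℝ} {X : ℝ → ℝ → ℝ → Ω → ℝ}

lemma tauF_le (hT : 0 < T) (ω : Ω) : tauF T g X 0 x₀ ω ≤ T := by
  apply csInf_le
  · refine ⟨0, ?_⟩
    rintro t (⟨⟨h, -⟩, -⟩ | h)
    · exact h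
    · rw [mem_singleton_iff.1 h]; exact hT.le
  · simp

lemma tauF_nonneg (hT : 0 < T) (ω : Ω) : 0 ≤ tauF T g X 0 x₀ ω := by
  apply le_csInf ⟨T, by simp⟩
  rintro t (⟨⟨h, -⟩, -⟩ | h)
  · exact h
  · rw [mem_singleton_iff.1 h]; exact hT.le

lemma lt_of_lt_tauF (hT : 0 < T) {ω : Ω} {s : ℝ} (hs : 0 ≤ s) (h : s < tauF T g X 0 x₀ ω) :
    X 0 x₀ s ω < g s := by
  by_contra hc
  refine absurd h (not_lt.2 (csInf_le ?_ ?_))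
  · refine ⟨0, ?_⟩
    rintro t (⟨⟨h, -⟩, -⟩ | h)
    · exact h
    · rw [mem_singleton_iff.1 h]; exact hT.le
  · exact Or.inl ⟨⟨hs, h.le.trans (tauF_le hT ω)⟩, not_lt.1 hc⟩

/-- The infimum defining the hitting time is attained. -/
lemma tauF_mem (hT : 0 < T) (hgc : ContinuousOn g (Icc 0 T)) {ω : Ω}
    (hX : ContinuousOn (fun u => X 0 x₀ u ω) (Icc 0 T)) (h : tauF T g X 0 x₀ ω < T) :
    g (tauF T g X 0 x₀ ω) ≤ X 0 x₀ (tauF T g X 0 x₀ ω) ω := by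
  have hcl : IsClosed ({t | t ∈ Icc 0 T ∧ g t ≤ X 0 x₀ t ω} ∪ {T}) :=
    (isClosed_Icc.isClosed_le hgc hX).union isClosed_singleton
  have hm := hcl.csInf_mem ⟨T, by simp⟩ ⟨0, by
    rintro t (⟨⟨h, -⟩, -⟩ | h)
    · exact h
    · rw [mem_singleton_iff.1 h]; exact hT.le⟩
  rcases hm with hm | hm
  · exact hm.2
  · exact absurd (mem_singleton_iff.1 hm) h.ne

lemma tauF_eq (hT : 0 < T) (hgc : ContinuousOn g (Icc 0 T)) {ω : Ω}
    (hX : ContinuousOn (fun u => X 0 x₀ u ω) (Icc 0 T)) (h0 : 0 < tauF T g X 0 x₀ ω)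
    (h : tauF T g X 0 x₀ ω < T) :
    X 0 x₀ (tauF T g X 0 x₀ ω) ω = g (tauF T g X 0 x₀ ω) := by
  refine le_antisymm ?_ (tauF_mem hT hgc hX h)
  set t := tauF T g X 0 x₀ ω with ht
  have htm : t ∈ Icc 0 T := ⟨h0.le, h.le⟩
  have hsub : Ioo 0 t ⊆ Icc 0 T := fun s hs => ⟨hs.1.le, hs.2.le.trans h.le⟩
  have : (𝓝[Ioo 0 t] t).NeBot := by
    rw [← mem_closure_iff_nhdsWithin_neBot, closure_Ioo h0.ne]
    exact ⟨h0.le, le_rfl⟩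
  refine le_of_tendsto_of_tendsto (b := 𝓝[Ioo 0 t] t) ((hX t htm).mono hsub)
    ((hgc t htm).mono hsub) ?_
  filter_upwards [self_mem_nhdsWithin] with s hs
  exact (lt_of_lt_tauF hT hs.1.le hs.2).le

lemma tauF_pos (hT : 0 < T) (hgc : ContinuousOn g (Icc 0 T)) {ω : Ω}
    (hX : ContinuousOn (fun u => X 0 x₀ u ω) (Icc 0 T)) (h0 : X 0 x₀ 0 ω < g 0) :
    0 < tauF T g X 0 x₀ ω := by
  rcases (tauF_nonneg hT ω).lt_or_eq with h | h
  · exact h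
  · have := tauF_mem hT hgc hX (h ▸ hT)
    rw [← h] at this
    exact absurd this (not_le.2 h0)

lemma lt_tauF_iff (hT : 0 < T) (hgc : ContinuousOn g (Icc 0 T)) {ω : Ω}
    (hX : ContinuousOn (fun u => X 0 x₀ u ω) (Icc 0 T)) {s : ℝ} (hs : s ∈ Ico 0 T) :
    s < tauF T g X 0 x₀ ω ↔ ∀ u ∈ Icc 0 s, X 0 x₀ u ω < g u := by
  refine ⟨fun h u hu => lt_of_lt_tauF hT hu.1 (hu.2.trans_lt h), fun h => ?_⟩
  by_contra hc
  have hc := not_lt.1 hc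
  exact absurd (tauF_mem hT hgc hX (hc.trans_lt hs.2))
    (not_le.2 (h _ ⟨tauF_nonneg hT ω, hc⟩))

/-- Up to time `s` the path stays below the boundary iff it does so by a uniform margin at
countably many times; hence `{s < τ}` is known at time `s`. -/
lemma measurableSet_lt_tauF [m : MeasurableSpace Ω] {F : Filtration ℝ m} (hT : 0 < T)
    (hgc : ContinuousOn g (Icc 0 T)) (hXad : Adapted F (X 0 x₀))
    (hX : ∀ ω, ContinuousOn (fun u => X 0 x₀ u ω) (Icc 0 T)) {s : ℝ} (hs : s ∈ Ico 0 T) :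
    MeasurableSet[F s] {ω | s < tauF T g X 0 x₀ ω} := by
  obtain ⟨D, hDs, hDc, hDd⟩ :=
    (TopologicalSpace.IsSeparable.of_separableSpace (Icc (0:ℝ) s)).exists_countable_dense_subset
  have e : {ω | s < tauF T g X 0 x₀ ω} =
      ⋃ n : ℕ, ⋂ u ∈ D, {ω | X 0 x₀ u ω - g u ≤ - (1 / ((n:ℝ) + 1))} := by
    ext ω
    simp only [mem_ofPred_eq, lt_tauF_iff hT hgc (hX ω) hs, mem_iUnion, mem_iInter]
    have hsub : Icc 0 s ⊆ Icc 0 T := Icc_subset_Icc_right hs.2.le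
    have hc : ContinuousOn (fun u => X 0 x₀ u ω - g u) (Icc 0 s) := ((hX ω).sub hgc).mono hsub
    constructor
    · intro h
      obtain ⟨u, hu, hmax⟩ := isCompact_Icc.exists_isMaxOn ⟨0, ⟨le_rfl, hs.1⟩⟩ hc
      obtain ⟨n, hn⟩ := exists_nat_one_div_lt (show 0 < g u - X 0 x₀ u ω by linarith [h u hu])
      refine ⟨n, fun v hv => ?_⟩
      have := hmax (hDs hv)
      simp only [mem_ofPred_eq] at this
      linarith
    · rintro ⟨n, hn⟩ u hu
      have : X 0 x₀ u ω - g u ≤ - (1 / ((n:ℝ) + 1)) := by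
        have : (𝓝[D] u).NeBot := mem_closure_iff_nhdsWithin_neBot.1 (hDd hu)
        refine le_of_tendsto ((hc u hu).mono hDs) ?_
        filter_upwards [self_mem_nhdsWithin] with v hv using hn v hv
      have hp : 0 < 1 / ((n:ℝ) + 1) := by positivity
      linarith
  rw [e]
  refine MeasurableSet.iUnion fun n => MeasurableSet.biInter hDc fun u hu => ?_
  have h1 : Measurable[F s] (X 0 x₀ u) := (hXad u).mono (F.mono (hDs hu).2) le_rfl
  exact (h1.sub_const (g u)) measurableSet_Iic

lemma measurable_tauF [m : MeasurableSpace Ω] {F : Filtration ℝ m} (hT : 0 < T)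
    (hgc : ContinuousOn g (Icc 0 T)) (hXad : Adapted F (X 0 x₀))
    (hX : ∀ ω, ContinuousOn (fun u => X 0 x₀ u ω) (Icc 0 T)) :
    Measurable (tauF T g X 0 x₀) := by
  refine measurable_of_Ioi fun s => ?_
  rcases lt_or_ge s 0 with h | h
  · convert MeasurableSet.univ using 1
    ext ω; simp [h.trans_le (tauF_nonneg hT ω)]
  rcases lt_or_ge s T with h' | h'
  · exact F.le s _ (measurableSet_lt_tauF hT hgc hXad hX ⟨h, h'⟩)
  · convert MeasurableSet.empty using 1
    ext ω; simp [(tauF_le hT ω).trans h']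

end hitting

/-- A bounded Hölder function of the diffusion coefficient, read along the moving boundary. -/
lemma holder_sq {T α M N C : ℝ} (hT : 0 < T) (hα : α ∈ Ioo (0:ℝ) 1) {σ : ℝ → ℝ → ℝ} {G : ℝ → ℝ}
    (hM : ∀ s ∈ Icc (0:ℝ) T, ∀ x, |σ s x| ≤ M)
    (hC : ∀ t ∈ Icc (0:ℝ) T, ∀ t' ∈ Icc (0:ℝ) T, ∀ x x' : ℝ,
      |σ t x - σ t' x'| ≤ C * (|x - x'| ^ α + |t - t'| ^ (α / 2)))
    (hN0 : 0 ≤ N) (hN : ∀ s t, |G s - G t| ≤ N * |s - t|) :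
    ∃ CA, 0 ≤ CA ∧ ∀ s ∈ Icc (0:ℝ) T, ∀ t ∈ Icc (0:ℝ) T, ∀ z,
      |(σ s (z + G s)) ^ 2 - (σ t (G t)) ^ 2| ≤ CA * (|z| ^ α + |t - s| ^ (α / 2)) := by
  have h0 : (0:ℝ) ∈ Icc 0 T := ⟨le_rfl, hT.le⟩
  have hM0 : 0 ≤ M := (abs_nonneg _).trans (hM 0 h0 0)
  have hC0 : 0 ≤ C := by
    have := hC 0 h0 0 h0 1 0
    simp only [sub_zero, abs_one, Real.one_rpow, sub_self, abs_zero,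
      Real.zero_rpow (by linarith [hα.1] : α / 2 ≠ 0), add_zero, mul_one] at this
    exact (abs_nonneg _).trans this
  have hα2 : 0 < α / 2 := by linarith [hα.1]
  let D : ℝ := N ^ α * T ^ (α / 2) + 1
  have hD1 : 1 ≤ D := by simp only [D]; have : 0 ≤ N ^ α * T ^ (α / 2) := by positivity
                         linarith
  refine ⟨2 * M * (C * D), by positivity, fun s hs t ht z => ?_⟩
  have e : (σ s (z + G s)) ^ 2 - (σ t (G t)) ^ 2 =
    (σ s (z + G s) + σ t (G t)) * (σ s (z + G s) - σ t (G t)) := by ring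
  rw [e, abs_mul, mul_assoc]
  have hst : |s - t| ≤ T := by rw [abs_le]; constructor <;> linarith [hs.1, hs.2, ht.1, ht.2]
  have h1 : |σ s (z + G s) - σ t (G t)| ≤ C * D * (|z| ^ α + |t - s| ^ (α / 2)) := by
    rw [mul_assoc]
    refine (hC s hs t ht _ _).trans (mul_le_mul_of_nonneg_left ?_ hC0)
    have h2 : |z + G s - G t| ^ α ≤ |z| ^ α + (N * |s - t|) ^ α := by
      have : |z + G s - G t| ≤ |z| + N * |s - t| := by
        have := abs_add_le z (G s - G t)
        rw [add_sub_assoc]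
        linarith [hN s t]
      refine (Real.rpow_le_rpow (abs_nonneg _) this hα.1.le).trans ?_
      exact Real.rpow_add_le_add_rpow (abs_nonneg _) (by positivity) hα.1.le hα.2.le
    have h3 : (N * |s - t|) ^ α ≤ N ^ α * T ^ (α / 2) * |t - s| ^ (α / 2) := by
      rw [Real.mul_rpow hN0 (abs_nonneg _), mul_assoc, abs_sub_comm t s]
      have : |s - t| ^ α = |s - t| ^ (α / 2) * |s - t| ^ (α / 2) := by
        rw [← Real.rpow_add_of_nonneg (abs_nonneg _) hα2.le hα2.le]; congr 1; ring
      rw [this]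
      gcongr
    have h4 : 0 ≤ |z| ^ α := by positivity
    rw [abs_sub_comm t s] at *
    have : D * (|z| ^ α + |s - t| ^ (α / 2)) = |z| ^ α + |s - t| ^ (α / 2) + 
      N ^ α * T ^ (α / 2) * |s - t| ^ (α / 2) + N ^ α * T ^ (α / 2) * |z| ^ α := by
        simp only [D]; ring
    rw [this]
    have h5 : 0 ≤ N ^ α * T ^ (α / 2) * |z| ^ α := by positivity
    linarith
  have h2 : |σ s (z + G s) + σ t (G t)| ≤ 2 * M :=
    (abs_add_le _ _).trans (by linarith [hM s hs (z + G s), hM t ht (G t)])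
  have : 2 * M * (C * D) * (|z| ^ α + |t - s| ^ (α / 2)) =
    2 * M * (C * D * (|z| ^ α + |t - s| ^ (α / 2))) := by ring
  exact mul_le_mul h2 h1 (abs_nonneg _) (by linarith) |>.trans (by rw [← mul_assoc, ← mul_assoc])

/-- The process `X - g`, stopped at the hitting time of the boundary, satisfies the assumptions of
`KilledDiffusion`. -/
lemma exists_killedDiffusion [m : MeasurableSpace Ω] {P : Measure Ω} [IsProbabilityMeasure P]
    {F : Filtration ℝ m} {T x₀ α : ℝ} (hT : 0 < T) (hα : α ∈ Ioo (0:ℝ) 1)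
    {μ σ : ℝ → ℝ → ℝ} (hC1 : CondC1 T μ σ) (hC2 : CondC2 T σ) (hC3 : CondC3 T α μ σ)
    {g : ℝ → ℝ} (hg : ContDiffOn ℝ 2 g (Icc 0 T)) (hg0 : x₀ < g 0)
    {X : ℝ → ℝ → ℝ → Ω → ℝ}
    (hXad : ∀ s x : ℝ, Adapted F (X s x))
    (hXcont : ∀ s x : ℝ, ∀ ω, ContinuousOn (fun u => X s x u ω) (Icc s T))
    (hXinit : ∀ s x : ℝ, ∀ ω, X s x s ω = x)
    (hXmp : SolvesMP T μ σ P F X) :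
    ∃ (M a0 a1 CA : ℝ) (A B Z : _), KilledDiffusion P T α (x₀ - g 0) M a0 a1 CA A B Z
        (tauF T g X 0 x₀) ∧ (∀ s ∈ Icc 0 T, ∀ z, A s z = (σ s (z + g s)) ^ 2) ∧
      (∀ s ∈ Icc 0 T, ∀ ω, Z s ω = X 0 x₀ s ω - g s) := by
  obtain ⟨G, G1, N, hG, hG1, hN, hGg⟩ := exists_extension hT hg
  have hGc : Continuous G := continuous_iff_continuousAt.2 fun s => (hG s).continuousAt
  have hgc : ContinuousOn g (Icc 0 T) := hg.continuousOn
  have h0 : (0:ℝ) ∈ Icc 0 T := ⟨le_rfl, hT.le⟩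
  obtain ⟨cμ, cσ, -, -, -⟩ := hC1
  obtain ⟨σ₀, hσ₀, hσ₀'⟩ := hC2
  obtain ⟨⟨Mb, hMb⟩, -, -, -, ⟨Ch, hCh⟩, -⟩ := hC3
  have hNlip : ∀ s t, |G s - G t| ≤ N * |s - t| := by
    intro s t
    have := Convex.norm_image_sub_le_of_norm_deriv_le (f := G) (C := N) (s := univ) (x := t) (y := s)
      (fun x _ => (hG x).differentiableAt) (fun x _ => by rw [(hG x).deriv]; exact hN x)
      convex_univ (mem_univ _) (mem_univ _)
    simpa using this
  have hN0 : 0 ≤ N := (abs_nonneg _).trans (hN 0)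
  obtain ⟨CA, hCA0, hCA⟩ := holder_sq hT hα (fun s hs x => (hMb s hs x).2) hCh hN0 hNlip
  -- coefficients and path extended constantly beyond `[0, T]`
  let μ' : ℝ → ℝ → ℝ := fun s x => μ (clamp T s) x
  let σ' : ℝ → ℝ → ℝ := fun s x => σ (clamp T s) x
  let U : ℝ → Ω → ℝ := fun s ω => X 0 x₀ (clamp T s) ω
  have hpair : Continuous (fun p : ℝ × ℝ => (clamp T p.1, p.2)) :=
    ((continuous_clamp T).comp continuous_fst).prodMk continuous_snd
  have cμ' : Continuous (fun p : ℝ × ℝ => μ' p.1 p.2) :=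
    cμ.comp_continuous hpair fun p => ⟨clamp_mem hT.le _, mem_univ _⟩
  have cσ' : Continuous (fun p : ℝ × ℝ => σ' p.1 p.2) :=
    cσ.comp_continuous hpair fun p => ⟨clamp_mem hT.le _, mem_univ _⟩
  have hUc : ∀ ω, Continuous (fun s => U s ω) := fun ω =>
    (hXcont 0 x₀ ω).comp_continuous (continuous_clamp T) (clamp_mem hT.le)
  have hUm : ∀ s, Measurable (U s) := fun s => (hXad 0 x₀ _).mono (F.le _) le_rfl
  have hU0 : ∀ ω, U 0 ω = x₀ := fun ω => by simp only [U, clamp_of_mem h0]; exact hXinit 0 x₀ ω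
  have hUX : ∀ s ∈ Icc 0 T, ∀ ω, U s ω = X 0 x₀ s ω := fun s hs ω => by
    simp only [U, clamp_of_mem hs]
  have hμμ : ∀ s ∈ Icc 0 T, ∀ x, μ' s x = μ s x := fun s hs x => by simp only [μ', clamp_of_mem hs]
  have hσσ : ∀ s ∈ Icc 0 T, ∀ x, σ' s x = σ s x := fun s hs x => by simp only [σ', clamp_of_mem hs]
  have hmp : ∀ f : ℝ → ℝ → ℝ, C12On f univ → HasCompactSupport (fun p : ℝ × ℝ => f p.1 p.2) →
      MartingaleOn P F (fun u ω => f u (U u ω) - ∫ r in (0:ℝ)..u, genOp μ' σ' f r (U r ω))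
        (Icc 0 T) := by
    intro f hf hfs
    have h := hXmp 0 h0 x₀ f hf hfs
    have e : ∀ u ∈ Icc 0 T, (fun ω => f u (U u ω) - ∫ r in (0:ℝ)..u, genOp μ' σ' f r (U r ω)) =
        fun ω => f u (X 0 x₀ u ω) - ∫ r in (0:ℝ)..u, genOp μ σ f r (X 0 x₀ r ω) := by
      intro u hu
      ext ω
      rw [hUX u hu]
      congr 1
      apply intervalIntegral.integral_congr
      intro r hr
      rw [uIcc_of_le hu.1] at hr
      have hr' : r ∈ Icc 0 T := ⟨hr.1, hr.2.trans hu.2⟩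
      simp only [genOp, hUX r hr', hμμ r hr', hσσ r hr']
    refine ⟨fun u hu => ?_, fun u₁ h₁ u₂ h₂ h12 => ?_⟩
    · simp only [e u hu]; exact h.1 u hu
    · simp only [e u₁ h₁, e u₂ h₂]; exact h.2 u₁ h₁ u₂ h₂ h12
  have hXc0 := hXcont 0 x₀
  have hτm := measurable_tauF hT hgc (hXad 0 x₀) hXc0
  have hpos : ∀ ω, 0 < tauF T g X 0 x₀ ω := fun ω =>
    tauF_pos hT hgc (hXc0 ω) (by rw [hXinit]; exact hg0)
  have hUj : Measurable (fun p : ℝ × Ω => U p.1 p.2) :=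
    measurable_uncurry_of_continuous_of_measurable (u := fun (s : ℝ) ω => U s ω)
      (fun ω => hUc ω) hUm
  refine ⟨Mb + N, σ₀ ^ 2, Mb ^ 2, CA, fun s z => (σ' s (z + G s)) ^ 2,
    fun s z => μ' s (z + G s) - G1 s, fun s ω => U s ω - G s, ?_, ?_, ?_⟩
  · have hsh : Continuous (fun p : ℝ × ℝ => (p.1, p.2 + G p.1)) := by fun_prop
    refine
      { hT := hT, α0 := hα.1, α1 := hα.2, z0neg := by linarith, a0pos := by positivity
        cA := (cσ'.comp hsh).pow 2
        cB := (cμ'.comp hsh).sub (hG1.comp continuous_fst)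
        bB := fun s hs z => ?_
        lA := fun s hs z => ?_
        uA := fun s hs z => ?_
        hA := fun s hs t ht z => ?_
        CA0 := hCA0
        Zm := fun s => (hUm s).sub_const _
        Zc := fun ω => (hUc ω).sub hGc
        Z0 := fun ω => by rw [hU0, hGg 0 h0]
        τm := hτm, τpos := hpos, τle := tauF_le hT
        neg := fun ω s hs hsτ => ?_
        zero := fun ω hω => ?_
        dyn := ?_ }
    · refine (abs_sub _ _).trans (add_le_add ?_ (hN s))
      rw [hμμ s hs]; exact (hMb s hs _).1
    · rw [hσσ s hs]; exact pow_le_pow_left₀ hσ₀.le (hσ₀' s hs _) 2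
    · rw [hσσ s hs]; exact sq_le_sq' (by linarith [abs_le.1 (hMb s hs (z + G s)).2])
        (abs_le.1 (hMb s hs (z + G s)).2).2
    · rw [hσσ s hs, hσσ t ht, zero_add]; exact hCA s hs t ht z
    · have hm : s ∈ Icc 0 T := ⟨hs, hsτ.le.trans (tauF_le hT ω)⟩
      rw [hUX s hm, hGg s hm]
      linarith [lt_of_lt_tauF hT hs hsτ]
    · have hm : tauF T g X 0 x₀ ω ∈ Icc 0 T := ⟨(hpos ω).le, tauF_le hT ω⟩
      rw [hUX _ hm, hGg _ hm, tauF_eq hT hgc (hXc0 ω) (hpos ω) hω, sub_self]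
    · intro f fs fz fzz hf C hC t ht
      have hC0 : 0 ≤ C := (abs_nonneg _).trans (hC 0 h0 0).1
      have htest : TestFn (fun s x => f s (x - G s)) (fun s x => fs s (x - G s) - G1 s * fz s (x - G s))
          (fun s x => fz s (x - G s)) (fun s x => fzz s (x - G s)) := by
        have hsh' : Continuous (fun p : ℝ × ℝ => (p.1, p.2 - G p.1)) := by fun_prop
        refine ⟨hf.cF.comp hsh', ?_, hf.cFz.comp hsh', hf.cFzz.comp hsh', fun s x => ?_,
          fun s x => ?_, fun s x => ?_⟩
        · exact (hf.cFs.comp hsh').sub ((hG1.comp continuous_fst).mul (hf.cFz.comp hsh'))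
        · have h1 := hasStrictFDerivAt_uncurry_coprod (𝕜 := ℝ) (f := f) (u := (s, x - G s))
            (f₁ := fun s z => ContinuousLinearMap.toSpanSingleton ℝ (fs s z))
            (f₂ := fun s z => ContinuousLinearMap.toSpanSingleton ℝ (fz s z))
            (Eventually.of_forall fun v => (hf.ds v.1 v.2).hasFDerivAt)
            (Eventually.of_forall fun v => (hf.dz v.1 v.2).hasFDerivAt)
            (by
              have := (ContinuousLinearMap.toSpanSingletonCLE (𝕜 := ℝ) (E := ℝ)).continuous
              exact (this.comp hf.cFs).continuousAt)
            (by
              have := (ContinuousLinearMap.toSpanSingletonCLE (𝕜 := ℝ) (E := ℝ)).continuous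
              exact (this.comp hf.cFz).continuousAt)
          have h2 : HasDerivAt (fun s => (s, x - G s)) ((1:ℝ), - G1 s) s :=
            (hasDerivAt_id s).prodMk ((hG s).const_sub x)
          have h3 := h1.hasFDerivAt.comp_hasDerivAt s h2
          exact h3.congr_deriv (by simp [Function.HasUncurry.uncurry]; ring)
        · exact ((hf.dz s (x - G s)).comp x ((hasDerivAt_id x).sub_const (G s))).congr_deriv
            (mul_one _)
        · exact ((hf.dzz s (x - G s)).comp x ((hasDerivAt_id x).sub_const (G s))).congr_deriv
            (mul_one _)
      have hbd : ∀ s ∈ Icc (0:ℝ) T, ∀ x, |f s (x - G s)| ≤ C + N * C ∧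
          |fs s (x - G s) - G1 s * fz s (x - G s)| ≤ C + N * C ∧ |fz s (x - G s)| ≤ C + N * C ∧
          |fzz s (x - G s)| ≤ C + N * C := by
        intro s hs x
        obtain ⟨q1, q2, q3, q4⟩ := hC s hs (x - G s)
        have : 0 ≤ N * C := by positivity
        refine ⟨by linarith, ?_, by linarith, by linarith⟩
        refine (abs_sub _ _).trans (add_le_add q2 ?_)
        rw [abs_mul]; exact mul_le_mul (hN s) q3 (abs_nonneg _) hN0
      have hMb' : ∀ s ∈ Icc (0:ℝ) T, ∀ x, |μ' s x| ≤ Mb ∧ |σ' s x| ≤ Mb := fun s hs x => by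
        rw [hμμ s hs, hσσ s hs]; exact hMb s hs x
      have hd := dynkin_bounded cμ' cσ' hMb' hUm hUc hU0 hmp
        (fun s hs => measurableSet_lt_tauF hT hgc (hXad 0 x₀) hXc0 hs) hτm (fun ω => (hpos ω).le)
        htest hbd ht.1 ht.2
      rw [hd, hGg 0 h0]
      congr 1
      let k : ℝ → ℝ → ℝ := fun s x => fs s (x - G s) - G1 s * fz s (x - G s) +
        μ' s x * fz s (x - G s) + 1 / 2 * σ' s x ^ 2 * fzz s (x - G s)
      have hk : Measurable (fun p : ℝ × ℝ => k p.1 p.2) :=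
        (((htest.cFs.add (cμ'.mul htest.cFz))).add
          ((continuous_const.mul (cσ'.pow 2)).mul htest.cFzz)).measurable
      let K : ℝ := C + N * C + Mb * (C + N * C) + 1 / 2 * Mb ^ 2 * (C + N * C)
      have hMb0 : 0 ≤ Mb := (abs_nonneg _).trans (hMb 0 h0 0).1
      have hkb : ∀ s ∈ Icc (0:ℝ) T, ∀ x, |k s x| ≤ K := by
        intro s hs x
        obtain ⟨q1, q2, q3, q4⟩ := hbd s hs x
        obtain ⟨m1, m2⟩ := hMb' s hs x
        have : 0 ≤ C + N * C := by positivity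
        refine (abs_add_le _ _).trans (add_le_add ((abs_add_le _ _).trans (add_le_add q2 ?_)) ?_)
        · rw [abs_mul]; gcongr
        · rw [abs_mul, abs_mul, abs_pow, abs_of_pos (by norm_num : (0:ℝ) < 1 / 2)]; gcongr
      have hme := measurable_before hUj hτm hk
      have hinteg : Integrable (Function.uncurry fun (s : ℝ) (ω : Ω) =>
          (Iio (tauF T g X 0 x₀ ω)).indicator (fun s => k s (U s ω)) s)
          ((volume.restrict (uIoc 0 t)).prod P) := by
        rw [uIoc_of_le ht.1]
        refine Integrable.of_bound (C := K) hme.aestronglyMeasurable ?_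
        have hae : ∀ᵐ p : ℝ × Ω ∂((volume.restrict (Ioc 0 t)).prod P), p.1 ∈ Ioc 0 t := by
          have : ∀ᵐ s ∂(volume.restrict (Ioc (0:ℝ) t)), s ∈ Ioc 0 t :=
            ae_restrict_mem measurableSet_Ioc
          exact Measure.quasiMeasurePreserving_fst.ae this
        filter_upwards [hae] with p hp
        have h1 : ‖(Iio (tauF T g X 0 x₀ p.2)).indicator (fun s => k s (U s p.2)) p.1‖ ≤
          ‖k p.1 (U p.1 p.2)‖ := norm_indicator_le_norm_self (fun s => k s (U s p.2)) p.1
        exact h1.trans (hkb _ ⟨hp.1.le, hp.2.trans ht.2⟩ _)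
      have hsw := intervalIntegral_integral_swap (a := 0) (b := t) (μ := P) hinteg
      refine hsw.symm.trans ?_
      apply intervalIntegral.integral_congr
      intro s hs
      simp only
      rw [← integral_indicator (measurableSet_lt measurable_const hτm)]
      congr 1
      ext ω
      by_cases h : s < tauF T g X 0 x₀ ω
      · rw [indicator_of_mem (show s ∈ Iio _ from h), indicator_of_mem (s := {ω | s < tauF T g X 0 x₀ ω}) h]
        simp only [k, sub_add_cancel]
        ring
      · rw [indicator_of_notMem (show s ∉ Iio _ from h),
          indicator_of_notMem (s := {ω | s < tauF T g X 0 x₀ ω}) h]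
  · intro s hs z
    simp only [hσσ s hs, hGg s hs]
  · intro s hs ω
    simp only [hUX s hs, hGg s hs]

/-! ### The dipole kernel -/

/-- The spatial derivative of the Gaussian heat kernel of standard deviation `W`, up to a
constant factor. It vanishes at `z = 0`. -/
def kern (W z : ℝ) : ℝ := -z * Real.exp (-(z / W) ^ 2 / 2) / W ^ 3

/-- The first `z`-derivative of `kern`. -/
def kern1 (W z : ℝ) : ℝ := ((z / W) ^ 2 - 1) * Real.exp (-(z / W) ^ 2 / 2) / W ^ 3

/-- The second `z`-derivative of `kern`. -/
def kern2 (W z : ℝ) : ℝ := (3 * (z / W) - (z / W) ^ 3) * Real.exp (-(z / W) ^ 2 / 2) / W ^ 4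

lemma hasDerivAt_gauss_z {W : ℝ} (z : ℝ) :
    HasDerivAt (fun z => Real.exp (-(z / W) ^ 2 / 2))
      (-(z / W) / W * Real.exp (-(z / W) ^ 2 / 2)) z := by
  have h := ((((hasDerivAt_id z).div_const W).pow 2).neg.div_const 2).exp
  exact h.congr_deriv (by simp; ring)

lemma hasDerivAt_kern_z {W : ℝ} (hW : W ≠ 0) (z : ℝ) : HasDerivAt (kern W) (kern1 W z) z := by
  have h := (((hasDerivAt_id z).neg).mul (hasDerivAt_gauss_z (W := W) z)).div_const (W ^ 3)
  exact h.congr_deriv (by simp only [kern1]; field_simp; simp; ring)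

lemma hasDerivAt_kern1_z {W : ℝ} (hW : W ≠ 0) (z : ℝ) : HasDerivAt (kern1 W) (kern2 W z) z := by
  have h := (((((hasDerivAt_id z).div_const W).pow 2).sub_const 1).mul
    (hasDerivAt_gauss_z (W := W) z)).div_const (W ^ 3)
  exact h.congr_deriv (by
    simp only [kern2, id, Pi.pow_apply, Nat.cast_ofNat, Nat.reduceSub, pow_one]; field_simp; ring)

/-- The heat equation: `∂_W kern = W ∂_z² kern`. -/
lemma hasDerivAt_kern_W {W : ℝ} (hW : W ≠ 0) (z : ℝ) :
    HasDerivAt (fun W => kern W z) (W * kern2 W z) W := by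
  have h0 : HasDerivAt (fun W : ℝ => z / W) (-z / W ^ 2) W := by
    have := (hasDerivAt_inv hW).const_mul z
    simp only [div_eq_mul_inv]
    exact this.congr_deriv (by ring)
  have h1 := ((h0.pow 2).neg.div_const 2).exp
  have h := (h1.const_mul (-z)).div (hasDerivAt_pow 3 W) (by positivity)
  exact h.congr_deriv (by
    simp only [kern2, Pi.neg_apply, Pi.pow_apply, Nat.cast_ofNat, Nat.reduceSub, pow_one]; field_simp; ring)

lemma one_add_le_exp_aux (y : ℝ) :
    (1 + y ^ 2 / 4 + (y ^ 2 / 4) ^ 2 / 2) * Real.exp (-y ^ 2 / 2) ≤ Real.exp (-y ^ 2 / 4) := by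
  have h := Real.quadratic_le_exp_of_nonneg (x := y ^ 2 / 4) (by positivity)
  calc _ ≤ Real.exp (y ^ 2 / 4) * Real.exp (-y ^ 2 / 2) := by gcongr
    _ = Real.exp (-y ^ 2 / 4) := by rw [← Real.exp_add]; congr 1; ring

lemma poly_exp_le {y p c : ℝ} (hp : p ≤ c * (1 + y ^ 2 / 4 + (y ^ 2 / 4) ^ 2 / 2)) (hc : 0 ≤ c) :
    p * Real.exp (-y ^ 2 / 2) ≤ c * Real.exp (-y ^ 2 / 4) := by
  calc _ ≤ c * (1 + y ^ 2 / 4 + (y ^ 2 / 4) ^ 2 / 2) * Real.exp (-y ^ 2 / 2) := by gcongr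
    _ = c * ((1 + y ^ 2 / 4 + (y ^ 2 / 4) ^ 2 / 2) * Real.exp (-y ^ 2 / 2)) := by ring
    _ ≤ _ := mul_le_mul_of_nonneg_left (one_add_le_exp_aux y) hc

lemma abs_mul_exp_le (y : ℝ) : |y| * Real.exp (-y ^ 2 / 2) ≤ 1 * Real.exp (-y ^ 2 / 4) := by
  refine poly_exp_le ?_ zero_le_one
  rw [← sq_abs y]
  nlinarith [sq_nonneg (|y| / 2 - 1), sq_nonneg (|y| ^ 2 / 4)]

lemma abs_sq_sub_mul_exp_le (y : ℝ) :
    |y ^ 2 - 1| * Real.exp (-y ^ 2 / 2) ≤ 4 * Real.exp (-y ^ 2 / 4) := by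
  refine poly_exp_le ?_ (by norm_num)
  rw [abs_le]
  constructor <;> nlinarith [sq_nonneg y, sq_nonneg (y ^ 2)]

lemma abs_cubic_mul_exp_le (y : ℝ) :
    |3 * y - y ^ 3| * (1 + |y|) * Real.exp (-y ^ 2 / 2) ≤ 48 * Real.exp (-y ^ 2 / 4) := by
  refine poly_exp_le ?_ (by norm_num)
  have h1 : |3 * y - y ^ 3| ≤ 3 * |y| + |y| ^ 3 := by
    refine (abs_sub _ _).trans ?_
    rw [abs_mul, abs_pow, abs_of_pos (by norm_num : (0:ℝ) < 3)]
  rw [← sq_abs y]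
  have h0 := abs_nonneg y
  set x := |y|
  have : |3 * y - y ^ 3| * (1 + x) ≤ (3 * x + x ^ 3) * (1 + x) := by gcongr
  nlinarith [sq_nonneg (x - 1), sq_nonneg (x ^ 2 - x), sq_nonneg (x ^ 2), sq_nonneg x]

lemma abs_kern_le {W : ℝ} (hW : 0 < W) (z : ℝ) :
    |kern W z| ≤ 1 / W ^ 2 * Real.exp (-(z / W) ^ 2 / 4) := by
  have e : |kern W z| = 1 / W ^ 2 * (|z / W| * Real.exp (-(z / W) ^ 2 / 2)) := by
    simp only [kern, abs_div, abs_mul, abs_neg, abs_pow, abs_of_pos hW, abs_of_pos (Real.exp_pos _)]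
    field_simp
  rw [e]
  have := abs_mul_exp_le (z / W)
  rw [one_mul] at this
  gcongr

lemma abs_kern1_le {W : ℝ} (hW : 0 < W) (z : ℝ) :
    |kern1 W z| ≤ 4 / W ^ 3 * Real.exp (-(z / W) ^ 2 / 4) := by
  have e : |kern1 W z| = 1 / W ^ 3 * (|(z / W) ^ 2 - 1| * Real.exp (-(z / W) ^ 2 / 2)) := by
    rw [kern1, abs_div, abs_mul, abs_pow, abs_of_pos hW, abs_of_pos (Real.exp_pos _)]
    field_simp
  rw [e, show 4 / W ^ 3 = 1 / W ^ 3 * 4 by ring, mul_assoc]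
  exact mul_le_mul_of_nonneg_left (abs_sq_sub_mul_exp_le _) (by positivity)

lemma abs_kern2_le {W : ℝ} (hW : 0 < W) (z : ℝ) :
    |kern2 W z| * (1 + |z / W|) ≤ 48 / W ^ 4 * Real.exp (-(z / W) ^ 2 / 4) := by
  have e : |kern2 W z| * (1 + |z / W|) = 1 / W ^ 4 *
      (|3 * (z / W) - (z / W) ^ 3| * (1 + |z / W|) * Real.exp (-(z / W) ^ 2 / 2)) := by
    rw [kern2, abs_div, abs_mul, abs_pow, abs_of_pos hW, abs_of_pos (Real.exp_pos _)]
    ring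
  rw [e, show 48 / W ^ 4 = 1 / W ^ 4 * 48 by ring, mul_assoc (1 / W ^ 4) 48]
  exact mul_le_mul_of_nonneg_left (abs_cubic_mul_exp_le _) (by positivity)

lemma exp_neg_le_one (y : ℝ) : Real.exp (-y ^ 2 / 4) ≤ 1 := by
  rw [Real.exp_le_one_iff]; nlinarith [sq_nonneg y]

lemma abs_kern2_le' {W : ℝ} (hW : 0 < W) (z : ℝ) : |kern2 W z| ≤ 48 / W ^ 4 := by
  have h := abs_kern2_le hW z
  have h1 : |kern2 W z| * 1 ≤ |kern2 W z| * (1 + |z / W|) := by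
    gcongr; linarith [abs_nonneg (z / W)]
  have h2 : 48 / W ^ 4 * Real.exp (-(z / W) ^ 2 / 4) ≤ 48 / W ^ 4 * 1 := by
    gcongr; exact exp_neg_le_one _
  linarith

/-- A positive `C¹` function with `ramp x = 1 + x` for `x ≥ 0`. -/
def ramp (x : ℝ) : ℝ := 1 + ∫ r in (0:ℝ)..x, Real.exp (min r 0)

lemma hasDerivAt_ramp (x : ℝ) : HasDerivAt ramp (Real.exp (min x 0)) x := by
  have : Continuous fun r : ℝ => Real.exp (min r 0) := by fun_prop
  exact (this.integral_hasStrictDerivAt 0 x).hasDerivAt.const_add _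

lemma ramp_of_nonneg {x : ℝ} (hx : 0 ≤ x) : ramp x = 1 + x := by
  have : ∫ r in (0:ℝ)..x, Real.exp (min r 0) = ∫ r in (0:ℝ)..x, (1:ℝ) := by
    apply intervalIntegral.integral_congr
    intro r hr
    rw [uIcc_of_le hx] at hr
    simp [hr.1]
  simp [ramp, this]

lemma ramp_pos (x : ℝ) : 0 < ramp x := by
  rcases le_total 0 x with hx | hx
  · rw [ramp_of_nonneg hx]; linarith
  · have : ∫ r in (0:ℝ)..x, Real.exp (min r 0) = ∫ r in (0:ℝ)..x, Real.exp r := by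
      apply intervalIntegral.integral_congr
      intro r hr
      rw [uIcc_of_ge hx] at hr
      simp [hr.2]
    rw [ramp, this, integral_exp]
    simp [Real.exp_pos]

/-- The width at time `s` of a kernel that solves the backward heat equation with diffusivity `a`
up to time `t`, where its width is `√ε`. -/
def width (a t ε s : ℝ) : ℝ := √(ε * ramp (a * (t - s) / ε))

lemma width_pos {a t ε : ℝ} (hε : 0 < ε) (s : ℝ) : 0 < width a t ε s :=
  Real.sqrt_pos.2 (mul_pos hε (ramp_pos _))

lemma width_sq {a t ε s : ℝ} (ha : 0 ≤ a) (hε : 0 < ε) (hs : s ≤ t) :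
    width a t ε s ^ 2 = a * (t - s) + ε := by
  have h : 0 ≤ a * (t - s) / ε := div_nonneg (mul_nonneg ha (by linarith)) hε.le
  rw [width, Real.sq_sqrt (mul_pos hε (ramp_pos _)).le, ramp_of_nonneg h]
  field_simp; ring

lemma width_eq {a t ε s : ℝ} (ha : 0 ≤ a) (hε : 0 < ε) (hs : s ≤ t) :
    width a t ε s = √(a * (t - s) + ε) := by
  rw [← width_sq ha hε hs, Real.sqrt_sq (width_pos hε s).le]

lemma width_self {a t ε : ℝ} : width a t ε t = √ε := by
  simp [width, ramp]

lemma hasDerivAt_width {a t ε : ℝ} (hε : 0 < ε) (s : ℝ) : HasDerivAt (width a t ε)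
    (-a * Real.exp (min (a * (t - s) / ε) 0) / (2 * width a t ε s)) s := by
  have h1 : HasDerivAt (fun s => a * (t - s) / ε) (a * (-1) / ε) s :=
    (((hasDerivAt_id s).const_sub t).const_mul a).div_const ε
  have h2 := (((hasDerivAt_ramp _).comp s h1).const_mul ε).sqrt (mul_pos hε (ramp_pos _)).ne'
  refine h2.congr_deriv ?_
  simp only [width]
  congr 1
  field_simp

lemma continuous_width {a t ε : ℝ} (hε : 0 < ε) : Continuous (width a t ε) :=
  continuous_iff_continuousAt.2 fun s => (hasDerivAt_width hε s).continuousAt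

lemma testFn_kern {a t ε : ℝ} (hε : 0 < ε) (c0 : ℝ) :
    TestFn (fun s z => kern (width a t ε s) (z - c0))
      (fun s z => -(1 / 2) * a * Real.exp (min (a * (t - s) / ε) 0) *
        kern2 (width a t ε s) (z - c0))
      (fun s z => kern1 (width a t ε s) (z - c0))
      (fun s z => kern2 (width a t ε s) (z - c0)) := by
  have hw := continuous_width (a := a) (t := t) hε
  have hne : ∀ s, width a t ε s ≠ 0 := fun s => (width_pos hε s).ne'
  have hc : Continuous fun p : ℝ × ℝ => width a t ε p.1 := hw.comp continuous_fst
  have hy : Continuous fun p : ℝ × ℝ => (p.2 - c0) / width a t ε p.1 :=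
    (by fun_prop : Continuous fun p : ℝ × ℝ => p.2 - c0).div hc fun p => hne _
  have k2 : Continuous fun p : ℝ × ℝ => kern2 (width a t ε p.1) (p.2 - c0) := by
    unfold kern2
    exact Continuous.div (by fun_prop) (by fun_prop) fun p => pow_ne_zero _ (hne _)
  refine ⟨?_, ?_, ?_, k2, fun s z => ?_, fun s z => ?_, fun s z => ?_⟩
  · unfold kern
    exact Continuous.div (by fun_prop) (by fun_prop) fun p => pow_ne_zero _ (hne _)
  · exact Continuous.mul (by fun_prop) k2
  · unfold kern1
    exact Continuous.div (by fun_prop) (by fun_prop) fun p => pow_ne_zero _ (hne _)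
  · have h := (hasDerivAt_kern_W (hne s) (z - c0)).comp s (hasDerivAt_width hε s)
    exact h.congr_deriv (by have := hne s; field_simp)
  · exact ((hasDerivAt_kern_z (hne s) (z - c0)).comp z
      ((hasDerivAt_id z).sub_const c0)).congr_deriv (mul_one _)
  · exact ((hasDerivAt_kern1_z (hne s) (z - c0)).comp z
      ((hasDerivAt_id z).sub_const c0)).congr_deriv (mul_one _)

set_option linter.unusedSectionVars false

namespace KilledDiffusion

variable [m : MeasurableSpace Ω] {P : Measure Ω} [IsProbabilityMeasure P]
  {T α z0 M a0 a1 CA : ℝ} {A B : ℝ → ℝ → ℝ} {Z : ℝ → Ω → ℝ} {τ : Ω → ℝ}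

lemma zero_mem (h : KilledDiffusion P T α z0 M a0 a1 CA A B Z τ) : (0:ℝ) ∈ Icc 0 T :=
  ⟨le_rfl, h.hT.le⟩

lemma M0 (h : KilledDiffusion P T α z0 M a0 a1 CA A B Z τ) : 0 ≤ M :=
  (abs_nonneg _).trans (h.bB 0 h.zero_mem 0)

lemma A_pos (h : KilledDiffusion P T α z0 M a0 a1 CA A B Z τ) {s : ℝ} (hs : s ∈ Icc 0 T) (z : ℝ) :
    0 < A s z := h.a0pos.trans_le (h.lA s hs z)

lemma a1pos (h : KilledDiffusion P T α z0 M a0 a1 CA A B Z τ) : 0 < a1 :=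
  (h.A_pos h.zero_mem 0).trans_le (h.uA 0 h.zero_mem 0)

lemma measurableSet_before (h : KilledDiffusion P T α z0 M a0 a1 CA A B Z τ) (s : ℝ) :
    MeasurableSet {ω | s < τ ω} := measurableSet_lt measurable_const h.τm

/-- A bounded measurable function of `Z s` is integrable. -/
lemma integrable_comp (h : KilledDiffusion P T α z0 M a0 a1 CA A B Z τ) {k : ℝ → ℝ}
    (hk : Measurable k) {C : ℝ} (hC : ∀ z, |k z| ≤ C) (s : ℝ) (S : Set Ω) :
    Integrable (fun ω => k (Z s ω)) (P.restrict S) :=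
  Integrable.of_bound (hk.comp (h.Zm s)).aestronglyMeasurable C
    (Eventually.of_forall fun _ => hC _)

/-- Dynkin's formula for a kernel frozen at the terminal boundary point `(t, 0)`: only the drift
and the oscillation of the diffusion coefficient contribute to the integrand. -/
lemma dyn_kern (h : KilledDiffusion P T α z0 M a0 a1 CA A B Z τ) {t ε u : ℝ} (ht : t ∈ Icc 0 T)
    (hε : 0 < ε) (c0 : ℝ) (hu : u ∈ Icc 0 t) :
    ∫ ω, kern (width (A t 0) t ε (min u (τ ω))) (Z (min u (τ ω)) ω - c0) ∂P =
      kern (width (A t 0) t ε 0) (z0 - c0) +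
      ∫ s in (0:ℝ)..u, ∫ ω in {ω | s < τ ω}, (B s (Z s ω) * kern1 (width (A t 0) t ε s) (Z s ω - c0)
        + (1 / 2) * (A s (Z s ω) - A t 0) * kern2 (width (A t 0) t ε s) (Z s ω - c0)) ∂P := by
  set a := A t 0 with ha
  have ha0 : 0 < a := h.A_pos ht 0
  have hw := continuous_width (a := a) (t := t) hε
  obtain ⟨x, hx, hmin⟩ := (isCompact_Icc (a := (0:ℝ)) (b := T)).exists_isMinOn
    ⟨0, h.zero_mem⟩ hw.continuousOn
  set b := width a t ε x
  have hb : 0 < b := width_pos hε x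
  have hbs : ∀ s ∈ Icc (0:ℝ) T, b ≤ width a t ε s := fun s hs => hmin hs
  have hE : ∀ y : ℝ, Real.exp (-y ^ 2 / 4) ≤ 1 := exp_neg_le_one
  let C : ℝ := 1 / b ^ 2 + 4 / b ^ 3 + 48 / b ^ 4 + a * (48 / b ^ 4)
  have hd := h.dyn _ _ _ _ (testFn_kern (a := a) (t := t) hε c0) C (fun s hs z => by
    have hbw := hbs s hs
    have hW := width_pos (a := a) (t := t) hε s
    have q0 : |kern (width a t ε s) (z - c0)| ≤ 1 / b ^ 2 := by
      refine (abs_kern_le hW _).trans ?_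
      calc _ ≤ 1 / b ^ 2 * 1 := by gcongr; exact hE _
        _ = _ := mul_one _
    have q1 : |kern1 (width a t ε s) (z - c0)| ≤ 4 / b ^ 3 := by
      refine (abs_kern1_le hW _).trans ?_
      calc _ ≤ 4 / b ^ 3 * 1 := by gcongr; exact hE _
        _ = _ := mul_one _
    have q2 : |kern2 (width a t ε s) (z - c0)| ≤ 48 / b ^ 4 := by
      refine (abs_kern2_le' hW _).trans ?_
      gcongr
    have q3 : |-(1 / 2) * a * Real.exp (min (a * (t - s) / ε) 0) *
        kern2 (width a t ε s) (z - c0)| ≤ a * (48 / b ^ 4) := by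
      rw [abs_mul]
      refine mul_le_mul ?_ q2 (abs_nonneg _) ha0.le
      rw [abs_mul, abs_mul, abs_of_pos ha0, abs_of_pos (Real.exp_pos _), abs_neg,
        abs_of_pos (by norm_num : (0:ℝ) < 1 / 2)]
      have : Real.exp (min (a * (t - s) / ε) 0) ≤ 1 := Real.exp_le_one_iff.2 (min_le_right _ _)
      calc 1 / 2 * a * Real.exp (min (a * (t - s) / ε) 0) ≤ 1 / 2 * a * 1 := by gcongr
        _ ≤ a := by linarith
    have p0 : 0 ≤ 1 / b ^ 2 := by positivity
    have p1 : 0 ≤ 4 / b ^ 3 := by positivity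
    have p2 : 0 ≤ 48 / b ^ 4 := by positivity
    have p3 : 0 ≤ a * (48 / b ^ 4) := by positivity
    simp only [C]
    refine ⟨?_, ?_, ?_, ?_⟩ <;> linarith) u ⟨hu.1, hu.2.trans ht.2⟩
  rw [hd]
  congr 1
  apply intervalIntegral.integral_congr
  intro s hs
  rw [uIcc_of_le hu.1] at hs
  have : 0 ≤ a * (t - s) / ε := div_nonneg (mul_nonneg ha0.le (by linarith [hs.2, hu.2])) hε.le
  simp only
  congr 1
  ext ω
  rw [min_eq_right this, Real.exp_zero]
  ring

/-- The mass near the boundary at scale `r`, measured by a Gaussian, of the process killed at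
`τ`. -/
def mass (_h : KilledDiffusion P T α z0 M a0 a1 CA A B Z τ) (s r : ℝ) : ℝ :=
  ∫ ω in {ω | s < τ ω}, Real.exp (-(Z s ω / r) ^ 2 / 4) ∂P

lemma integrable_mass (h : KilledDiffusion P T α z0 M a0 a1 CA A B Z τ) (s r : ℝ) (S : Set Ω) :
    Integrable (fun ω => Real.exp (-(Z s ω / r) ^ 2 / 4)) (P.restrict S) :=
  h.integrable_comp (k := fun z => Real.exp (-(z / r) ^ 2 / 4)) (by fun_prop) (C := 1)
    (fun z => by rw [abs_of_pos (Real.exp_pos _)]; exact exp_neg_le_one _) s S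

lemma mass_nonneg (h : KilledDiffusion P T α z0 M a0 a1 CA A B Z τ) (s r : ℝ) : 0 ≤ h.mass s r :=
  integral_nonneg fun _ => (Real.exp_pos _).le

lemma mass_le_one (h : KilledDiffusion P T α z0 M a0 a1 CA A B Z τ) (s r : ℝ) : h.mass s r ≤ 1 := by
  have h1 : h.mass s r ≤ ∫ ω in {ω | s < τ ω}, (1:ℝ) ∂P :=
    integral_mono (h.integrable_mass s r _) (integrable_const _) fun ω => exp_neg_le_one _
  refine h1.trans ?_
  simp

/-- A set integral over `{s < τ}` is controlled by `mass` when the integrand is Gaussian-bounded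
on the negative half-line. -/
lemma abs_setIntegral_le_mass (h : KilledDiffusion P T α z0 M a0 a1 CA A B Z τ) {s r C : ℝ}
    (hs : 0 ≤ s) {k : ℝ → ℝ}
    (hk : ∀ z < 0, |k z| ≤ C * Real.exp (-(z / r) ^ 2 / 4)) :
    |∫ ω in {ω | s < τ ω}, k (Z s ω) ∂P| ≤ C * h.mass s r := by
  rw [mass, ← integral_const_mul, ← Real.norm_eq_abs]
  refine norm_integral_le_of_norm_le ((h.integrable_mass s r _).const_mul C) ?_
  refine (ae_restrict_iff' (h.measurableSet_before s)).2 (Eventually.of_forall fun ω hω => ?_)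
  exact hk _ (h.neg ω s hs hω)

/-- The constant in the bound on the Dynkin integrand of the kernel. -/
def Jconst (_h : KilledDiffusion P T α z0 M a0 a1 CA A B Z τ) : ℝ :=
  4 * M * √(a1 * T + 1) ^ (1 - α) + 24 * CA * (1 + a0⁻¹ ^ (α / 2))

lemma Jconst_nonneg (h : KilledDiffusion P T α z0 M a0 a1 CA A B Z τ) : 0 ≤ h.Jconst := by
  have := h.M0
  have := h.CA0
  have := h.a0pos
  unfold Jconst; positivity

lemma abs_J_le (h : KilledDiffusion P T α z0 M a0 a1 CA A B Z τ) {t ε s c0 : ℝ} (ht : t ∈ Icc 0 T)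
    (hε : 0 < ε) (hε1 : ε ≤ 1) (hc0 : 0 ≤ c0) (hs : s ∈ Icc 0 t) :
    |∫ ω in {ω | s < τ ω}, (B s (Z s ω) * kern1 (width (A t 0) t ε s) (Z s ω - c0)
        + (1 / 2) * (A s (Z s ω) - A t 0) * kern2 (width (A t 0) t ε s) (Z s ω - c0)) ∂P| ≤
      h.Jconst * width (A t 0) t ε s ^ (α - 4) * h.mass s (width (A t 0) t ε s) := by
  set a := A t 0 with ha
  have ha0 : 0 < a := h.A_pos ht 0
  have hsT : s ∈ Icc 0 T := ⟨hs.1, hs.2.trans ht.2⟩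
  have hW := width_pos (a := a) (t := t) hε s
  have hWsq := width_sq ha0.le hε hs.2
  set W := width a t ε s
  have hts : 0 ≤ t - s := by linarith [hs.2]
  refine h.abs_setIntegral_le_mass hs.1 (k := fun z => B s z * kern1 W (z - c0)
        + (1 / 2) * (A s z - a) * kern2 W (z - c0)) fun z hz => ?_
  have hα0 := h.α0
  have hα1 := h.α1
  have hM0 := h.M0
  have hCA0 := h.CA0
  have ha0' := h.a0pos
  have hWm : W ≤ √(a1 * T + 1) := by
    apply Real.le_sqrt_of_sq_le
    rw [hWsq]
    have h1 : a * (t - s) ≤ a1 * T := by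
      have := h.uA t ht 0
      have := h.a1pos
      have h2 : t - s ≤ T := by linarith [ht.2, hs.1]
      gcongr
    linarith
  have hE : Real.exp (-((z - c0) / W) ^ 2 / 4) ≤ Real.exp (-(z / W) ^ 2 / 4) := by
    apply Real.exp_le_exp.2
    have : (z / W) ^ 2 ≤ ((z - c0) / W) ^ 2 := by
      rw [div_pow, div_pow]; gcongr ?_ / _; nlinarith
    linarith
  have e3 : 1 / W ^ 3 = W ^ (1 - α) * W ^ (α - 4) := by
    rw [← Real.rpow_add hW, show 1 - α + (α - 4) = -(3:ℕ) by push_cast; ring,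
      Real.rpow_neg hW.le, Real.rpow_natCast, one_div]
  have e4 : W ^ α / W ^ 4 = W ^ (α - 4) := by
    rw [Real.rpow_sub hW]; norm_cast
  set E := Real.exp (-(z / W) ^ 2 / 4)
  have hE0 : 0 < E := Real.exp_pos _
  have b1 : |B s z * kern1 W (z - c0)| ≤ 4 * M * √(a1 * T + 1) ^ (1 - α) * W ^ (α - 4) * E := by
    rw [abs_mul]
    calc _ ≤ M * (4 / W ^ 3 * Real.exp (-((z - c0) / W) ^ 2 / 4)) := by
          gcongr
          · exact h.bB s hsT z
          · exact abs_kern1_le hW _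
      _ ≤ M * (4 / W ^ 3 * E) := by gcongr
      _ = 4 * M * (1 / W ^ 3) * E := by ring
      _ = 4 * M * W ^ (1 - α) * W ^ (α - 4) * E := by rw [e3]; ring
      _ ≤ _ := by gcongr
  have hosc : |A s z - a| ≤ CA * ((1 + a0⁻¹ ^ (α / 2)) * W ^ α * (1 + |(z - c0) / W|)) := by
    refine (h.hA s hsT t ht z).trans (mul_le_mul_of_nonneg_left ?_ hCA0)
    have h1 : |z| ^ α ≤ W ^ α * (1 + |(z - c0) / W|) := by
      have : |z| ≤ W * |(z - c0) / W| := by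
        rw [abs_div, abs_of_pos hW, mul_div_cancel₀ _ hW.ne', abs_of_neg hz,
          abs_of_nonpos (by linarith)]
        linarith
      calc |z| ^ α ≤ (W * |(z - c0) / W|) ^ α := Real.rpow_le_rpow (abs_nonneg _) this hα0.le
        _ = W ^ α * |(z - c0) / W| ^ α := Real.mul_rpow hW.le (abs_nonneg _)
        _ ≤ W ^ α * (1 + |(z - c0) / W|) := by
          gcongr
          have h3 : |(z - c0) / W| ^ α ≤ (1 + |(z - c0) / W|) ^ α :=
            Real.rpow_le_rpow (abs_nonneg _) (by linarith) hα0.le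
          refine h3.trans ?_
          conv_rhs => rw [← Real.rpow_one (1 + |(z - c0) / W|)]
          exact Real.rpow_le_rpow_of_exponent_le (by linarith [abs_nonneg ((z - c0) / W)]) hα1.le
    have h2 : |t - s| ^ (α / 2) ≤ a0⁻¹ ^ (α / 2) * W ^ α := by
      have : |t - s| ≤ a0⁻¹ * W ^ 2 := by
        rw [abs_of_nonneg hts, inv_mul_eq_div, le_div_iff₀ ha0', hWsq]
        have := mul_le_mul_of_nonneg_right (h.lA t ht 0) hts
        linarith
      calc _ ≤ (a0⁻¹ * W ^ 2) ^ (α / 2) := Real.rpow_le_rpow (abs_nonneg _) this (by linarith)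
        _ = _ := by
          rw [Real.mul_rpow (by positivity) (by positivity), ← Real.rpow_natCast,
            ← Real.rpow_mul hW.le]
          congr 2; push_cast; ring
    have h4 : a0⁻¹ ^ (α / 2) * W ^ α ≤ a0⁻¹ ^ (α / 2) * W ^ α * (1 + |(z - c0) / W|) := by
      apply le_mul_of_one_le_right (by positivity); linarith [abs_nonneg ((z - c0) / W)]
    calc _ ≤ W ^ α * (1 + |(z - c0) / W|) + a0⁻¹ ^ (α / 2) * W ^ α * (1 + |(z - c0) / W|) := by
          linarith
      _ = _ := by ring
  have b2 : |1 / 2 * (A s z - a) * kern2 W (z - c0)| ≤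
      24 * CA * (1 + a0⁻¹ ^ (α / 2)) * W ^ (α - 4) * E := by
    rw [abs_mul, abs_mul, abs_of_pos (by norm_num : (0:ℝ) < 1 / 2)]
    calc _ ≤ 1 / 2 * (CA * ((1 + a0⁻¹ ^ (α / 2)) * W ^ α * (1 + |(z - c0) / W|))) *
          |kern2 W (z - c0)| := by gcongr
      _ = 1 / 2 * CA * (1 + a0⁻¹ ^ (α / 2)) * W ^ α *
          (|kern2 W (z - c0)| * (1 + |(z - c0) / W|)) := by ring
      _ ≤ 1 / 2 * CA * (1 + a0⁻¹ ^ (α / 2)) * W ^ α *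
          (48 / W ^ 4 * Real.exp (-((z - c0) / W) ^ 2 / 4)) :=
        mul_le_mul_of_nonneg_left (abs_kern2_le hW _) (by positivity)
      _ ≤ 1 / 2 * CA * (1 + a0⁻¹ ^ (α / 2)) * W ^ α * (48 / W ^ 4 * E) := by gcongr
      _ = 24 * CA * (1 + a0⁻¹ ^ (α / 2)) * (W ^ α / W ^ 4) * E := by ring
      _ = _ := by rw [e4]
  calc _ ≤ _ := abs_add_le _ _
    _ ≤ _ := add_le_add b1 b2
    _ = _ := by unfold Jconst; ring

end KilledDiffusion

/-! ### Quadratic decay of the killed mass at the boundary -/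

lemma kern_lower {r z : ℝ} (hr : 0 < r) (hz : z ≤ 0) :
    Real.exp (-1) / (4 * r ^ 2) * Real.exp (-(z / r) ^ 2 / 4) ≤ kern (2 * r) (z - 2 * r) := by
  unfold kern
  have h1 : Real.exp (-1) * Real.exp (-(z / r) ^ 2 / 4) ≤
      Real.exp (-((z - 2 * r) / (2 * r)) ^ 2 / 2) := by
    rw [← Real.exp_add]
    apply Real.exp_le_exp.2
    have : (z - 2 * r) / (2 * r) = (z / r) / 2 - 1 := by field_simp
    rw [this]
    nlinarith [sq_nonneg (z / r / 2 + 1)]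
  have h2 : 1 / (4 * r ^ 2) ≤ -(z - 2 * r) / (2 * r) ^ 3 := by
    have : 1 / (4 * r ^ 2) = 2 * r / (2 * r) ^ 3 := by field_simp; norm_num
    rw [this]; gcongr; linarith
  calc _ = Real.exp (-1) * Real.exp (-(z / r) ^ 2 / 4) * (1 / (4 * r ^ 2)) := by ring
    _ ≤ Real.exp (-((z - 2 * r) / (2 * r)) ^ 2 / 2) * (-(z - 2 * r) / (2 * r) ^ 3) := by
      gcongr
    _ = _ := by ring

lemma abs_kern_le_far {W z : ℝ} (hW : 0 < W) (hz : z ≠ 0) : |kern W z| ≤ 4 / z ^ 2 := by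
  refine (abs_kern_le hW z).trans ?_
  have h1 : (z / W) ^ 2 / 4 * Real.exp (-(z / W) ^ 2 / 4) ≤ 1 := by
    have h2 := Real.add_one_le_exp ((z / W) ^ 2 / 4)
    rw [show -(z / W) ^ 2 / 4 = -((z / W) ^ 2 / 4) by ring, Real.exp_neg, ← div_eq_mul_inv,
      div_le_one (Real.exp_pos _)]
    linarith
  have hz2 : 0 < z ^ 2 := by positivity
  calc _ = 4 / z ^ 2 * ((z / W) ^ 2 / 4 * Real.exp (-(z / W) ^ 2 / 4)) := by field_simp
    _ ≤ 4 / z ^ 2 * 1 := by gcongr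
    _ = _ := mul_one _

namespace KilledDiffusion

variable [m : MeasurableSpace Ω] {P : Measure Ω} [IsProbabilityMeasure P]
  {T α z0 M a0 a1 CA : ℝ} {A B : ℝ → ℝ → ℝ} {Z : ℝ → Ω → ℝ} {τ : Ω → ℝ}

lemma stopped_nonpos (h : KilledDiffusion P T α z0 M a0 a1 CA A B Z τ) {t : ℝ} (ht : t ∈ Ico 0 T)
    (ω : Ω) : Z (min t (τ ω)) ω ≤ 0 := by
  rcases lt_or_ge t (τ ω) with h1 | h1
  · rw [min_eq_left h1.le]; exact (h.neg ω t ht.1 h1).le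
  · rw [min_eq_right h1, h.zero ω (h1.trans_lt ht.2)]

/-- Since the kernel is frozen at the boundary point `(t, 0)`, a bound `mass ≤ N r ^ (2 - α/2)`
up to time `t` gives back a bound of order `r ^ 2` at time `t`. -/
lemma mass_step (h : KilledDiffusion P T α z0 M a0 a1 CA A B Z τ) :
    ∃ K : ℝ, 0 < K ∧ ∀ t ∈ Ico 0 T, ∀ r : ℝ, 0 < r → r ≤ 1 / 2 → ∀ N : ℝ, 0 ≤ N →
      (∀ s ∈ Icc 0 t, ∀ r', r ≤ r' → h.mass s r' ≤ N * r' ^ (2 - α / 2)) →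
      h.mass t r ≤ K * r ^ 2 * (1 + N) := by
  have hα0 := h.α0
  have ha0 := h.a0pos
  have hz0 := h.z0neg
  have hJ := h.Jconst_nonneg
  have hT := h.hT
  set D : ℝ := a0 ^ (-1 + α / 4) * (T ^ (α / 4) / (α / 4))
  have hD : 0 ≤ D := by positivity
  refine ⟨4 * Real.exp 1 * (4 / z0 ^ 2 + h.Jconst * D), by
    have : 0 < 4 / z0 ^ 2 := by have := hz0.ne; positivity
    positivity, ?_⟩
  intro t ht r hr hr2 N hN hmass
  have htT : t ∈ Icc 0 T := ⟨ht.1, ht.2.le⟩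
  have hε : 0 < (2 * r) ^ 2 := by positivity
  have hε1 : (2 * r) ^ 2 ≤ 1 := by nlinarith
  have hdyn := h.dyn_kern htT hε (2 * r) (u := t) ⟨ht.1, le_rfl⟩
  have hapos := h.A_pos htT 0
  have haA := h.lA t htT 0
  -- the lower bound
  have hlow : Real.exp (-1) / (4 * r ^ 2) * h.mass t r ≤
      ∫ ω, kern (width (A t 0) t ((2 * r) ^ 2) (min t (τ ω)))
        (Z (min t (τ ω)) ω - 2 * r) ∂P := by
    have hW := fun s => width_pos (a := A t 0) (t := t) hε s
    have hkc : Continuous (fun p : ℝ × ℝ =>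
        kern (width (A t 0) t ((2 * r) ^ 2) p.1) (p.2 - 2 * r)) := (testFn_kern hε (2 * r)).cF
    have hinteg : Integrable (fun ω => kern (width (A t 0) t ((2 * r) ^ 2) (min t (τ ω)))
        (Z (min t (τ ω)) ω - 2 * r)) P := by
      have hZ : Measurable (fun ω => Z (min t (τ ω)) ω) :=
        (measurable_uncurry_of_continuous_of_measurable (u := fun s ω => Z s ω) h.Zc h.Zm).comp
          ((measurable_const.min h.τm).prodMk measurable_id)
      refine Integrable.of_bound
        ((hkc.measurable.comp ((measurable_const.min h.τm).prodMk hZ)).aestronglyMeasurable)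
        (4 / (2 * r) ^ 2) (Eventually.of_forall fun ω => ?_)
      have hneg := h.stopped_nonpos ht ω
      refine (abs_kern_le_far (hW _) (by linarith : Z (min t (τ ω)) ω - 2 * r < 0).ne).trans ?_
      gcongr 4 / ?_
      nlinarith
    rw [mass, ← integral_const_mul]
    have hnn : ∀ ω, 0 ≤ kern (width (A t 0) t ((2 * r) ^ 2) (min t (τ ω)))
        (Z (min t (τ ω)) ω - 2 * r) := fun ω => by
      have hneg := h.stopped_nonpos ht ω
      have := hW (min t (τ ω))
      unfold kern
      have : 0 ≤ -(Z (min t (τ ω)) ω - 2 * r) := by linarith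
      positivity
    refine le_trans ?_ (setIntegral_le_integral (s := {ω | t < τ ω}) hinteg
      (Eventually.of_forall hnn))
    refine setIntegral_mono_on ((h.integrable_mass t r _).const_mul _) hinteg.integrableOn
      (h.measurableSet_before t) fun ω hω => ?_
    have hω' : t < τ ω := hω
    rw [min_eq_left hω'.le, width_self, Real.sqrt_sq (by positivity)]
    exact kern_lower hr (h.neg ω t ht.1 hω').le
  have hinit : kern (width (A t 0) t ((2 * r) ^ 2) 0) (z0 - 2 * r) ≤ 4 / z0 ^ 2 := by
    refine (le_abs_self _).trans ((abs_kern_le_far (width_pos hε _) (by linarith :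
      z0 - 2 * r < 0).ne).trans ?_)
    have := hz0.ne
    gcongr 4 / ?_
    nlinarith
  have hJint : ‖∫ s in (0:ℝ)..t, ∫ ω in {ω | s < τ ω}, (B s (Z s ω) *
      kern1 (width (A t 0) t ((2 * r) ^ 2) s) (Z s ω - 2 * r) + (1 / 2) * (A s (Z s ω) - A t 0) *
      kern2 (width (A t 0) t ((2 * r) ^ 2) s) (Z s ω - 2 * r)) ∂P‖ ≤
      ∫ s in (0:ℝ)..t, h.Jconst * N * a0 ^ (-1 + α / 4) * (t - s) ^ (-1 + α / 4) := by
    refine intervalIntegral.norm_integral_le_of_norm_le ht.1 ?_ ?_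
    · have hne : ∀ᵐ s : ℝ, s ≠ t := by simp [ae_iff, measure_singleton]
      filter_upwards [hne] with s hst hs
      have hs' : s ∈ Icc 0 t := ⟨hs.1.le, hs.2⟩
      have hlt : 0 < t - s := sub_pos.2 (lt_of_le_of_ne hs.2 hst)
      rw [Real.norm_eq_abs]
      refine (h.abs_J_le htT hε hε1 (by positivity) hs').trans ?_
      have hWsq := width_sq hapos.le hε hs.2
      have hWp := width_pos (a := A t 0) (t := t) hε s
      set W := width (A t 0) t ((2 * r) ^ 2) s
      have hrW : r ≤ W := by
        have : (2 * r) ^ 2 ≤ W ^ 2 := by rw [hWsq]; nlinarith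
        have := (pow_le_pow_iff_left₀ (by positivity) hWp.le two_ne_zero).1 this
        linarith
      calc h.Jconst * W ^ (α - 4) * h.mass s W
          ≤ h.Jconst * W ^ (α - 4) * (N * W ^ (2 - α / 2)) := by gcongr; exact hmass s hs' W hrW
        _ = h.Jconst * N * (W ^ 2) ^ (-1 + α / 4) := by
          rw [← Real.rpow_natCast W 2, ← Real.rpow_mul hWp.le,
            show ((2:ℕ):ℝ) * (-1 + α / 4) = (α - 4) + (2 - α / 2) by push_cast; ring,
            Real.rpow_add hWp]
          ring
        _ ≤ h.Jconst * N * (a0 * (t - s)) ^ (-1 + α / 4) := by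
          refine mul_le_mul_of_nonneg_left (Real.rpow_le_rpow_of_nonpos (by positivity) ?_
            (by linarith [h.α1])) (by positivity)
          rw [hWsq]
          have := mul_le_mul_of_nonneg_right haA hlt.le
          linarith
        _ = _ := by rw [Real.mul_rpow ha0.le hlt.le]; ring
    · apply IntervalIntegrable.const_mul
      have := (intervalIntegral.intervalIntegrable_rpow' (a := t) (b := 0)
        (r := -1 + α / 4) (by linarith)).comp_sub_left t
      simpa using this
  have hval : ∫ s in (0:ℝ)..t, h.Jconst * N * a0 ^ (-1 + α / 4) * (t - s) ^ (-1 + α / 4) ≤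
      h.Jconst * D * N := by
    rw [intervalIntegral.integral_const_mul,
      intervalIntegral.integral_comp_sub_left (fun x => x ^ (-1 + α / 4)) t, sub_self, sub_zero,
      integral_rpow (Or.inl (by linarith)),
      show -1 + α / 4 + 1 = α / 4 by ring, Real.zero_rpow (by positivity), sub_zero]
    have : t ^ (α / 4) ≤ T ^ (α / 4) := Real.rpow_le_rpow ht.1 ht.2.le (by positivity)
    calc _ ≤ h.Jconst * N * a0 ^ (-1 + α / 4) * (T ^ (α / 4) / (α / 4)) := by gcongr
      _ = _ := by simp only [D]; ring
  have hz : 0 ≤ 4 / z0 ^ 2 := by positivity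
  have hfin : Real.exp (-1) / (4 * r ^ 2) * h.mass t r ≤
      (4 / z0 ^ 2 + h.Jconst * D) * (1 + N) := by
    have h1 := (le_abs_self _).trans ((Real.norm_eq_abs _ ▸ hJint).trans hval)
    have h2 : 0 ≤ 4 / z0 ^ 2 * N := by positivity
    have h3 : 0 ≤ h.Jconst * D := by positivity
    nlinarith [hdyn, hinit, hlow]
  have : h.mass t r = 4 * Real.exp 1 * r ^ 2 * (Real.exp (-1) / (4 * r ^ 2) * h.mass t r) := by
    rw [Real.exp_neg]; field_simp
  rw [this]
  calc _ ≤ 4 * Real.exp 1 * r ^ 2 * ((4 / z0 ^ 2 + h.Jconst * D) * (1 + N)) := by gcongr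
    _ = _ := by ring

/-- The process killed at `τ` puts mass of order at most `r ^ 2` within distance `r` of the
boundary, uniformly in time. -/
lemma mass_bound (h : KilledDiffusion P T α z0 M a0 a1 CA A B Z τ) :
    ∃ C : ℝ, 0 < C ∧ ∀ t ∈ Ico 0 T, ∀ r : ℝ, 0 < r → h.mass t r ≤ C * r ^ 2 := by
  obtain ⟨K, hK, hstep⟩ := h.mass_step
  have hα0 := h.α0
  have hα1 := h.α1
  obtain ⟨r0, hr0, hr0h, hr0K⟩ : ∃ r0 : ℝ, 0 < r0 ∧ r0 ≤ 1 / 2 ∧ K * r0 ^ (α / 2) ≤ 1 / 2 := by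
    have h1 : Tendsto (fun r : ℝ => K * r ^ (α / 2)) (𝓝 0) (𝓝 (K * 0 ^ (α / 2))) :=
      ((Real.continuousAt_rpow_const _ _ (Or.inr (by positivity))).tendsto).const_mul K
    rw [Real.zero_rpow (by positivity), mul_zero] at h1
    have h2 := (h1.eventually_le_const (by norm_num : (0:ℝ) < 1 / 2))
    obtain ⟨δ, hδ, hball⟩ := Metric.eventually_nhds_iff.1 h2
    refine ⟨min (δ / 2) (1 / 2), by positivity, min_le_right _ _, hball ?_⟩
    rw [Real.dist_eq, sub_zero, abs_of_pos (by positivity)]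
    exact (min_le_left _ _).trans_lt (by linarith)
  set N0 : ℝ := max 1 (r0 ^ (-(2 - α / 2)))
  have hN1 : 1 ≤ N0 := le_max_left _ _
  have key : ∀ η : ℝ, 0 < η → ∀ s ∈ Ico 0 T, ∀ r, η ≤ r → h.mass s r ≤ N0 * r ^ (2 - α / 2) := by
    intro η hη
    set δ : ℝ := η ^ (-(2 - α / 2))
    have hδ : 0 < δ := by positivity
    -- the map `N ↦ (1 + N) / 2` contracts any admissible constant towards `N0`
    have hn : ∀ n : ℕ, ∀ s ∈ Ico 0 T, ∀ r, η ≤ r →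
        h.mass s r ≤ (N0 + δ * (1 / 2) ^ n) * r ^ (2 - α / 2) := by
      intro n
      induction n with
      | zero =>
        intro s _ r hr
        have : 1 ≤ δ * r ^ (2 - α / 2) := by
          calc (1:ℝ) = δ * η ^ (2 - α / 2) := by
                simp only [δ]; rw [← Real.rpow_add hη]; simp
            _ ≤ _ := by
              gcongr; linarith
        have h2 : 0 ≤ N0 * r ^ (2 - α / 2) := by
          have := hη.trans_le hr; positivity
        have := h.mass_le_one s r
        rw [pow_zero, mul_one, add_mul]; linarith
      | succ n ih =>
        intro s hs r hr
        have hrp := hη.trans_le hr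
        have hβ : 0 < r ^ (2 - α / 2) := by positivity
        have hd : 0 < δ * (1 / 2) ^ (n + 1) := by positivity
        rcases le_or_gt r r0 with h1 | h1
        · have h3 := hstep s hs r hrp (h1.trans hr0h) (N0 + δ * (1 / 2) ^ n) (by positivity)
            (fun u hu r' hr' => ih u ⟨hu.1, hu.2.trans_lt hs.2⟩ r' (hr.trans hr'))
          refine h3.trans ?_
          have e : r ^ 2 = r ^ (α / 2) * r ^ (2 - α / 2) := by
            rw [← Real.rpow_add hrp]; norm_num
          have h4 : K * r ^ (α / 2) ≤ 1 / 2 := by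
            refine le_trans ?_ hr0K
            gcongr
          calc _ = K * r ^ (α / 2) * ((1 + (N0 + δ * (1 / 2) ^ n)) * r ^ (2 - α / 2)) := by
                rw [e]; ring
            _ ≤ 1 / 2 * ((1 + (N0 + δ * (1 / 2) ^ n)) * r ^ (2 - α / 2)) := by gcongr
            _ = ((1 + N0) / 2 + δ * (1 / 2) ^ (n + 1)) * r ^ (2 - α / 2) := by ring
            _ ≤ _ := by gcongr; linarith
        · have h5 : 1 ≤ N0 * r ^ (2 - α / 2) := by
            calc (1:ℝ) = r0 ^ (-(2 - α / 2)) * r0 ^ (2 - α / 2) := by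
                  rw [← Real.rpow_add hr0]; simp
              _ ≤ _ := by
                gcongr
                · exact le_max_right _ _
                · linarith
          have := h.mass_le_one s r
          nlinarith
    intro s hs r hr
    have hlim : Tendsto (fun n : ℕ => (N0 + δ * (1 / 2) ^ n) * r ^ (2 - α / 2)) atTop
        (𝓝 ((N0 + δ * 0) * r ^ (2 - α / 2))) :=
      (((tendsto_pow_atTop_nhds_zero_of_lt_one (by norm_num) (by norm_num)).const_mul
        δ).const_add N0).mul_const _
    rw [mul_zero, add_zero] at hlim
    exact ge_of_tendsto' hlim fun n => hn n s hs r hr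
  refine ⟨K * (1 + N0) + 4, by positivity, fun t ht r hr => ?_⟩
  rcases le_or_gt r (1 / 2) with h1 | h1
  · have := hstep t ht r hr h1 N0 (by positivity) fun s hs r' hr' =>
      key r hr s ⟨hs.1, hs.2.trans_lt ht.2⟩ r' hr'
    nlinarith [sq_nonneg r]
  · have := h.mass_le_one t r
    have : 0 ≤ K * (1 + N0) := by positivity
    nlinarith [sq_nonneg r]

end KilledDiffusion

/-! ### Positivity of the survival probability -/

lemma hasDerivAt_posPart_pow (n : ℕ) (x : ℝ) :
    HasDerivAt (fun x : ℝ => (max x 0) ^ (n + 2)) ((n + 2 : ℕ) * (max x 0) ^ (n + 1)) x := by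
  rcases lt_trichotomy x 0 with h | h | h
  · rw [max_eq_right h.le, zero_pow (by omega), mul_zero]
    refine (hasDerivAt_const x (0:ℝ)).congr_of_eventuallyEq ?_
    filter_upwards [Iio_mem_nhds h] with y hy
    rw [max_eq_right (le_of_lt hy), zero_pow (by omega)]
  · subst h
    rw [hasDerivAt_iff_tendsto_slope, max_self, zero_pow (by omega), mul_zero]
    have h1 : Tendsto (fun x : ℝ => (max x 0) ^ (n + 1)) (𝓝[≠] 0) (𝓝 0) := by
      have : Continuous (fun x : ℝ => (max x 0) ^ (n + 1)) := by fun_prop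
      have h2 := this.tendsto 0
      simp only [max_self, zero_pow (Nat.succ_ne_zero n)] at h2
      exact h2.mono_left nhdsWithin_le_nhds
    refine h1.congr' ?_
    filter_upwards [self_mem_nhdsWithin] with y hy
    have hy : y ≠ 0 := hy
    rw [slope_def_field, max_self, zero_pow (by omega), sub_zero, sub_zero]
    rcases le_or_gt y 0 with h3 | h3
    · simp [max_eq_right h3]
    · rw [max_eq_left h3.le]; field_simp; ring
  · rw [max_eq_left h.le]
    refine (hasDerivAt_pow (n + 2) x).congr_of_eventuallyEq ?_
    filter_upwards [Ioi_mem_nhds h] with y hy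
    rw [max_eq_left (le_of_lt hy)]

lemma bump_bound {R y : ℝ} (hR : 0 < R) : 0 ≤ max (R ^ 2 - y ^ 2) 0 ∧
    max (R ^ 2 - y ^ 2) 0 ≤ R ^ 2 ∧ |y| * max (R ^ 2 - y ^ 2) 0 ≤ R ^ 3 ∧
    y ^ 2 * max (R ^ 2 - y ^ 2) 0 ≤ R ^ 4 := by
  rcases le_or_gt (R ^ 2 - y ^ 2) 0 with h | h
  · rw [max_eq_right h, mul_zero, mul_zero]
    exact ⟨le_rfl, by positivity, by positivity, by positivity⟩
  · rw [max_eq_left h.le]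
    have hy : |y| ≤ R := abs_le_of_sq_le_sq (by linarith) hR.le
    have h2 : R ^ 2 - y ^ 2 ≤ R ^ 2 := by nlinarith [sq_nonneg y]
    refine ⟨h.le, h2, ?_, ?_⟩
    · calc |y| * (R ^ 2 - y ^ 2) ≤ R * R ^ 2 := by gcongr
        _ = _ := by ring
    · calc y ^ 2 * (R ^ 2 - y ^ 2) ≤ R ^ 2 * R ^ 2 := by gcongr ?_ * ?_; linarith
        _ = _ := by ring

/-- A bump function, with exponentially growing amplitude, supported in `|z - z0| ≤ R`. -/
lemma testFn_bump (l z0 R : ℝ) :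
    TestFn (fun s z => Real.exp (l * s) * (max (R ^ 2 - (z - z0) ^ 2) 0) ^ 3)
      (fun s z => l * (Real.exp (l * s) * (max (R ^ 2 - (z - z0) ^ 2) 0) ^ 3))
      (fun s z => Real.exp (l * s) * (-6 * (z - z0) * (max (R ^ 2 - (z - z0) ^ 2) 0) ^ 2))
      (fun s z => Real.exp (l * s) * (24 * (z - z0) ^ 2 * max (R ^ 2 - (z - z0) ^ 2) 0
        - 6 * (max (R ^ 2 - (z - z0) ^ 2) 0) ^ 2)) where
  cF := by fun_prop
  cFs := by fun_prop
  cFz := by fun_prop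
  cFzz := by fun_prop
  ds := fun s z => by
    have := ((hasDerivAt_id s).const_mul l).exp.mul_const ((max (R ^ 2 - (z - z0) ^ 2) 0) ^ 3)
    exact this.congr_deriv (by simp only [id]; ring)
  dz := fun s z => by
    have h1 : HasDerivAt (fun z : ℝ => R ^ 2 - (z - z0) ^ 2) (-2 * (z - z0)) z :=
      ((((hasDerivAt_id z).sub_const z0).pow 2).const_sub (R ^ 2)).congr_deriv (by simp)
    have := (((hasDerivAt_posPart_pow 1 _).comp z h1)).const_mul (Real.exp (l * s))
    exact this.congr_deriv (by push_cast; ring)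
  dzz := fun s z => by
    have h0 : HasDerivAt (fun z : ℝ => -6 * (z - z0)) (-6) z :=
      (((hasDerivAt_id z).sub_const z0).const_mul (-6)).congr_deriv (by simp)
    have h1 : HasDerivAt (fun z : ℝ => R ^ 2 - (z - z0) ^ 2) (-2 * (z - z0)) z :=
      ((((hasDerivAt_id z).sub_const z0).pow 2).const_sub (R ^ 2)).congr_deriv (by simp)
    have := (h0.mul ((hasDerivAt_posPart_pow 0 _).comp z h1)).const_mul (Real.exp (l * s))
    exact this.congr_deriv (by simp only [Function.comp]; push_cast; ring)

namespace KilledDiffusion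

variable [m : MeasurableSpace Ω] {P : Measure Ω} [IsProbabilityMeasure P]
  {T α z0 M a0 a1 CA : ℝ} {A B : ℝ → ℝ → ℝ} {Z : ℝ → Ω → ℝ} {τ : Ω → ℝ}

/-- For a suitable growth rate the bump function is a subsolution vanishing at the boundary, so
its expectation under the killed process does not decrease in time. -/
lemma survival_pos (h : KilledDiffusion P T α z0 M a0 a1 CA A B Z τ) {t : ℝ} (ht : t ∈ Ico 0 T) :
    P {ω | t < τ ω} ≠ 0 := by
  intro hP
  have hM := h.M0
  have ha0 := h.a0pos
  have ha1 := h.a1pos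
  have hT := h.hT
  set R := -z0 with hR
  have hRp : 0 < R := by have := h.z0neg; linarith
  set c := 6 * M * R + 15 * a1
  set d := 12 * a0 * R ^ 2 with hd
  have hdp : 0 < d := by positivity
  have hcp : 0 < c := by positivity
  set l := c ^ 2 / (4 * d) with hl
  have hlp : 0 < l := by positivity
  set E := Real.exp (l * T)
  have hEp : 0 < E := Real.exp_pos _
  have hdyn := h.dyn _ _ _ _ (testFn_bump l z0 R)
    (E * (R ^ 6 + l * R ^ 6 + 6 * R ^ 5 + (24 * R ^ 4 + 6 * R ^ 4)))
    (fun s hs z => by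
      obtain ⟨b1, b2, b3, b4⟩ := bump_bound (R := R) (y := z - z0) hRp
      set w := max (R ^ 2 - (z - z0) ^ 2) 0
      set y := z - z0
      have hE : Real.exp (l * s) ≤ E := Real.exp_le_exp.2 (by have := hs.2; gcongr)
      have hE0 := Real.exp_pos (l * s)
      have q0 : |Real.exp (l * s) * w ^ 3| ≤ E * R ^ 6 := by
        rw [abs_of_nonneg (by positivity)]
        calc _ ≤ E * (R ^ 2) ^ 3 := by gcongr
          _ = _ := by ring
      have q1 : |l * (Real.exp (l * s) * w ^ 3)| ≤ E * (l * R ^ 6) := by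
        rw [abs_mul, abs_of_pos hlp]
        calc _ ≤ l * (E * R ^ 6) := by gcongr
          _ = _ := by ring
      have q2 : |Real.exp (l * s) * (-6 * y * w ^ 2)| ≤ E * (6 * R ^ 5) := by
        rw [abs_mul, abs_mul, abs_mul, abs_of_pos hE0, abs_of_nonneg (by positivity : 0 ≤ w ^ 2),
          show |(-6:ℝ)| = 6 by norm_num]
        calc _ = Real.exp (l * s) * (6 * ((|y| * w) * w)) := by ring
          _ ≤ E * (6 * (R ^ 3 * R ^ 2)) := by gcongr
          _ = _ := by ring
      have q3 : |Real.exp (l * s) * (24 * y ^ 2 * w - 6 * w ^ 2)| ≤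
          E * (24 * R ^ 4 + 6 * R ^ 4) := by
        rw [abs_mul, abs_of_pos hE0]
        gcongr
        have : 0 ≤ y ^ 2 * w := by positivity
        have h2 : w ^ 2 ≤ (R ^ 2) ^ 2 := by gcongr
        have h3 : 0 ≤ w ^ 2 := by positivity
        have h4 : 0 ≤ R ^ 4 := by positivity
        rw [abs_le]; constructor <;> nlinarith
      have p1 : 0 ≤ E * R ^ 6 := by positivity
      have p2 : 0 ≤ E * (l * R ^ 6) := by positivity
      have p3 : 0 ≤ E * (6 * R ^ 5) := by positivity
      have p4 : 0 ≤ E * (24 * R ^ 4 + 6 * R ^ 4) := by positivity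
      rw [mul_add, mul_add, mul_add]
      refine ⟨?_, ?_, ?_, ?_⟩ <;> linarith) t ⟨ht.1, ht.2.le⟩
  have hL : 0 ≤ ∫ s in (0:ℝ)..t, ∫ ω in {ω | s < τ ω},
      (l * (Real.exp (l * s) * (max (R ^ 2 - (Z s ω - z0) ^ 2) 0) ^ 3) + B s (Z s ω) *
        (Real.exp (l * s) * (-6 * (Z s ω - z0) * (max (R ^ 2 - (Z s ω - z0) ^ 2) 0) ^ 2)) +
        1 / 2 * A s (Z s ω) * (Real.exp (l * s) *
        (24 * (Z s ω - z0) ^ 2 * max (R ^ 2 - (Z s ω - z0) ^ 2) 0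
        - 6 * (max (R ^ 2 - (Z s ω - z0) ^ 2) 0) ^ 2))) ∂P := by
    refine intervalIntegral.integral_nonneg ht.1 fun s hs => integral_nonneg fun ω => ?_
    have hsT : s ∈ Icc 0 T := ⟨hs.1, hs.2.trans ht.2.le⟩
    have hB := h.bB s hsT (Z s ω)
    have hA0 := h.lA s hsT (Z s ω)
    have hA1 := h.uA s hsT (Z s ω)
    simp only [Pi.zero_apply]
    set y := Z s ω - z0
    set b := B s (Z s ω)
    set a := A s (Z s ω)
    rcases le_or_gt (R ^ 2 - y ^ 2) 0 with h1 | h1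
    · rw [max_eq_right h1]; simp
    rw [max_eq_left h1.le]
    set w := R ^ 2 - y ^ 2 with hw
    have hy : |y| ≤ R := abs_le_of_sq_le_sq (by linarith) hRp.le
    have e : l * (Real.exp (l * s) * w ^ 3) + b * (Real.exp (l * s) * (-6 * y * w ^ 2)) +
        1 / 2 * a * (Real.exp (l * s) * (24 * y ^ 2 * w - 6 * w ^ 2)) =
        Real.exp (l * s) * w * (l * w ^ 2 - 6 * (b * y) * w + a * (12 * R ^ 2 - 15 * w)) := by
      have : y ^ 2 = R ^ 2 - w := by rw [hw]; ring
      rw [this]; ring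
    rw [e]
    have hby : b * y ≤ M * R := (le_abs_self _).trans (by rw [abs_mul]; gcongr)
    have hq : 0 ≤ l * w ^ 2 - c * w + d := by
      have : l * w ^ 2 - c * w + d = (c * w - 2 * d) ^ 2 / (4 * d) := by
        rw [hl]; field_simp; ring
      rw [this]; positivity
    have h3 : 0 ≤ l * w ^ 2 - 6 * (b * y) * w + a * (12 * R ^ 2 - 15 * w) := by
      have h4 : b * y * w ≤ M * R * w := by gcongr
      have h5 : a * w ≤ a1 * w := by gcongr
      have h6 : a0 * R ^ 2 ≤ a * R ^ 2 := by gcongr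
      simp only [c, d] at hq
      nlinarith
    positivity
  have hlhs : ∫ ω, Real.exp (l * min t (τ ω)) *
      (max (R ^ 2 - (Z (min t (τ ω)) ω - z0) ^ 2) 0) ^ 3 ∂P = 0 := by
    refine integral_eq_zero_of_ae ?_
    have : ∀ᵐ ω ∂P, ¬ t < τ ω := by rw [ae_iff]; simpa using hP
    filter_upwards [this] with ω hω
    rw [not_lt] at hω
    rw [min_eq_right hω, h.zero ω (hω.trans_lt ht.2)]
    simp [hR]
  rw [hlhs] at hdyn
  have h0 : (0:ℝ) < Real.exp (l * 0) * (max (R ^ 2 - (z0 - z0) ^ 2) 0) ^ 3 := by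
    rw [sub_self, zero_pow two_ne_zero, sub_zero, max_eq_left (by positivity)]
    positivity
  linarith

end KilledDiffusion

/-! ### Concentration of Gaussian-type kernels at the boundary -/

/-- If `w` vanishes linearly at `0` from the left with slope `l`, integration of `w` against
`r⁻² k(· / r)` concentrates at `0` and sees only `l`. -/
lemma tendsto_kernel_integral {w k : ℝ → ℝ} {l C : ℝ} (hw : IntegrableOn w (Iio 0))
    (hwl : Tendsto (fun z => w z / z) (𝓝[<] 0) (𝓝 l)) (hkc : Continuous k) (hC : 0 ≤ C)
    (hk : ∀ y, |k y| ≤ C * Real.exp (-y ^ 2 / 4)) :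
    Tendsto (fun r => (r ^ 2)⁻¹ * ∫ z in Iio 0, k (z / r) * w z) (𝓝[>] 0)
      (𝓝 (l * ∫ y in Iio 0, k y * y)) := by
  obtain ⟨d, hd, hnear⟩ : ∃ d : ℝ, 0 < d ∧ ∀ z, -d < z → z < 0 → |w z / z| ≤ |l| + 1 := by
    have h1 := hwl.abs.eventually_le_const (lt_add_one |l|)
    rw [eventually_nhdsWithin_iff, Metric.eventually_nhds_iff] at h1
    obtain ⟨d, hd, h2⟩ := h1
    refine ⟨d, hd, fun z hz hz0 => h2 ?_ hz0⟩
    rw [Real.dist_eq, sub_zero, abs_of_neg hz0]; linarith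
  have hcomp : ∀ r : ℝ, Continuous fun z => k (z / r) := fun r => hkc.comp (by fun_prop)
  have hbd : ∀ y, |k y| ≤ C := fun y => (hk y).trans <| by
    have : Real.exp (-y ^ 2 / 4) ≤ 1 := exp_neg_le_one y
    nlinarith
  have hinteg : ∀ r : ℝ, IntegrableOn (fun z => k (z / r) * w z) (Iio 0) := fun r =>
    hw.bdd_mul (c := C) ((hcomp r).aestronglyMeasurable) (Eventually.of_forall fun z => hbd _)
  have hsplit : ∀ r : ℝ, ∫ z in Iio 0, k (z / r) * w z =
      (∫ z in Iic (-d), k (z / r) * w z) + ∫ z in Ioo (-d) 0, k (z / r) * w z := fun r => by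
    have hu : Iio (0:ℝ) = Iic (-d) ∪ Ioo (-d) 0 := by
      rw [Iic_union_Ioo_eq_Iio]; linarith
    have hi := hinteg r
    rw [hu] at hi ⊢
    exact setIntegral_union (disjoint_left.2 fun x hx hx' => absurd hx'.1 (not_lt.2 hx))
      measurableSet_Ioo hi.left_of_union hi.right_of_union
  -- away from `0` the kernel is of order `r ^ 4`
  have hfar : Tendsto (fun r => (r ^ 2)⁻¹ * ∫ z in Iic (-d), k (z / r) * w z) (𝓝[>] 0)
      (𝓝 0) := by
    have hw' : IntegrableOn w (Iic (-d)) := hw.mono_set fun x hx => by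
      have : x ≤ -d := hx
      simp only [mem_Iio]; linarith
    refine squeeze_zero_norm' (a := fun r => 32 / d ^ 4 * C * (∫ z in Iic (-d), |w z|) * r ^ 2)
      ?_ ?_
    · filter_upwards [self_mem_nhdsWithin] with r hr
      have hr : 0 < r := hr
      have h1 : ‖∫ z in Iic (-d), k (z / r) * w z‖ ≤
          ∫ z in Iic (-d), C * (32 * r ^ 4 / d ^ 4) * |w z| := by
        refine norm_integral_le_of_norm_le (hw'.abs.const_mul _) ?_
        filter_upwards [ae_restrict_mem measurableSet_Iic] with z hz
        have hz : z ≤ -d := hz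
        rw [norm_mul, Real.norm_eq_abs, Real.norm_eq_abs]
        gcongr
        refine (hk _).trans ?_
        gcongr
        set u := (z / r) ^ 2 / 4 with hu
        have hu0 : d ^ 2 / (4 * r ^ 2) ≤ u := by
          rw [hu, div_pow, div_div, mul_comm (4:ℝ)]
          gcongr ?_ / _
          nlinarith
        have hexp := Real.quadratic_le_exp_of_nonneg (x := u) (by positivity)
        rw [show -(z / r) ^ 2 / 4 = -u by rw [hu]; ring, Real.exp_neg]
        have h2 : (d ^ 2 / (4 * r ^ 2)) ^ 2 / 2 ≤ Real.exp u := by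
          have : (d ^ 2 / (4 * r ^ 2)) ^ 2 ≤ u ^ 2 := by gcongr
          have : 0 ≤ u := by positivity
          linarith
        calc (Real.exp u)⁻¹ ≤ ((d ^ 2 / (4 * r ^ 2)) ^ 2 / 2)⁻¹ := by gcongr
          _ = _ := by field_simp; norm_num
      rw [integral_const_mul] at h1
      rw [norm_mul, norm_inv, norm_pow, Real.norm_eq_abs r, abs_of_pos hr]
      calc _ ≤ (r ^ 2)⁻¹ * (C * (32 * r ^ 4 / d ^ 4) * ∫ z in Iic (-d), |w z|) := by gcongr
        _ = _ := by field_simp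
    · have : Continuous fun r : ℝ => 32 / d ^ 4 * C * (∫ z in Iic (-d), |w z|) * r ^ 2 := by
        fun_prop
      have h1 := this.tendsto 0
      simp only [zero_pow two_ne_zero, mul_zero] at h1
      exact h1.mono_left nhdsWithin_le_nhds
  -- near `0`, rescale by `r` and use dominated convergence
  have hnr : Tendsto (fun r => (r ^ 2)⁻¹ * ∫ z in Ioo (-d) 0, k (z / r) * w z) (𝓝[>] 0)
      (𝓝 (l * ∫ y in Iio 0, k y * y)) := by
    have hresc : ∀ r : ℝ, 0 < r → (r ^ 2)⁻¹ * ∫ z in Ioo (-d) 0, k (z / r) * w z =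
        ∫ y, (Ioo (-d) 0).indicator w (r * y) / r * k y := fun r hr => by
      rw [← integral_indicator measurableSet_Ioo]
      have h1 := Measure.integral_comp_mul_left
        (fun z => (Ioo (-d) 0).indicator (fun z => k (z / r) * w z) z) r
      rw [abs_of_pos (inv_pos.2 hr), smul_eq_mul] at h1
      have h2 : ∫ z, (Ioo (-d) 0).indicator (fun z => k (z / r) * w z) z =
          r * ∫ y, (Ioo (-d) 0).indicator (fun z => k (z / r) * w z) (r * y) := by
        rw [h1]; field_simp
      rw [h2, ← integral_const_mul, ← integral_const_mul]
      congr 1; ext y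
      by_cases hy : r * y ∈ Ioo (-d) 0
      · rw [indicator_of_mem hy, indicator_of_mem hy, mul_div_cancel_left₀ _ hr.ne']
        field_simp
      · rw [indicator_of_notMem hy, indicator_of_notMem hy]; simp
    rw [← integral_const_mul, ← integral_indicator measurableSet_Iio]
    have hG : Integrable fun y : ℝ => (|l| + 1) * C * (|y| * Real.exp (-(1 / 4) * y ^ 2)) := by
      refine Integrable.const_mul ?_ _
      have := (integrable_mul_exp_neg_mul_sq (b := 1 / 4) (by norm_num)).abs
      refine this.congr (Eventually.of_forall fun y => ?_)
      simp only [abs_mul, abs_of_pos (Real.exp_pos _)]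
    refine Tendsto.congr' (f₁ := fun r => ∫ y, (Ioo (-d) 0).indicator w (r * y) / r * k y) ?_ ?_
    · filter_upwards [self_mem_nhdsWithin] with r hr using (hresc r hr).symm
    refine tendsto_integral_filter_of_dominated_convergence _ ?_ ?_ hG ?_
    · filter_upwards [self_mem_nhdsWithin] with r hr
      have hr : 0 < r := hr
      have hm : AEStronglyMeasurable ((Ioo (-d) 0).indicator w) volume :=
        (aestronglyMeasurable_indicator_iff measurableSet_Ioo).2
          (hw.mono_set fun x hx => hx.2).aestronglyMeasurable
      have h2 : AEStronglyMeasurable (fun y => (Ioo (-d) 0).indicator w (r * y)) volume :=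
        hm.comp_quasiMeasurePreserving ⟨measurable_const_mul r, by
          rw [Real.map_volume_mul_left hr.ne']
          exact Measure.smul_absolutelyContinuous⟩
      simp only [div_eq_mul_inv]
      exact (h2.mul_const r⁻¹).mul hkc.aestronglyMeasurable
    · filter_upwards [self_mem_nhdsWithin] with r hr
      have hr : 0 < r := hr
      refine Eventually.of_forall fun y => ?_
      rw [norm_mul, Real.norm_eq_abs, Real.norm_eq_abs]
      have h1 : |(Ioo (-d) 0).indicator w (r * y) / r| ≤ (|l| + 1) * |y| := by
        by_cases hy : r * y ∈ Ioo (-d) 0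
        · rw [indicator_of_mem hy]
          have hyn : y ≠ 0 := by rintro rfl; simp at hy
          have h2 := hnear _ hy.1 hy.2
          calc |w (r * y) / r| = |w (r * y) / (r * y)| * |y| := by
                rw [← abs_mul]; congr 1; field_simp
            _ ≤ _ := by gcongr
        · rw [indicator_of_notMem hy]; simp; positivity
      calc _ ≤ ((|l| + 1) * |y|) * (C * Real.exp (-y ^ 2 / 4)) := by
            gcongr; exact hk y
        _ = _ := by
          rw [show -y ^ 2 / 4 = -(1 / 4) * y ^ 2 by ring]; ring
    · refine Eventually.of_forall fun y => ?_
      by_cases hy : y < 0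
      · rw [indicator_of_mem (show y ∈ Iio 0 from hy)]
        have h1 : Tendsto (fun r : ℝ => r * y) (𝓝[>] 0) (𝓝[<] 0) := by
          refine tendsto_nhdsWithin_iff.2 ⟨?_, ?_⟩
          · have : Continuous fun r : ℝ => r * y := by fun_prop
            have h1 := this.tendsto 0
            rw [zero_mul] at h1
            exact h1.mono_left nhdsWithin_le_nhds
          · filter_upwards [self_mem_nhdsWithin] with r hr
            exact mul_neg_of_pos_of_neg hr hy
        have h2 := ((hwl.comp h1).mul_const y).mul_const (k y)
        rw [show l * (k y * y) = l * y * k y by ring]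
        refine h2.congr' ?_
        have h3 : ∀ᶠ r in 𝓝[>] (0:ℝ), r * y ∈ Ioo (-d) 0 :=
          h1.eventually (Ioo_mem_nhdsLT (by linarith))
        filter_upwards [h3, self_mem_nhdsWithin] with r hr hr0
        have hr0 : 0 < r := hr0
        rw [indicator_of_mem hr, Function.comp]
        have hyn := hy.ne
        field_simp
      · rw [indicator_of_notMem (show y ∉ Iio 0 from hy)]
        refine tendsto_const_nhds.congr' ?_
        filter_upwards [self_mem_nhdsWithin] with r hr
        rw [indicator_of_notMem, zero_div, zero_mul]
        intro h1
        exact hy (neg_of_mul_neg_right h1.2 (le_of_lt hr))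
  have := hfar.add hnr
  rw [zero_add] at this
  refine this.congr fun r => ?_
  rw [hsplit r]; ring

lemma integral_hermite : ∫ y in Iio (0:ℝ), (y ^ 2 - 1) * Real.exp (-y ^ 2 / 2) * y = -1 := by
  have hd : ∀ y : ℝ, HasDerivAt (fun y : ℝ => -(y ^ 2 + 1) * Real.exp (-y ^ 2 / 2))
      ((y ^ 2 - 1) * Real.exp (-y ^ 2 / 2) * y) y := fun y => by
    have h1 : HasDerivAt (fun y : ℝ => -(y ^ 2 + 1)) (-(2 * y)) y :=
      (((hasDerivAt_pow 2 y).add_const 1).neg).congr_deriv (by simp)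
    have h2 : HasDerivAt (fun y : ℝ => Real.exp (-y ^ 2 / 2)) (Real.exp (-y ^ 2 / 2) * (-y)) y :=
      ((((hasDerivAt_pow 2 y).neg).div_const 2).exp).congr_deriv (by
        simp only [Pi.neg_apply, Nat.cast_ofNat, Nat.reduceSub, pow_one]; ring)
    exact (h1.mul h2).congr_deriv (by ring)
  have hlim : Tendsto (fun y : ℝ => -(y ^ 2 + 1) * Real.exp (-y ^ 2 / 2)) atBot (𝓝 0) := by
    have h1 : Tendsto (fun y : ℝ => y ^ 2 / 2) atBot atTop :=
      (tendsto_pow_atTop two_ne_zero |>.comp tendsto_abs_atBot_atTop |>.congr fun y => by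
        simp).atTop_div_const two_pos
    have h2 : Tendsto (fun u : ℝ => -2 * (u ^ 1 * Real.exp (-u)) - Real.exp (-u)) atTop
        (𝓝 (-2 * 0 - 0)) :=
      ((Real.tendsto_pow_mul_exp_neg_atTop_nhds_zero 1).const_mul _).sub
        (Real.tendsto_exp_neg_atTop_nhds_zero)
    rw [mul_zero, sub_zero] at h2
    refine (h2.comp h1).congr fun y => ?_
    simp only [Function.comp]
    rw [show -(y ^ 2 / 2) = -y ^ 2 / 2 by ring]
    ring
  have hinteg : IntegrableOn (fun y : ℝ => (y ^ 2 - 1) * Real.exp (-y ^ 2 / 2) * y) (Iic 0) := by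
    refine Integrable.integrableOn ?_
    have h3 := integrable_rpow_mul_exp_neg_mul_sq (b := 1 / 2) (by norm_num) (s := 3)
      (by norm_num)
    have h1 := integrable_mul_exp_neg_mul_sq (b := 1 / 2) (by norm_num)
    refine (h3.sub h1).congr (Eventually.of_forall fun y => ?_)
    simp only [Pi.sub_apply]
    rw [show (3:ℝ) = (3:ℕ) by norm_num, Real.rpow_natCast,
      show -(1 / 2) * y ^ 2 = -y ^ 2 / 2 by ring]
    ring
  rw [← integral_Iic_eq_integral_Iio, integral_Iic_of_hasDerivAt_of_tendsto' (fun y _ => hd y)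
    hinteg hlim]
  simp

lemma integral_dipole_ne_zero :
    ∫ y in Iio (0:ℝ), -y * Real.exp (-y ^ 2 / 2) * y ≠ 0 := by
  have hinteg : Integrable (fun y : ℝ => y ^ 2 * Real.exp (-y ^ 2 / 2)) := by
    have h3 := integrable_rpow_mul_exp_neg_mul_sq (b := 1 / 2) (by norm_num) (s := 2)
      (by norm_num)
    refine h3.congr (Eventually.of_forall fun y => ?_)
    simp only
    rw [show (2:ℝ) = (2:ℕ) by norm_num, Real.rpow_natCast]
    push_cast
    rw [show -(1 / 2) * y ^ 2 = -y ^ 2 / 2 by ring]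
  have h1 : 0 < ∫ y in Iio (0:ℝ), y ^ 2 * Real.exp (-y ^ 2 / 2) := by
    rw [setIntegral_pos_iff_support_of_nonneg_ae
      (Eventually.of_forall fun y => by simp only [Pi.zero_apply]; positivity) hinteg.integrableOn]
    refine lt_of_lt_of_le ?_ (measure_mono (s := Iio 0) fun y hy => ⟨?_, hy⟩)
    · simp
    · have : y ≠ 0 := ne_of_lt hy
      simp only [Function.mem_support]; positivity
  have h2 : ∫ y in Iio (0:ℝ), -y * Real.exp (-y ^ 2 / 2) * y =
      -∫ y in Iio (0:ℝ), y ^ 2 * Real.exp (-y ^ 2 / 2) := by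
    rw [← integral_neg]; congr 1; ext y; ring
  rw [h2]; exact neg_ne_zero.2 h1.ne'

/-! ### The density of the killed process near the boundary -/

/-- `p t` is a density on `(-∞, 0)` of `Z t` on the event that `τ` has not occurred; `ℓ t` is the
limit of its derivative at the boundary. -/
structure KilledDensity [MeasurableSpace Ω] (P : Measure Ω) (T : ℝ) (Z : ℝ → Ω → ℝ) (τ : Ω → ℝ)
    (p : ℝ → ℝ → ℝ) (ℓ : ℝ → ℝ) : Prop where
  law : ∀ t ∈ Ioo 0 T, ∀ S : Set ℝ, MeasurableSet S → S ⊆ Iio 0 →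
    P {ω | t < τ ω ∧ Z t ω ∈ S} = ENNReal.ofReal (∫ z in S, p t z)
  diff : ∀ t ∈ Ioo 0 T, ∀ z < 0, DifferentiableAt ℝ (p t) z
  lim : ∀ t ∈ Ioo 0 T, Tendsto (deriv (p t)) (𝓝[<] 0) (𝓝 (ℓ t))

namespace KilledDensity

variable [m : MeasurableSpace Ω] {P : Measure Ω} [IsProbabilityMeasure P]
  {T α z0 M a0 a1 CA : ℝ} {A B : ℝ → ℝ → ℝ} {Z : ℝ → Ω → ℝ} {τ : Ω → ℝ}
  {p : ℝ → ℝ → ℝ} {ℓ : ℝ → ℝ}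

lemma cont (hp : KilledDensity P T Z τ p ℓ) {t : ℝ} (ht : t ∈ Ioo 0 T) :
    ContinuousOn (p t) (Iio 0) :=
  fun z hz => (hp.diff t ht z hz).continuousAt.continuousWithinAt

/-- The Bochner integral of a non-integrable function is `0`, so integrability of the density
is a consequence of the survival probability being positive. -/
lemma integrableOn (hp : KilledDensity P T Z τ p ℓ)
    (h : KilledDiffusion P T α z0 M a0 a1 CA A B Z τ) {t : ℝ} (ht : t ∈ Ioo 0 T) :
    0 < ∫ z in Iio 0, p t z ∧ IntegrableOn (p t) (Iio 0) := by
  have h1 := hp.law t ht (Iio 0) measurableSet_Iio subset_rfl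
  have h2 : {ω | t < τ ω ∧ Z t ω ∈ Iio 0} = {ω | t < τ ω} := by
    ext ω
    exact ⟨fun hω => hω.1, fun hω => ⟨hω, h.neg ω t ht.1.le hω⟩⟩
  rw [h2] at h1
  have h3 : 0 < ∫ z in Iio 0, p t z := by
    by_contra hcon
    rw [ENNReal.ofReal_of_nonpos (not_lt.1 hcon)] at h1
    exact h.survival_pos ⟨ht.1.le, ht.2⟩ h1
  refine ⟨h3, ?_⟩
  by_contra hcon
  rw [integral_undef hcon] at h3
  exact lt_irrefl _ h3

lemma nonneg (hp : KilledDensity P T Z τ p ℓ)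
    (h : KilledDiffusion P T α z0 M a0 a1 CA A B Z τ) {t : ℝ} (ht : t ∈ Ioo 0 T) {z : ℝ}
    (hz : z < 0) : 0 ≤ p t z := by
  obtain ⟨hpos, hinteg⟩ := hp.integrableOn h ht
  by_contra hcon
  rw [not_le] at hcon
  have h1 : ∀ᶠ y in 𝓝 z, p t y < 0 ∧ y < 0 :=
    ((hp.diff t ht z hz).continuousAt.eventually_lt_const hcon).and (Iio_mem_nhds hz)
  obtain ⟨d, hd, hball⟩ := Metric.eventually_nhds_iff_ball.1 h1
  set S := Metric.ball z d
  have hS : MeasurableSet S := measurableSet_ball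
  have hsub : S ⊆ Iio 0 := fun y hy => (hball y hy).2
  -- removing an interval where `p t` is negative would increase the mass
  have hneg : ∫ y in S, p t y < 0 := by
    have h2 : 0 < ∫ y in S, -p t y := by
      rw [setIntegral_pos_iff_support_of_nonneg_ae]
      · have : Function.support (fun y => -p t y) ∩ S = S := by
          refine inter_eq_right.2 fun y hy => ?_
          have := (hball y hy).1
          simp only [Function.mem_support]; linarith
        rw [this]
        exact Metric.measure_ball_pos _ _ hd
      · filter_upwards [ae_restrict_mem hS] with y hy
        have := (hball y hy).1
        simp only [Pi.zero_apply]; linarith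
      · exact (hinteg.mono_set hsub).neg
    rw [integral_neg] at h2; linarith
  have hdiff := setIntegral_sdiff hS hinteg hsub
  have hm : P {ω | t < τ ω ∧ Z t ω ∈ Iio 0 \ S} ≤ P {ω | t < τ ω ∧ Z t ω ∈ Iio 0} :=
    measure_mono fun ω hω => ⟨hω.1, hω.2.1⟩
  rw [hp.law t ht _ (measurableSet_Iio.diff hS) sdiff_subset,
    hp.law t ht _ measurableSet_Iio subset_rfl, hdiff,
    ENNReal.ofReal_le_ofReal_iff hpos.le] at hm
  linarith

lemma integral_eq (hp : KilledDensity P T Z τ p ℓ)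
    (h : KilledDiffusion P T α z0 M a0 a1 CA A B Z τ) {t : ℝ} (ht : t ∈ Ioo 0 T) {k : ℝ → ℝ}
    (hk : Measurable k) :
    ∫ ω in {ω | t < τ ω}, k (Z t ω) ∂P = ∫ z in Iio 0, k z * p t z := by
  obtain ⟨hpos, hinteg⟩ := hp.integrableOn h ht
  have hmap : (P.restrict {ω | t < τ ω}).map (Z t) =
      (volume.restrict (Iio 0)).withDensity fun z => ENNReal.ofReal (p t z) := by
    ext S hS
    rw [Measure.map_apply (h.Zm t) hS, Measure.restrict_apply (h.Zm t hS), withDensity_apply _ hS,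
      Measure.restrict_restrict hS]
    have h1 : Z t ⁻¹' S ∩ {ω | t < τ ω} = {ω | t < τ ω ∧ Z t ω ∈ S ∩ Iio 0} := by
      ext ω
      exact ⟨fun hω => ⟨hω.2, hω.1, h.neg ω t ht.1.le hω.2⟩, fun hω => ⟨hω.2.1, hω.1⟩⟩
    rw [h1, hp.law t ht _ (hS.inter measurableSet_Iio) inter_subset_right,
      ofReal_integral_eq_lintegral_ofReal (hinteg.mono_set inter_subset_right)]
    filter_upwards [ae_restrict_mem (hS.inter measurableSet_Iio)] with z hz
    exact hp.nonneg h ht hz.2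
  rw [← integral_map (f := k) (h.Zm t).aemeasurable hk.aestronglyMeasurable, hmap,
    integral_withDensity_eq_integral_toReal_smul₀]
  · refine setIntegral_congr_fun measurableSet_Iio fun z hz => ?_
    simp only [smul_eq_mul]
    rw [ENNReal.toReal_ofReal (hp.nonneg h ht hz), mul_comm]
  · exact hinteg.aemeasurable.ennreal_ofReal
  · exact Eventually.of_forall fun z => ENNReal.ofReal_lt_top

/-- The quadratic mass bound forces the density to vanish at the boundary, linearly with slope
`ℓ t`. -/
lemma slope (hp : KilledDensity P T Z τ p ℓ)
    (h : KilledDiffusion P T α z0 M a0 a1 CA A B Z τ) {t : ℝ} (ht : t ∈ Ioo 0 T) :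
    Tendsto (fun z => p t z / z) (𝓝[<] 0) (𝓝 (ℓ t)) := by
  obtain ⟨hpos, hinteg⟩ := hp.integrableOn h ht
  obtain ⟨C, hC, hmass⟩ := h.mass_bound
  have h1 := (hp.lim t ht).abs.eventually_le_const (lt_add_one |ℓ t|)
  rw [eventually_nhdsWithin_iff, Metric.eventually_nhds_iff] at h1
  obtain ⟨d, hd, hL⟩ := h1
  set L := |ℓ t| + 1
  have hLp : 0 < L := by positivity
  have hderiv : ∀ z, -d < z → z < 0 → |deriv (p t) z| ≤ L := fun z hz hz0 =>
    hL (by rw [Real.dist_eq, sub_zero, abs_of_neg hz0]; linarith) hz0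
  have hbd : ∀ z, -(d / 2) < z → z < 0 → p t z ≤ (L + C * Real.exp 1) * (-z) := by
    intro z hz hz0
    have hlow : ∀ y ∈ Ioo (2 * z) z, p t z - L * (-z) ≤ p t y := fun y hy => by
      have hmv := (convex_Ioo (-d) 0).norm_image_sub_le_of_norm_deriv_le (f := p t) (C := L)
        (fun x hx => hp.diff t ht x hx.2) (fun x hx => hderiv x hx.1 hx.2)
        (x := y) (y := z) ⟨by linarith [hy.1], by linarith [hy.2]⟩ ⟨by linarith, hz0⟩
      rw [Real.norm_eq_abs, Real.norm_eq_abs, abs_of_pos (by linarith [hy.2] : 0 < z - y)] at hmv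
      have := le_abs_self (p t z - p t y)
      have : L * (z - y) ≤ L * (-z) := by gcongr; linarith [hy.1]
      linarith
    have hm := hmass t ⟨ht.1.le, ht.2⟩ (-z) (by linarith)
    have hsub : Ioo (2 * z) z ⊆ Iio 0 := fun y hy => hy.2.trans hz0
    rw [KilledDiffusion.mass, hp.integral_eq h ht (k := fun y => Real.exp (-(y / (-z)) ^ 2 / 4))
      (by fun_prop)] at hm
    have hi : IntegrableOn (fun y => Real.exp (-(y / (-z)) ^ 2 / 4) * p t y) (Iio 0) :=
      hinteg.bdd_mul (c := 1) (by fun_prop) (Eventually.of_forall fun y => by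
        rw [Real.norm_eq_abs, abs_of_pos (Real.exp_pos _)]; exact exp_neg_le_one _)
    have h2 : ∫ y in Ioo (2 * z) z, Real.exp (-1) * (p t z - L * (-z)) ≤
        ∫ y in Iio 0, Real.exp (-(y / (-z)) ^ 2 / 4) * p t y := by
      refine le_trans ?_ (setIntegral_mono_set hi ?_ hsub.eventuallyLE)
      · refine setIntegral_mono_on (integrable_const _) (hi.mono_set hsub) measurableSet_Ioo fun y hy => ?_
        have hpy := hp.nonneg h ht (hsub hy)
        have he : Real.exp (-1) ≤ Real.exp (-(y / (-z)) ^ 2 / 4) := by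
          apply Real.exp_le_exp.2
          have h3 : y / (-z) ≤ 0 := div_nonpos_of_nonpos_of_nonneg (by linarith [hy.2])
            (by linarith)
          have h4 : -2 ≤ y / (-z) := by rw [le_div_iff₀ (by linarith)]; linarith [hy.1]
          nlinarith
        calc _ ≤ Real.exp (-1) * p t y := by gcongr; exact hlow y hy
          _ ≤ _ := by gcongr
      · filter_upwards [ae_restrict_mem measurableSet_Iio] with y hy
        have := hp.nonneg h ht hy
        simp only [Pi.zero_apply]; positivity
    rw [setIntegral_const, smul_eq_mul, Measure.real, Real.volume_Ioo,
      ENNReal.toReal_ofReal (by linarith)] at h2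
    have h5 := h2.trans hm
    have h6 : Real.exp (-1) * (p t z - L * (-z)) ≤ C * (-z) := by
      have : (-z) * (Real.exp (-1) * (p t z - L * (-z))) ≤ (-z) * (C * (-z)) := by
        nlinarith
      exact le_of_mul_le_mul_left this (by linarith)
    have h7 : p t z - L * (-z) = Real.exp 1 * (Real.exp (-1) * (p t z - L * (-z))) := by
      rw [← mul_assoc, ← Real.exp_add]; simp
    have h8 := mul_le_mul_of_nonneg_left h6 (Real.exp_pos 1).le
    linarith
  have hzero : Tendsto (p t) (𝓝[<] 0) (𝓝 0) := by
    refine squeeze_zero' (g := fun z => (L + C * Real.exp 1) * (-z)) ?_ ?_ ?_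
    · filter_upwards [self_mem_nhdsWithin] with z hz using hp.nonneg h ht hz
    · filter_upwards [Ioo_mem_nhdsLT (by linarith : -(d / 2) < 0)] with z hz using hbd z hz.1 hz.2
    · have : Continuous fun z : ℝ => (L + C * Real.exp 1) * (-z) := by fun_prop
      have h1 := this.tendsto 0
      rw [neg_zero, mul_zero] at h1
      exact h1.mono_left nhdsWithin_le_nhds
  set f : ℝ → ℝ := Function.update (p t) 0 0 with hf
  have hfeq : ∀ z : ℝ, z < 0 → f z = p t z := fun z hz => by
    rw [hf, Function.update_of_ne hz.ne]
  have hf0 : f 0 = 0 := by simp [hf]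
  have hev : ∀ z : ℝ, z < 0 → f =ᶠ[𝓝 z] p t := fun z hz => by
    filter_upwards [Iio_mem_nhds hz] with y hy using hfeq y hy
  have hD := hasDerivWithinAt_Iic_of_tendsto_deriv (s := Iio 0) (f := f) (a := 0) (e := ℓ t)
    (fun z hz => ((hp.diff t ht z hz).congr_of_eventuallyEq (hev z hz)).differentiableWithinAt)
    (by
      rw [ContinuousWithinAt, hf0]
      exact hzero.congr' (by
        filter_upwards [self_mem_nhdsWithin] with z hz using (hfeq z hz).symm))
    self_mem_nhdsWithin
    ((hp.lim t ht).congr' (by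
      filter_upwards [self_mem_nhdsWithin] with z hz using ((hev z hz).deriv_eq).symm))
  have hs := (hD.mono Iio_subset_Iic_self)
  rw [hasDerivWithinAt_iff_tendsto_slope' (by simp)] at hs
  refine hs.congr' ?_
  filter_upwards [self_mem_nhdsWithin] with z hz
  rw [slope_def_field, hf0, sub_zero, sub_zero, hfeq z hz]

lemma slope_nonpos (hp : KilledDensity P T Z τ p ℓ)
    (h : KilledDiffusion P T α z0 M a0 a1 CA A B Z τ) {t : ℝ} (ht : t ∈ Ioo 0 T) : ℓ t ≤ 0 := by
  refine le_of_tendsto (hp.slope h ht) ?_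
  filter_upwards [self_mem_nhdsWithin] with z hz
  exact div_nonpos_of_nonneg_of_nonpos (hp.nonneg h ht hz) (le_of_lt hz)

/-- Small-scale limit of Gaussian-type functionals of the killed process. -/
lemma tendsto_functional (hp : KilledDensity P T Z τ p ℓ)
    (h : KilledDiffusion P T α z0 M a0 a1 CA A B Z τ) {t : ℝ} (ht : t ∈ Ioo 0 T) {a k : ℝ → ℝ}
    {Ca C : ℝ} (ha : Continuous a) (hab : ∀ z, |a z| ≤ Ca) (hk : Continuous k) (hC : 0 ≤ C)
    (hkb : ∀ y, |k y| ≤ C * Real.exp (-y ^ 2 / 4)) :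
    Tendsto (fun r => (r ^ 2)⁻¹ * ∫ ω in {ω | t < τ ω}, a (Z t ω) * k (Z t ω / r) ∂P) (𝓝[>] 0)
      (𝓝 (a 0 * ℓ t * ∫ y in Iio 0, k y * y)) := by
  obtain ⟨hpos, hinteg⟩ := hp.integrableOn h ht
  have h1 : Tendsto (fun z => (a z * p t z) / z) (𝓝[<] 0) (𝓝 (a 0 * ℓ t)) := by
    refine (((ha.tendsto 0).mono_left nhdsWithin_le_nhds).mul (hp.slope h ht)).congr fun z => ?_
    ring
  refine (tendsto_kernel_integral (hinteg.bdd_mul (c := Ca) ha.aestronglyMeasurable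
    (Eventually.of_forall hab)) h1 hk hC hkb).congr fun r => ?_
  have hkr : Continuous fun z => k (z / r) := hk.comp (by fun_prop)
  rw [hp.integral_eq h ht (k := fun z => a z * k (z / r)) (ha.mul hkr).measurable]
  congr 2; ext z; ring

end KilledDensity

/-! ### Continuity in time of the boundary derivative -/

/-- Lipschitz dependence of the dipole kernel on the variance. -/
lemma abs_kern_sqrt_sub_le {v v1 v2 z : ℝ} (hv : 0 < v) (h1 : v ≤ v1) (h2 : v ≤ v2) :
    |kern (√v1) z - kern (√v2) z| ≤ 24 / v ^ 2 * |v1 - v2| := by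
  have hd : ∀ x ∈ Ici v, HasDerivWithinAt (fun x => kern (√x) z) (1 / 2 * kern2 (√x) z)
      (Ici v) x := fun x hx => by
    have hx0 : 0 < x := hv.trans_le hx
    have hs := Real.sqrt_pos.2 hx0
    have := (hasDerivAt_kern_W hs.ne' z).comp x (Real.hasDerivAt_sqrt hx0.ne')
    exact (this.congr_deriv (by field_simp)).hasDerivWithinAt
  refine (convex_Ici v).norm_image_sub_le_of_norm_hasDerivWithin_le hd (fun x hx => ?_) h2 h1
  have hx0 : 0 < x := hv.trans_le hx
  have hs := Real.sqrt_pos.2 hx0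
  rw [Real.norm_eq_abs, abs_mul, abs_of_pos (by norm_num : (0:ℝ) < 1 / 2)]
  have h3 := abs_kern2_le' hs z
  have h4 : √x ^ 4 = x ^ 2 := by
    rw [show √x ^ 4 = (√x ^ 2) ^ 2 by ring, Real.sq_sqrt hx0.le]
  rw [h4] at h3
  have h5 : 48 / x ^ 2 ≤ 48 / v ^ 2 := by gcongr; exact hx
  calc _ ≤ 1 / 2 * (48 / v ^ 2) := by gcongr; exact h3.trans h5
    _ = _ := by ring

namespace KilledDiffusion

variable [m : MeasurableSpace Ω] {P : Measure Ω} [IsProbabilityMeasure P]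
  {T α z0 M a0 a1 CA : ℝ} {A B : ℝ → ℝ → ℝ} {Z : ℝ → Ω → ℝ} {τ : Ω → ℝ}
  {p : ℝ → ℝ → ℝ} {ℓ : ℝ → ℝ}

lemma measurable_setIntegral_before (h : KilledDiffusion P T α z0 M a0 a1 CA A B Z τ)
    {k : ℝ → ℝ → ℝ} (hk : Continuous (fun p : ℝ × ℝ => k p.1 p.2)) :
    Measurable (fun s => ∫ ω in {ω | s < τ ω}, k s (Z s ω) ∂P) := by
  have hZ : Measurable (fun p : ℝ × Ω => Z p.1 p.2) :=
    measurable_uncurry_of_continuous_of_measurable (u := fun s ω => Z s ω) h.Zc h.Zm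
  have h1 := ((measurable_before hZ h.τm hk.measurable).stronglyMeasurable.integral_prod_right'
    (ν := P)).measurable
  have e : (fun s => ∫ ω in {ω | s < τ ω}, k s (Z s ω) ∂P) =
      fun s => ∫ ω, (Iio (τ ω)).indicator (fun s => k s (Z s ω)) s ∂P := by
    ext s
    rw [← integral_indicator (h.measurableSet_before s)]
    rfl
  rw [e]
  exact h1

/-- The killed process integrated against the dipole kernel of variance `ε`. -/
def flux (_h : KilledDiffusion P T α z0 M a0 a1 CA A B Z τ) (ε t : ℝ) : ℝ :=
  ∫ ω in {ω | t < τ ω}, kern (√ε) (Z t ω) ∂P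

lemma stopped_kern (h : KilledDiffusion P T α z0 M a0 a1 CA A B Z τ) (W : ℝ → ℝ) {u : ℝ}
    (hu : u < T) : ∫ ω, kern (W (min u (τ ω))) (Z (min u (τ ω)) ω) ∂P =
      ∫ ω in {ω | u < τ ω}, kern (W u) (Z u ω) ∂P := by
  rw [← integral_indicator (h.measurableSet_before u)]
  congr 1; ext ω
  by_cases hω : u < τ ω
  · rw [indicator_of_mem (s := {ω | u < τ ω}) hω, min_eq_left hω.le]
  · rw [indicator_of_notMem (s := {ω | u < τ ω}) hω, min_eq_right (not_lt.1 hω),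
      h.zero ω ((not_lt.1 hω).trans_lt hu)]
    simp [kern]

lemma continuousOn_flux (h : KilledDiffusion P T α z0 M a0 a1 CA A B Z τ) {ε : ℝ} (hε : 0 < ε) :
    ContinuousOn (h.flux ε) (Ioo 0 T) := by
  have hs := Real.sqrt_pos.2 hε
  have hc : Continuous (kern (√ε)) :=
    continuous_iff_continuousAt.2 fun z => (hasDerivAt_kern_z hs.ne' z).continuousAt
  have h1 : Continuous fun t => ∫ ω, kern (√ε) (Z (min t (τ ω)) ω) ∂P := by
    refine continuous_of_dominated (bound := fun _ => 1 / √ε ^ 2) (fun t => ?_) (fun t => ?_)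
      (integrable_const _) ?_
    · have hZ : Measurable (fun ω => Z (min t (τ ω)) ω) :=
        (measurable_uncurry_of_continuous_of_measurable (u := fun s ω => Z s ω) h.Zc h.Zm).comp
          ((measurable_const.min h.τm).prodMk measurable_id)
      exact (hc.measurable.comp hZ).aestronglyMeasurable
    · refine Eventually.of_forall fun ω => (abs_kern_le hs _).trans ?_
      exact mul_le_of_le_one_right (by positivity) (exp_neg_le_one _)
    · exact Eventually.of_forall fun ω =>
        hc.comp ((h.Zc ω).comp (continuous_id.min continuous_const))
  refine h1.continuousOn.congr fun t ht => ?_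
  exact (h.stopped_kern (fun _ => √ε) ht.2).symm

/-- Comparison of the fluxes at two small scales: Dynkin's formula is used on `[t - δ, t]`, where
the kernels frozen at `(t, 0)` contribute an integrable singularity of order
`(t - s) ^ (α/2 - 1)`. -/
lemma flux_sub_le (h : KilledDiffusion P T α z0 M a0 a1 CA A B Z τ) :
    ∃ K : ℝ, 0 < K ∧ ∀ t ∈ Ioo 0 T, ∀ δ, 0 < δ → δ ≤ t → ∀ ε, 0 < ε → ε ≤ 1 → ∀ ε', 0 < ε' →
      ε' ≤ 1 → |h.flux ε t - h.flux ε' t| ≤ K * δ ^ (α / 2) + 24 / (a0 * δ) ^ 2 * |ε - ε'| := by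
  obtain ⟨C, hC, hmass⟩ := h.mass_bound
  have hα0 := h.α0
  have hα1 := h.α1
  have ha0 := h.a0pos
  have hJ := h.Jconst_nonneg
  set D : ℝ := h.Jconst * C * a0 ^ (α / 2 - 1) / (α / 2) with hD
  have hD0 : 0 ≤ D := by positivity
  refine ⟨2 * D + 1, by positivity, ?_⟩
  intro t ht δ hδ hδt
  have htT : t ∈ Icc 0 T := ⟨ht.1.le, ht.2.le⟩
  have hapos := h.A_pos htT 0
  have haA := h.lA t htT 0
  have htd : t - δ ∈ Icc 0 t := ⟨by linarith, by linarith⟩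
  have hone : ∀ ε, 0 < ε → ε ≤ 1 → |h.flux ε t -
      ∫ ω in {ω | t - δ < τ ω}, kern (√(A t 0 * δ + ε)) (Z (t - δ) ω) ∂P| ≤ D * δ ^ (α / 2) := by
    intro ε hε hε1
    have d1 := h.dyn_kern htT hε 0 (u := t) ⟨ht.1.le, le_rfl⟩
    have d2 := h.dyn_kern htT hε 0 (u := t - δ) htd
    have hJm : Measurable fun s => ∫ ω in {ω | s < τ ω}, (B s (Z s ω) *
        kern1 (width (A t 0) t ε s) (Z s ω - 0) + (1 / 2) * (A s (Z s ω) - A t 0) *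
        kern2 (width (A t 0) t ε s) (Z s ω - 0)) ∂P := by
      have hT1 := testFn_kern (a := A t 0) (t := t) hε 0
      exact h.measurable_setIntegral_before (k := fun s z => B s z *
        kern1 (width (A t 0) t ε s) (z - 0) + (1 / 2) * (A s z - A t 0) *
        kern2 (width (A t 0) t ε s) (z - 0)) ((h.cB.mul hT1.cFz).add
          ((continuous_const.mul (h.cA.sub continuous_const)).mul hT1.cFzz))
    have hbound := fun s (hs : s ∈ Icc 0 t) => h.abs_J_le htT hε hε1 le_rfl hs
    set J : ℝ → ℝ := fun s => ∫ ω in {ω | s < τ ω}, (B s (Z s ω) *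
        kern1 (width (A t 0) t ε s) (Z s ω - 0) + (1 / 2) * (A s (Z s ω) - A t 0) *
        kern2 (width (A t 0) t ε s) (Z s ω - 0)) ∂P
    have hJb : ∀ s ∈ Ico 0 t, |J s| ≤ h.Jconst * C * a0 ^ (α / 2 - 1) * (t - s) ^ (α / 2 - 1) := by
      intro s hs
      have hlt : 0 < t - s := sub_pos.2 hs.2
      refine (hbound s ⟨hs.1, hs.2.le⟩).trans ?_
      have hWsq := width_sq hapos.le hε hs.2.le
      have hWp := width_pos (a := A t 0) (t := t) hε s
      set W := width (A t 0) t ε s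
      calc h.Jconst * W ^ (α - 4) * h.mass s W
          ≤ h.Jconst * W ^ (α - 4) * (C * W ^ 2) := by
            gcongr; exact hmass s ⟨hs.1, hs.2.trans ht.2⟩ W hWp
        _ = h.Jconst * C * (W ^ 2) ^ (α / 2 - 1) := by
          rw [← Real.rpow_natCast W 2, ← Real.rpow_mul hWp.le,
            show ((2:ℕ):ℝ) * (α / 2 - 1) = (α - 4) + (2:ℕ) by push_cast; ring,
            Real.rpow_add hWp]
          ring
        _ ≤ h.Jconst * C * (a0 * (t - s)) ^ (α / 2 - 1) := by
          refine mul_le_mul_of_nonneg_left (Real.rpow_le_rpow_of_nonpos (by positivity) ?_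
            (by linarith)) (by positivity)
          rw [hWsq]
          have := mul_le_mul_of_nonneg_right haA hlt.le
          linarith
        _ = _ := by rw [Real.mul_rpow ha0.le hlt.le]; ring
    have hbi : ∀ c, IntervalIntegrable (fun s => h.Jconst * C * a0 ^ (α / 2 - 1) *
        (t - s) ^ (α / 2 - 1)) volume c t := by
      intro c
      apply IntervalIntegrable.const_mul
      have := (intervalIntegral.intervalIntegrable_rpow' (a := t - c) (b := 0)
        (r := α / 2 - 1) (by linarith)).comp_sub_left t
      simpa using this
    have hne : ∀ᵐ s : ℝ, s ≠ t := by simp [ae_iff, measure_singleton]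
    have hJi : IntervalIntegrable J volume 0 t := by
      refine (hbi 0).mono_fun' hJm.aestronglyMeasurable ?_
      rw [uIoc_of_le ht.1.le, EventuallyLE, ae_restrict_iff' measurableSet_Ioc]
      filter_upwards [hne] with s hst hs
      exact hJb s ⟨hs.1.le, lt_of_le_of_ne hs.2 hst⟩
    have hsub := intervalIntegral.integral_interval_sub_left hJi (hJi.mono_set (by
      rw [uIcc_of_le htd.1, uIcc_of_le ht.1.le]; exact Icc_subset_Icc le_rfl htd.2))
    have hest : ‖∫ s in (t - δ)..t, J s‖ ≤ D * δ ^ (α / 2) := by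
      have h3 : ‖∫ s in (t - δ)..t, J s‖ ≤ ∫ s in (t - δ)..t, h.Jconst * C *
          a0 ^ (α / 2 - 1) * (t - s) ^ (α / 2 - 1) := by
        refine intervalIntegral.norm_integral_le_of_norm_le htd.2 ?_ (hbi _)
        filter_upwards [hne] with s hst hs
        exact hJb s ⟨htd.1.trans hs.1.le, lt_of_le_of_ne hs.2 hst⟩
      refine h3.trans (le_of_eq ?_)
      rw [intervalIntegral.integral_const_mul,
        intervalIntegral.integral_comp_sub_left (fun x => x ^ (α / 2 - 1)) t, sub_self,
        sub_sub_cancel, integral_rpow (Or.inl (by linarith)),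
        show α / 2 - 1 + 1 = α / 2 by ring, Real.zero_rpow (by positivity), sub_zero, hD]
      ring
    simp only [sub_zero] at d1 d2
    rw [h.stopped_kern _ ht.2] at d1
    rw [h.stopped_kern _ (by linarith [ht.2])] at d2
    rw [width_self] at d1
    rw [width_eq hapos.le hε htd.2, sub_sub_cancel] at d2
    have : h.flux ε t - ∫ ω in {ω | t - δ < τ ω}, kern (√(A t 0 * δ + ε)) (Z (t - δ) ω) ∂P =
        ∫ s in (t - δ)..t, J s := by
      rw [← hsub, flux, d1, d2]
      simp only [J, sub_zero]
      ring
    rw [this]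
    exact hest
  intro ε hε hε1 ε' hε' hε'1
  have e1 := hone ε hε hε1
  have e2 := hone ε' hε' hε'1
  have hadp : 0 < a0 * δ := by positivity
  have hge : ∀ ε, 0 < ε → a0 * δ ≤ A t 0 * δ + ε := fun ε hε => by
    have := mul_le_mul_of_nonneg_right haA hδ.le
    linarith
  have hkint : ∀ ε, 0 < ε → Integrable (fun ω => kern (√(A t 0 * δ + ε)) (Z (t - δ) ω))
      (P.restrict {ω | t - δ < τ ω}) := fun ε hε => by
    have hs : 0 < √(A t 0 * δ + ε) := Real.sqrt_pos.2 (by positivity)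
    refine h.integrable_comp (C := 1 / √(A t 0 * δ + ε) ^ 2) (continuous_iff_continuousAt.2
      fun z => (hasDerivAt_kern_z hs.ne' z).continuousAt).measurable (fun z => ?_) _ _
    exact (abs_kern_le hs _).trans (mul_le_of_le_one_right (by positivity) (exp_neg_le_one _))
  have e3 : |(∫ ω in {ω | t - δ < τ ω}, kern (√(A t 0 * δ + ε)) (Z (t - δ) ω) ∂P) -
      ∫ ω in {ω | t - δ < τ ω}, kern (√(A t 0 * δ + ε')) (Z (t - δ) ω) ∂P| ≤
      24 / (a0 * δ) ^ 2 * |ε - ε'| := by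
    rw [← integral_sub (hkint ε hε) (hkint ε' hε'), ← Real.norm_eq_abs]
    refine (norm_integral_le_of_norm_le_const (C := 24 / (a0 * δ) ^ 2 * |ε - ε'|)
      (Eventually.of_forall fun ω => ?_)).trans ?_
    · refine (abs_kern_sqrt_sub_le hadp (hge ε hε) (hge ε' hε')).trans (le_of_eq ?_)
      congr 2; ring
    · exact mul_le_of_le_one_right (by positivity)
        (by simpa [Measure.real] using measureReal_le_one)
  have h4 : 0 ≤ δ ^ (α / 2) := by positivity
  rw [abs_le] at *
  constructor <;> nlinarith

/-- The boundary derivative of the killed density is continuous in time, as a locally uniform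
limit of fluxes. -/
lemma continuousOn_slope (h : KilledDiffusion P T α z0 M a0 a1 CA A B Z τ)
    (hp : KilledDensity P T Z τ p ℓ) : ContinuousOn ℓ (Ioo 0 T) := by
  obtain ⟨K, hK, hflux⟩ := h.flux_sub_le
  have hα0 := h.α0
  have ha0 := h.a0pos
  set κ := ∫ y in Iio (0:ℝ), -y * Real.exp (-y ^ 2 / 2) * y
  have hκ : κ ≠ 0 := integral_dipole_ne_zero
  have hlim : ∀ t ∈ Ioo 0 T, Tendsto (fun r => h.flux (r ^ 2) t) (𝓝[>] 0) (𝓝 (ℓ t * κ)) := by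
    intro t ht
    have h1 := hp.tendsto_functional h ht (a := fun _ => 1) (Ca := 1)
      (k := fun y => -y * Real.exp (-y ^ 2 / 2)) (C := 1) continuous_const (by simp)
      (by fun_prop) zero_le_one (fun y => by
        rw [abs_mul, abs_neg, abs_of_pos (Real.exp_pos _)]; exact abs_mul_exp_le y)
    rw [one_mul] at h1
    refine h1.congr' ?_
    filter_upwards [self_mem_nhdsWithin] with r hr
    have hr : 0 < r := hr
    rw [flux, ← integral_const_mul, Real.sqrt_sq hr.le]
    congr 1; ext ω
    simp only [kern]
    field_simp
  have hloc : ∀ d, 0 < d → ContinuousOn (fun t => ℓ t * κ) (Ioo d T) := by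
    intro d hd
    refine continuousOn_of_uniform_approx_of_continuousOn fun u hu => ?_
    obtain ⟨η, hη, hηu⟩ := Metric.mem_uniformity_dist.1 hu
    obtain ⟨δ, hδ, hδd, hδK⟩ : ∃ δ : ℝ, 0 < δ ∧ δ ≤ d ∧ K * δ ^ (α / 2) ≤ η / 3 := by
      have h1 : Tendsto (fun r : ℝ => K * r ^ (α / 2)) (𝓝 0) (𝓝 (K * 0 ^ (α / 2))) :=
        ((Real.continuousAt_rpow_const _ _ (Or.inr (by positivity))).tendsto).const_mul K
      rw [Real.zero_rpow (by positivity), mul_zero] at h1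
      have h2 := ((h1.mono_left nhdsWithin_le_nhds).eventually_le_const
        (by positivity : (0:ℝ) < η / 3)).and (Ioc_mem_nhdsGT hd)
      obtain ⟨δ, h3, h4⟩ := h2.exists
      exact ⟨δ, h4.1, h4.2, h3⟩
    set c := 24 / (a0 * δ) ^ 2
    have hc : 0 < c := by positivity
    set ε := min 1 (η / (3 * c))
    have hε : 0 < ε := by positivity
    have hεc : c * ε ≤ η / 3 := by
      calc c * ε ≤ c * (η / (3 * c)) := by gcongr; exact min_le_right _ _
        _ = _ := by field_simp
    refine ⟨h.flux ε, (h.continuousOn_flux hε).mono (Ioo_subset_Ioo_left hd.le), fun t ht => ?_⟩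
    have htT : t ∈ Ioo 0 T := ⟨hd.trans ht.1, ht.2⟩
    apply hηu
    have h5 : |h.flux ε t - ℓ t * κ| ≤ K * δ ^ (α / 2) + c * ε := by
      refine le_of_tendsto ((hlim t htT).const_sub (h.flux ε t)).abs ?_
      have h6 : ∀ᶠ r in 𝓝[>] (0:ℝ), r ^ 2 ≤ ε := by
        have : Continuous fun r : ℝ => r ^ 2 := by fun_prop
        have h7 := this.tendsto 0
        rw [zero_pow two_ne_zero] at h7
        exact (h7.mono_left nhdsWithin_le_nhds).eventually_le_const hε
      filter_upwards [h6, self_mem_nhdsWithin] with r hr hr0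
      have hr0 : 0 < r ^ 2 := pow_pos hr0 2
      refine (hflux t htT δ hδ (hδd.trans ht.1.le) ε hε (min_le_left _ _) (r ^ 2) hr0
        (hr.trans (min_le_left _ _))).trans ?_
      gcongr
      rw [abs_of_nonneg (by linarith)]; linarith
    rw [dist_comm, Real.dist_eq]
    linarith
  intro t ht
  have h1 := (hloc (t / 2) (by linarith [ht.1])).continuousAt
    (Ioo_mem_nhds (by linarith [ht.1]) ht.2)
  have h2 := h1.mul_const κ⁻¹
  simp only [mul_assoc, mul_inv_cancel₀ hκ, mul_one] at h2
  exact h2.continuousWithinAt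

end KilledDiffusion

/-! ### The law of the passage time -/

/-- A centred Gaussian profile of width `r`, as a test function. -/
lemma testFn_gauss {r : ℝ} (hr : r ≠ 0) :
    TestFn (fun _ z => Real.exp (-(z / r) ^ 2 / 2)) (fun _ _ => 0)
      (fun _ z => r⁻¹ * (-(z / r) * Real.exp (-(z / r) ^ 2 / 2)))
      (fun _ z => (r ^ 2)⁻¹ * (((z / r) ^ 2 - 1) * Real.exp (-(z / r) ^ 2 / 2))) where
  cF := by fun_prop
  cFs := by fun_prop
  cFz := by fun_prop
  cFzz := by fun_prop
  ds := fun s z => hasDerivAt_const _ _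
  dz := fun s z => by
    have h1 : HasDerivAt (fun z : ℝ => -(z / r) ^ 2 / 2) (-(z / r) * r⁻¹) z :=
      (((((hasDerivAt_id z).div_const r).pow 2).neg).div_const 2).congr_deriv (by
        simp only [id, Nat.cast_ofNat, Nat.reduceSub, pow_one]; field_simp)
    exact h1.exp.congr_deriv (by ring)
  dzz := fun s z => by
    have h0 : HasDerivAt (fun z : ℝ => -(z / r)) (-r⁻¹) z :=
      (((hasDerivAt_id z).div_const r).neg).congr_deriv (by field_simp)
    have h1 : HasDerivAt (fun z : ℝ => -(z / r) ^ 2 / 2) (-(z / r) * r⁻¹) z :=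
      (((((hasDerivAt_id z).div_const r).pow 2).neg).div_const 2).congr_deriv (by
        simp only [id, Nat.cast_ofNat, Nat.reduceSub, pow_one]; field_simp)
    exact ((h0.mul h1.exp).const_mul r⁻¹).congr_deriv (by
      field_simp; ring)

namespace KilledDiffusion

variable [m : MeasurableSpace Ω] {P : Measure Ω} [IsProbabilityMeasure P]
  {T α z0 M a0 a1 CA : ℝ} {A B : ℝ → ℝ → ℝ} {Z : ℝ → Ω → ℝ} {τ : Ω → ℝ}
  {p : ℝ → ℝ → ℝ} {ℓ : ℝ → ℝ}

/-- The rate of change of the Gaussian of width `r` along the killed process. -/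
def gaussRate (_h : KilledDiffusion P T α z0 M a0 a1 CA A B Z τ) (r s : ℝ) : ℝ :=
  ∫ ω in {ω | s < τ ω}, (0 + B s (Z s ω) * (r⁻¹ * (-(Z s ω / r) * Real.exp (-(Z s ω / r) ^ 2 / 2)))
    + (1 / 2) * A s (Z s ω) *
      ((r ^ 2)⁻¹ * (((Z s ω / r) ^ 2 - 1) * Real.exp (-(Z s ω / r) ^ 2 / 2)))) ∂P

lemma gauss_eq (h : KilledDiffusion P T α z0 M a0 a1 CA A B Z τ) {r t : ℝ} (hr : 0 < r)
    (ht : t ∈ Icc 0 T) :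
    ∫ ω, Real.exp (-(Z (min t (τ ω)) ω / r) ^ 2 / 2) ∂P =
      Real.exp (-(z0 / r) ^ 2 / 2) + ∫ s in (0:ℝ)..t, h.gaussRate r s := by
  refine h.dyn _ _ _ _ (testFn_gauss hr.ne') (1 + r⁻¹ + 4 * (r ^ 2)⁻¹) (fun s hs z => ?_) t ht
  have e1 := exp_neg_le_one (z / r)
  have hE : ∀ y : ℝ, Real.exp (-y ^ 2 / 4) ≤ 1 := fun y => Real.exp_le_one_iff.2 (by
    have := sq_nonneg y; linarith)
  have hE2 : ∀ y : ℝ, Real.exp (-y ^ 2 / 2) ≤ 1 := fun y => Real.exp_le_one_iff.2 (by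
    have := sq_nonneg y; linarith)
  have hri : 0 < r⁻¹ := by positivity
  have hri2 : 0 < (r ^ 2)⁻¹ := by positivity
  refine ⟨?_, ?_, ?_, ?_⟩
  · rw [abs_of_pos (Real.exp_pos _)]; linarith [hE2 (z / r)]
  · rw [abs_zero]; positivity
  · rw [abs_mul, abs_mul, abs_neg, abs_of_pos hri, abs_of_pos (Real.exp_pos _)]
    have := (abs_mul_exp_le (z / r)).trans (mul_le_of_le_one_right zero_le_one (hE _))
    have := mul_le_mul_of_nonneg_left this hri.le
    linarith
  · rw [abs_mul, abs_mul, abs_of_pos hri2, abs_of_pos (Real.exp_pos _)]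
    have := (abs_sq_sub_mul_exp_le (z / r)).trans
      (mul_le_of_le_one_right (by norm_num) (hE _))
    have := mul_le_mul_of_nonneg_left this hri2.le
    linarith

/-- The drift part is `O(r)` by the quadratic mass bound; the diffusion part sees only the slope of
the density at the boundary. -/
lemma gaussRate_split (h : KilledDiffusion P T α z0 M a0 a1 CA A B Z τ) {r s : ℝ} (hr : 0 < r)
    (hs : s ∈ Icc 0 T) :
    |h.gaussRate r s - (1 / 2) * ((r ^ 2)⁻¹ * ∫ ω in {ω | s < τ ω}, A s (Z s ω) *
      (((Z s ω / r) ^ 2 - 1) * Real.exp (-(Z s ω / r) ^ 2 / 2)) ∂P)| ≤ M * r⁻¹ * h.mass s r := by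
  have hE2 : ∀ y : ℝ, Real.exp (-y ^ 2 / 4) ≤ 1 := fun y => Real.exp_le_one_iff.2 (by
    have := sq_nonneg y; linarith)
  have hcA : Continuous (A s) := h.cA.comp (by fun_prop : Continuous fun z : ℝ => (s, z))
  have hcB : Continuous (B s) := h.cB.comp (by fun_prop : Continuous fun z : ℝ => (s, z))
  have hM := h.M0
  have hb1 : ∀ z, |B s z * (r⁻¹ * (-(z / r) * Real.exp (-(z / r) ^ 2 / 2)))| ≤
      M * r⁻¹ * Real.exp (-(z / r) ^ 2 / 4) := fun z => by
    rw [abs_mul, abs_mul, abs_mul, abs_neg, abs_of_pos (inv_pos.2 hr),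
      abs_of_pos (Real.exp_pos _), mul_assoc]
    have h1 := abs_mul_exp_le (z / r)
    rw [one_mul] at h1
    gcongr
    exact h.bB s hs z
  have hi1 : Integrable (fun ω => B s (Z s ω) * (r⁻¹ * (-(Z s ω / r) *
      Real.exp (-(Z s ω / r) ^ 2 / 2)))) (P.restrict {ω | s < τ ω}) :=
    h.integrable_comp (k := fun z => B s z * (r⁻¹ * (-(z / r) * Real.exp (-(z / r) ^ 2 / 2))))
      (by fun_prop) (C := M * r⁻¹) (fun z => (hb1 z).trans
        (mul_le_of_le_one_right (by positivity) (hE2 _))) _ _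
  have hi2 : Integrable (fun ω => A s (Z s ω) * (((Z s ω / r) ^ 2 - 1) *
      Real.exp (-(Z s ω / r) ^ 2 / 2))) (P.restrict {ω | s < τ ω}) :=
    h.integrable_comp (k := fun z => A s z * (((z / r) ^ 2 - 1) * Real.exp (-(z / r) ^ 2 / 2)))
      (by fun_prop) (C := a1 * 4) (fun z => by
        rw [abs_mul, abs_mul, abs_of_pos (h.A_pos hs z), abs_of_pos (Real.exp_pos _)]
        have h1 := (abs_sq_sub_mul_exp_le (z / r)).trans
          (mul_le_of_le_one_right (by norm_num) (hE2 _))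
        have h2 := h.uA s hs z
        have h3 := h.A_pos hs z
        have h4 := h.a1pos.le
        gcongr) _ _
  have e : h.gaussRate r s = (∫ ω in {ω | s < τ ω}, B s (Z s ω) * (r⁻¹ * (-(Z s ω / r) *
      Real.exp (-(Z s ω / r) ^ 2 / 2))) ∂P) + (1 / 2) * ((r ^ 2)⁻¹ *
      ∫ ω in {ω | s < τ ω}, A s (Z s ω) *
      (((Z s ω / r) ^ 2 - 1) * Real.exp (-(Z s ω / r) ^ 2 / 2)) ∂P) := by
    rw [← mul_assoc, ← integral_const_mul, ← integral_add hi1 (hi2.const_mul _), gaussRate]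
    congr 1; ext ω; ring
  rw [e, add_sub_cancel_right]
  exact h.abs_setIntegral_le_mass hs.1 (k := fun z => B s z * (r⁻¹ * (-(z / r) *
    Real.exp (-(z / r) ^ 2 / 2)))) fun z _ => hb1 z

/-- A bound on the Gaussian rates, uniform in time and in the width. -/
lemma gaussRate_bound (h : KilledDiffusion P T α z0 M a0 a1 CA A B Z τ) :
    ∃ K, 0 ≤ K ∧ ∀ r ∈ Ioo (0:ℝ) 1, ∀ s ∈ Ico 0 T, |h.gaussRate r s| ≤ K := by
  obtain ⟨C, hC, hmass⟩ := h.mass_bound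
  have hM := h.M0
  have ha1 := h.a1pos.le
  refine ⟨M * C + 2 * a1 * C, by positivity, fun r hr s hs => ?_⟩
  have hs' : s ∈ Icc 0 T := ⟨hs.1, hs.2.le⟩
  have h1 := h.gaussRate_split hr.1 hs'
  have hr0 := hr.1
  have hm := hmass s hs r hr.1
  have h2 := h.abs_setIntegral_le_mass (r := r) (C := a1 * 4) hs.1
    (k := fun z => A s z * (((z / r) ^ 2 - 1) * Real.exp (-(z / r) ^ 2 / 2))) fun z _ => by
      rw [abs_mul, abs_mul, abs_of_pos (h.A_pos hs' z), abs_of_pos (Real.exp_pos _), mul_assoc]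
      have h1 := abs_sq_sub_mul_exp_le (z / r)
      have h2 := h.uA s hs' z
      have h3 := h.A_pos hs' z
      gcongr
  set I := ∫ ω in {ω | s < τ ω}, A s (Z s ω) *
      (((Z s ω / r) ^ 2 - 1) * Real.exp (-(Z s ω / r) ^ 2 / 2)) ∂P
  have h3 : |(1 / 2) * ((r ^ 2)⁻¹ * I)| ≤ 2 * a1 * C := by
    rw [abs_mul, abs_mul, abs_of_pos (by norm_num : (0:ℝ) < 1 / 2),
      abs_of_pos (by positivity : 0 < (r ^ 2)⁻¹)]
    calc _ ≤ 1 / 2 * ((r ^ 2)⁻¹ * (a1 * 4 * (C * r ^ 2))) := by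
          gcongr; exact h2.trans (by gcongr)
      _ = _ := by field_simp; ring
  have h4 : M * r⁻¹ * h.mass s r ≤ M * C := by
    calc _ ≤ M * r⁻¹ * (C * r ^ 2) := by gcongr
      _ = M * C * r := by field_simp
      _ ≤ M * C := mul_le_of_le_one_right (by positivity) hr.2.le
  rw [abs_le] at *
  constructor <;> linarith [h1.1, h1.2, h3.1, h3.2]

lemma tendsto_gaussRate (h : KilledDiffusion P T α z0 M a0 a1 CA A B Z τ)
    (hp : KilledDensity P T Z τ p ℓ) {s : ℝ} (hs : s ∈ Ioo 0 T) :
    Tendsto (fun r => h.gaussRate r s) (𝓝[>] 0) (𝓝 (-(1 / 2) * A s 0 * ℓ s)) := by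
  obtain ⟨C, hC, hmass⟩ := h.mass_bound
  have hM := h.M0
  have hs' : s ∈ Icc 0 T := ⟨hs.1.le, hs.2.le⟩
  have hcA : Continuous (A s) := h.cA.comp (by fun_prop : Continuous fun z : ℝ => (s, z))
  have h1 := (hp.tendsto_functional h hs (a := A s) (Ca := a1) (C := 4)
    (k := fun y => (y ^ 2 - 1) * Real.exp (-y ^ 2 / 2)) hcA
    (fun z => by rw [abs_of_pos (h.A_pos hs' z)]; exact h.uA s hs' z) (by fun_prop) (by norm_num)
    (fun y => by
      rw [abs_mul, abs_of_pos (Real.exp_pos _)]; exact abs_sq_sub_mul_exp_le y)).const_mul (1 / 2)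
  rw [integral_hermite] at h1
  have h2 : Tendsto (fun r => h.gaussRate r s - (1 / 2) * ((r ^ 2)⁻¹ * ∫ ω in {ω | s < τ ω},
      A s (Z s ω) * (((Z s ω / r) ^ 2 - 1) * Real.exp (-(Z s ω / r) ^ 2 / 2)) ∂P))
      (𝓝[>] 0) (𝓝 0) := by
    have h3 : Tendsto (fun r : ℝ => M * C * r) (𝓝[>] 0) (𝓝 0) := by
      have : Tendsto (fun r : ℝ => M * C * r) (𝓝 0) (𝓝 (M * C * 0)) :=
        (continuous_const.mul continuous_id).tendsto 0
      rw [mul_zero] at this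
      exact this.mono_left nhdsWithin_le_nhds
    refine squeeze_zero_norm' ?_ h3
    filter_upwards [self_mem_nhdsWithin] with r hr
    have hr : 0 < r := hr
    rw [Real.norm_eq_abs]
    refine (h.gaussRate_split hr hs').trans ?_
    calc _ ≤ M * r⁻¹ * (C * r ^ 2) := by gcongr; exact hmass s ⟨hs.1.le, hs.2⟩ r hr
      _ = M * C * r := by field_simp
  have h3 := h2.add h1
  rw [show 0 + 1 / 2 * (A s 0 * ℓ s * -1) = -(1 / 2) * A s 0 * ℓ s by ring] at h3
  refine h3.congr fun r => ?_
  ring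

lemma measurable_gaussRate (h : KilledDiffusion P T α z0 M a0 a1 CA A B Z τ) (r : ℝ) :
    Measurable (h.gaussRate r) := by
  have hA := h.cA
  have hB := h.cB
  exact h.measurable_setIntegral_before (k := fun s z =>
    (0 + B s z * (r⁻¹ * (-(z / r) * Real.exp (-(z / r) ^ 2 / 2)))
    + (1 / 2) * A s z * ((r ^ 2)⁻¹ * (((z / r) ^ 2 - 1) * Real.exp (-(z / r) ^ 2 / 2)))))
    (by fun_prop)

lemma tendsto_gauss_zero {z : ℝ} (hz : z ≠ 0) :
    Tendsto (fun r : ℝ => Real.exp (-(z / r) ^ 2 / 2)) (𝓝[>] 0) (𝓝 0) := by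
  refine Real.tendsto_exp_atBot.comp ?_
  have h1 : Tendsto (fun r : ℝ => (r⁻¹) ^ 2) (𝓝[>] 0) atTop :=
    (tendsto_pow_atTop two_ne_zero).comp tendsto_inv_nhdsGT_zero
  have h2 := h1.const_mul_atTop_of_neg (r := -(z ^ 2 / 2)) (by
    have : 0 < z ^ 2 := by positivity
    linarith)
  refine h2.congr fun r => ?_
  ring

/-- Dynkin's formula for narrowing Gaussians: the passage probability is the integrated boundary
flux. -/
lemma real_le_eq_integral (h : KilledDiffusion P T α z0 M a0 a1 CA A B Z τ)
    (hp : KilledDensity P T Z τ p ℓ) {t : ℝ} (ht : t ∈ Ioo 0 T) :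
    P.real {ω | τ ω ≤ t} = ∫ s in (0:ℝ)..t, -(1 / 2) * A s 0 * ℓ s := by
  have ht' : t ∈ Icc 0 T := ⟨ht.1.le, ht.2.le⟩
  have hZ : Measurable (fun p : ℝ × Ω => Z p.1 p.2) :=
    measurable_uncurry_of_continuous_of_measurable (u := fun s ω => Z s ω) h.Zc h.Zm
  have hZt : Measurable (fun ω => Z (min t (τ ω)) ω) :=
    hZ.comp ((measurable_const.min h.τm).prodMk measurable_id)
  have hL : Tendsto (fun r => ∫ ω, Real.exp (-(Z (min t (τ ω)) ω / r) ^ 2 / 2) ∂P) (𝓝[>] 0)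
      (𝓝 (∫ ω, {ω | τ ω ≤ t}.indicator (fun _ => (1:ℝ)) ω ∂P)) := by
    refine tendsto_integral_filter_of_dominated_convergence (fun _ => 1)
      (Eventually.of_forall fun r => ?_) (Eventually.of_forall fun r =>
        Eventually.of_forall fun ω => ?_) (integrable_const _) (Eventually.of_forall fun ω => ?_)
    · exact ((by fun_prop : Measurable fun z : ℝ => Real.exp (-(z / r) ^ 2 / 2)).comp
        hZt).aestronglyMeasurable
    · rw [Real.norm_eq_abs, abs_of_pos (Real.exp_pos _), Real.exp_le_one_iff]
      have := sq_nonneg (Z (min t (τ ω)) ω / r)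
      linarith
    · by_cases hω : τ ω ≤ t
      · rw [indicator_of_mem (s := {ω | τ ω ≤ t}) hω, min_eq_right hω,
          h.zero ω (hω.trans_lt ht.2)]
        simp
      · rw [indicator_of_notMem (s := {ω | τ ω ≤ t}) hω, min_eq_left (not_le.1 hω).le]
        exact tendsto_gauss_zero (h.neg ω t ht.1.le (not_le.1 hω)).ne
  rw [integral_indicator_const _ (measurableSet_le h.τm measurable_const), smul_eq_mul,
    mul_one] at hL
  obtain ⟨K, hK, hbd⟩ := h.gaussRate_bound
  have hR : Tendsto (fun r => ∫ s in (0:ℝ)..t, h.gaussRate r s) (𝓝[>] 0)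
      (𝓝 (∫ s in (0:ℝ)..t, -(1 / 2) * A s 0 * ℓ s)) := by
    refine intervalIntegral.tendsto_integral_filter_of_dominated_convergence (fun _ => K)
      (Eventually.of_forall fun r => (h.measurable_gaussRate r).aestronglyMeasurable) ?_
      intervalIntegrable_const (Eventually.of_forall fun s hs => ?_)
    · filter_upwards [Ioo_mem_nhdsGT (zero_lt_one (α := ℝ))] with r hr
      refine Eventually.of_forall fun s hs => ?_
      rw [uIoc_of_le ht.1.le] at hs
      exact hbd r hr s ⟨hs.1.le, hs.2.trans_lt ht.2⟩
    · rw [uIoc_of_le ht.1.le] at hs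
      exact h.tendsto_gaussRate hp ⟨hs.1, hs.2.trans_lt ht.2⟩
  have hz := (tendsto_gauss_zero h.z0neg.ne).add hR
  rw [zero_add] at hz
  refine tendsto_nhds_unique hL (hz.congr' ?_)
  filter_upwards [self_mem_nhdsWithin] with r hr
  exact (h.gauss_eq hr ht').symm

/-- The passage time has a density on `(0, T)`. -/
lemma law_eq (h : KilledDiffusion P T α z0 M a0 a1 CA A B Z τ)
    (hp : KilledDensity P T Z τ p ℓ) {S : Set ℝ} (hS : MeasurableSet S) (hST : S ⊆ Ioo 0 T) :
    P {ω | τ ω ∈ S} = ENNReal.ofReal (∫ s in S, -(1 / 2) * A s 0 * ℓ s) := by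
  set f := fun s => -(1 / 2) * A s 0 * ℓ s with hf
  have hA := h.cA
  have hfc : ContinuousOn f (Ioo 0 T) :=
    ((by fun_prop : Continuous fun s => -(1 / 2) * A s 0).continuousOn).mul
      (h.continuousOn_slope hp)
  have hf0 : ∀ s ∈ Ioo 0 T, 0 ≤ f s := fun s hs => by
    have h1 := hp.slope_nonpos h hs
    have h2 := h.A_pos ⟨hs.1.le, hs.2.le⟩ 0
    simp only [hf]
    nlinarith
  obtain ⟨K, hK, hbd⟩ := h.gaussRate_bound
  have hfK : ∀ s ∈ Ioo 0 T, ‖f s‖ ≤ K := fun s hs => by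
    refine le_of_tendsto (h.tendsto_gaussRate hp hs).norm ?_
    filter_upwards [Ioo_mem_nhdsGT (zero_lt_one (α := ℝ))] with r hr
    exact hbd r hr s ⟨hs.1.le, hs.2⟩
  have hfi : IntegrableOn f (Ioo 0 T) :=
    Integrable.of_bound (hfc.aestronglyMeasurable measurableSet_Ioo) K
      ((ae_restrict_iff' measurableSet_Ioo).2 (Eventually.of_forall hfK))
  set ν := (volume.restrict (Ioo 0 T)).withDensity fun s => ENNReal.ofReal (f s) with hν
  have hνS : ∀ S, MeasurableSet S → S ⊆ Ioo 0 T → ν S = ENNReal.ofReal (∫ s in S, f s) := by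
    intro S hS hST
    rw [hν, withDensity_apply _ hS, Measure.restrict_restrict hS, inter_eq_left.2 hST,
      ofReal_integral_eq_lintegral_ofReal (hfi.mono_set hST)]
    exact (ae_restrict_iff' hS).2 (Eventually.of_forall fun s hs => hf0 s (hST hs))
  have hνr : ∀ S, MeasurableSet S → ν (S ∩ Ioo 0 T) = ν S := by
    intro S hS
    rw [hν, withDensity_apply _ (hS.inter measurableSet_Ioo), withDensity_apply _ hS,
      Measure.restrict_restrict (hS.inter measurableSet_Ioo), Measure.restrict_restrict hS,
      inter_assoc, inter_self]
  set η := (P.map τ).restrict (Ioo 0 T) with hη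
  have hηr : ∀ S, MeasurableSet S → η (S ∩ Ioo 0 T) = η S := by
    intro S hS
    rw [hη, Measure.restrict_apply (hS.inter measurableSet_Ioo), Measure.restrict_apply hS,
      inter_assoc, inter_self]
  have : IsProbabilityMeasure (P.map τ) := Measure.isProbabilityMeasure_map h.τm.aemeasurable
  have : IsFiniteMeasure ν := ⟨by
    rw [← hνr univ MeasurableSet.univ, univ_inter, hνS _ measurableSet_Ioo subset_rfl]
    exact ENNReal.ofReal_lt_top⟩
  have key : ∀ a ∈ Ioo 0 T, η (Iic a) = ν (Iic a) := by
    intro a ha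
    have e : Iic a ∩ Ioo 0 T = Ioc 0 a := by
      ext s; simp only [mem_inter_iff, mem_Iic, mem_Ioo, mem_Ioc]
      exact ⟨fun hs => ⟨hs.2.1, hs.1⟩, fun hs => ⟨hs.2, hs.1, hs.2.trans_lt ha.2⟩⟩
    rw [← hνr _ measurableSet_Iic, e, hνS _ measurableSet_Ioc fun s hs =>
      ⟨hs.1, hs.2.trans_lt ha.2⟩, ← intervalIntegral.integral_of_le ha.1.le,
      ← h.real_le_eq_integral hp ha, ofReal_measureReal, hη,
      Measure.restrict_apply measurableSet_Iic, e, Measure.map_apply h.τm measurableSet_Ioc]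
    congr 1
    ext ω
    exact ⟨fun hω => hω.2, fun hω => ⟨h.τpos ω, hω⟩⟩
  obtain ⟨u, hu, huT, hul⟩ := exists_seq_strictMono_tendsto' h.hT
  have hlim : ∀ ξ : Measure ℝ, (∀ S, MeasurableSet S → ξ (S ∩ Ioo 0 T) = ξ S) →
      Tendsto (fun n => ξ (Iic (u n))) atTop (𝓝 (ξ univ)) := by
    intro ξ hξ
    have hU : (⋃ n, Iic (u n)) = Iio T := iUnion_Iic_eq_Iio_of_lt_of_tendsto
      (fun n => (huT n).2) hul
    have e : ξ univ = ξ (Iio T) := by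
      rw [← hξ _ MeasurableSet.univ, ← hξ _ measurableSet_Iio]
      congr 1
      ext s
      simp +contextual
    rw [e, ← hU]
    exact tendsto_measure_iUnion_atTop fun a b hab => Iic_subset_Iic.2 (hu.monotone hab)
  have hηE : η = ν := by
    refine Measure.ext_of_Iic _ _ fun a => ?_
    rcases le_or_gt a 0 with ha | ha
    · have e : Iic a ∩ Ioo 0 T = ∅ := by
        ext s; simp only [mem_inter_iff, mem_Iic, mem_Ioo, mem_empty_iff_false, iff_false]
        intro hs; linarith [hs.1, hs.2.1]
      rw [← hηr _ measurableSet_Iic, ← hνr _ measurableSet_Iic, e, measure_empty, measure_empty]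
    rcases lt_or_ge a T with haT | haT
    · exact key a ⟨ha, haT⟩
    · have e : Iic a ∩ Ioo 0 T = univ ∩ Ioo 0 T := by
        ext s; simp only [mem_inter_iff, mem_Iic, mem_Ioo, mem_univ, true_and]
        exact ⟨fun hs => hs.2, fun hs => ⟨hs.2.le.trans haT, hs⟩⟩
      rw [← hηr _ measurableSet_Iic, ← hνr _ measurableSet_Iic, e,
        hηr _ MeasurableSet.univ, hνr _ MeasurableSet.univ]
      refine tendsto_nhds_unique (hlim η hηr) ((hlim ν hνr).congr fun n => ?_)
      exact (key _ (huT n)).symm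
  rw [← hνS S hS hST, ← hηE, hη, Measure.restrict_apply hS, inter_eq_left.2 hST,
    Measure.map_apply h.τm hS]
  rfl

end KilledDiffusion

/-! ### Back to the original coordinates -/

/-- Lemma 4: the law of `τ` under `P`, restricted to `(0,T)`, has a
continuous density `f_τ` satisfying `f_τ(t) = −½σ(t,g(t))² · lim_{y↑g(t)} ∂_y q(0,x₀;t,y)`.
Here `q` is the taboo transition density of `X` (whose existence, `C¹` smoothness in `y` and
finite boundary limit of `∂_y q` are established in a separate lemma and are taken as
hypotheses, the boundary limit being named `qlim`). -/
theorem first_passage_time_density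
    [m : MeasurableSpace Ω] (P : Measure Ω) [IsProbabilityMeasure P]
    (F : Filtration ℝ m) (T x₀ α : ℝ) (hT : 0 < T) (hα : α ∈ Ioo (0:ℝ) 1)
    (μ σ : ℝ → ℝ → ℝ) (hC1 : CondC1 T μ σ) (hC2 : CondC2 T σ) (hC3 : CondC3 T α μ σ)
    (g : ℝ → ℝ) (hg : ContDiffOn ℝ 2 g (Icc 0 T)) (hg0 : x₀ < g 0)
    (X : ℝ → ℝ → ℝ → Ω → ℝ)
    (hXad : ∀ s x : ℝ, Adapted F (X s x))
    (hXcont : ∀ s x : ℝ, ∀ ω, ContinuousOn (fun u => X s x u ω) (Icc s T))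
    (hXinit : ∀ s x : ℝ, ∀ ω, X s x s ω = x)
    (hXmp : SolvesMP T μ σ P F X)
    (q : ℝ → ℝ → ℝ)
    (hq : ∀ t ∈ Ioc (0:ℝ) T, ∀ A : Set ℝ, MeasurableSet A → A ⊆ Iio (g t) →
      P {ω | X 0 x₀ t ω ∈ A ∧ ∀ u ∈ Icc 0 t, X 0 x₀ u ω < g u} =
        ENNReal.ofReal (∫ y in A, q t y))
    (hq1 : ∀ t ∈ Ioc (0:ℝ) T, ∀ y : ℝ, y < g t → DifferentiableAt ℝ (q t) y)
    (hq2 : ∀ t ∈ Ioc (0:ℝ) T, ContinuousOn (deriv (q t)) (Iio (g t)))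
    (qlim : ℝ → ℝ)
    (hqlim : ∀ t ∈ Ioo (0:ℝ) T, Tendsto (deriv (q t)) (𝓝[<] (g t)) (𝓝 (qlim t))) :
    ∃ fτ : ℝ → ℝ, ContinuousOn fτ (Ioo 0 T) ∧
      (∀ A : Set ℝ, MeasurableSet A → A ⊆ Ioo 0 T →
        P {ω | tauF T g X 0 x₀ ω ∈ A} = ENNReal.ofReal (∫ t in A, fτ t)) ∧
      ∀ t ∈ Ioo (0:ℝ) T, fτ t = -(1 / 2) * (σ t (g t)) ^ 2 * qlim t := by
  have hgc : ContinuousOn g (Icc 0 T) := hg.continuousOn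
  obtain ⟨M, a0, a1, CA, A, B, Z, h, hA, hZ⟩ :=
    exists_killedDiffusion hT hα hC1 hC2 hC3 hg hg0 hXad hXcont hXinit hXmp
  have hp : KilledDensity P T Z (tauF T g X 0 x₀) (fun t z => q t (g t + z)) qlim := by
    refine ⟨fun t ht S hS hS0 => ?_, fun t ht z hz => ?_, fun t ht => ?_⟩
    · have ht' : t ∈ Ioc 0 T := ⟨ht.1, ht.2.le⟩
      have hemb : MeasurableEmbedding (fun z : ℝ => g t + z) := measurableEmbedding_addLeft (g t)
      have h1 := hq t ht' _ (hemb.measurableSet_image.2 hS) (by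
        rintro _ ⟨z, hz, rfl⟩
        have := hS0 hz
        simp only [mem_Iio] at this ⊢
        linarith)
      rw [(measurePreserving_add_left volume (g t)).setIntegral_image_emb hemb] at h1
      rw [← h1]
      congr 1
      ext ω
      simp only [mem_ofPred_eq, hZ t ⟨ht.1.le, ht.2.le⟩ ω,
        lt_tauF_iff hT hgc (hXcont 0 x₀ ω) ⟨ht.1.le, ht.2⟩]
      refine ⟨fun hω => ⟨⟨_, hω.2, by ring⟩, hω.1⟩, fun hω => ⟨hω.2, ?_⟩⟩
      obtain ⟨z, hz, hzω⟩ := hω.1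
      rw [← hzω]
      simpa using hz
    · exact (hq1 t ⟨ht.1, ht.2.le⟩ _ (by linarith)).comp z (by fun_prop)
    · have e : deriv (fun z => q t (g t + z)) = fun z => deriv (q t) (g t + z) := by
        ext z; exact deriv_comp_const_add _ _ _
      rw [e]
      refine (hqlim t ht).comp (tendsto_nhdsWithin_iff.2 ⟨?_, ?_⟩)
      · have : Tendsto (fun z => g t + z) (𝓝 0) (𝓝 (g t + 0)) :=
          (continuous_const.add continuous_id).tendsto 0
        rw [add_zero] at this
        exact this.mono_left nhdsWithin_le_nhds
      · filter_upwards [self_mem_nhdsWithin] with z hz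
        have : z < 0 := hz
        simp only [mem_Iio]
        linarith
  have hAσ : ∀ t ∈ Ioo 0 T, A t 0 = (σ t (g t)) ^ 2 := fun t ht => by
    rw [hA t ⟨ht.1.le, ht.2.le⟩ 0, zero_add]
  have hcA := h.cA
  refine ⟨fun t => -(1 / 2) * A t 0 * qlim t, ?_, fun S hS hST => h.law_eq hp hS hST,
    fun t ht => by simp only [hAσ t ht]⟩
  exact (by fun_prop : Continuous fun t => -(1 / 2) * A t 0).continuousOn.mul
    (h.continuousOn_slope hp)
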